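/- arXiv:math/0509544 — 2 statements merged into one kernel-verified Lean document; each statement's English description precedes it below -/
import Mathlib

section
/- The Gröbner fan of an ideal I ⊆ k[x_1,…,x_n] is a polyhedral complex of cones: every cone C_v(I) for v ∈ ℝ^n_{>0} is a closed convex polyhedral cone, every nonempty face of a member of the Gröbner fan is again a member, and the intersection of any two members is a face of each of them. -/
open MvPolynomial

/-- A term order on the monomials of `k[x_1,…,x_n]`, identified with exponent
vectors in `ℕ^n`: a strict total order with `1` smallest and compatible with
multiplication of monomials. -/
structure TermOrder (n : ℕ) : Type where
  lt : (Fin n →₀ ℕ) → (Fin n →₀ ℕ) → Prop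
  irrefl : ∀ a, ¬ lt a a
  trans : ∀ a b c, lt a b → lt b c → lt a c
  total : ∀ a b, a ≠ b → lt a b ∨ lt b a
  zero_lt : ∀ a, a ≠ 0 → lt 0 a
  add_right : ∀ a b c, lt a b → lt (a + c) (b + c)

variable {n : ℕ} {k : Type*} [Field k]

/-- The exponent of the `τ`-largest term of `f` (and `0` if `f = 0`). -/
noncomputable def TermOrder.leadExp (τ : TermOrder n) (f : MvPolynomial (Fin n) k) :
    Fin n →₀ ℕ :=
  letI := Classical.propDecidable (∃ α, α ∈ f.support ∧ ∀ β ∈ f.support, β ≠ α → τ.lt β α)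
  if h : ∃ α, α ∈ f.support ∧ ∀ β ∈ f.support, β ≠ α → τ.lt β α then h.choose else 0

/-- The initial term `in_τ(f)` : the `τ`-largest term of `f` (with coefficient). -/
noncomputable def TermOrder.initialTerm (τ : TermOrder n) (f : MvPolynomial (Fin n) k) :
    MvPolynomial (Fin n) k :=
  monomial (τ.leadExp f) (f.coeff (τ.leadExp f))

/-- The initial ideal `in_τ(I) = ⟨in_τ(f) : f ∈ I \ {0}⟩`. -/
noncomputable def TermOrder.initialIdeal (τ : TermOrder n) (I : Ideal (MvPolynomial (Fin n) k)) :
    Ideal (MvPolynomial (Fin n) k) :=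
  Ideal.span {p | ∃ f ∈ I, f ≠ 0 ∧ p = τ.initialTerm f}

/-- The `ω`-degree `⟨ω,α⟩` of a monomial exponent `α`. -/
noncomputable def wdeg (ω : Fin n → ℝ) (α : Fin n →₀ ℕ) : ℝ := ∑ i, ω i * (α i : ℝ)

/-- The initial form `in_ω(f)`: the sum of the terms of `f` whose exponents
maximize `⟨ω,·⟩`. -/
noncomputable def initialForm (ω : Fin n → ℝ) (f : MvPolynomial (Fin n) k) :
    MvPolynomial (Fin n) k :=
  letI : DecidablePred fun α : Fin n →₀ ℕ => ∀ β ∈ f.support, wdeg ω β ≤ wdeg ω α :=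
    Classical.decPred _
  ∑ α ∈ f.support.filter (fun α => ∀ β ∈ f.support, wdeg ω β ≤ wdeg ω α),
    monomial α (f.coeff α)

/-- The initial ideal `in_ω(I) = ⟨in_ω(f) : f ∈ I⟩`. -/
noncomputable def initialFormIdeal (ω : Fin n → ℝ) (I : Ideal (MvPolynomial (Fin n) k)) :
    Ideal (MvPolynomial (Fin n) k) :=
  Ideal.span {p | ∃ f ∈ I, p = initialForm ω f}

/-- `C_≺(I)`: the closure of `{u : in_u(I) = in_≺(I)}` in `ℝ^n`. -/
noncomputable def Cprec (τ : TermOrder n) (I : Ideal (MvPolynomial (Fin n) k)) :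
    Set (Fin n → ℝ) :=
  closure {u : Fin n → ℝ | initialFormIdeal u I = τ.initialIdeal I}

/-- `C_v(I)`: the closure of the equivalence class `{u : in_u(I) = in_v(I)}`. -/
noncomputable def Cv (I : Ideal (MvPolynomial (Fin n) k)) (v : Fin n → ℝ) :
    Set (Fin n → ℝ) :=
  closure {u : Fin n → ℝ | initialFormIdeal u I = initialFormIdeal v I}

/-- `F` is a face of `C`: either empty or the set of maximizers over `C` of a
linear functional. -/
def IsFaceOf (C F : Set (Fin n → ℝ)) : Prop :=
  F = ∅ ∨ ∃ w : Fin n → ℝ, F = {x ∈ C | ∀ y ∈ C, ∑ i, w i * y i ≤ ∑ i, w i * x i}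

/-- The Gröbner fan of `I`: all nonempty faces of the cones `C_v(I)`, `v ∈ ℝ^n_{>0}`. -/
noncomputable def GroebnerFan (I : Ideal (MvPolynomial (Fin n) k)) :
    Set (Set (Fin n → ℝ)) :=
  {F | F.Nonempty ∧ ∃ v : Fin n → ℝ, (∀ i, 0 < v i) ∧ IsFaceOf (Cv I v) F}

/-- `G` is a (finite) Gröbner basis of `I` w.r.t. `τ`. -/
def IsGroebnerBasis (τ : TermOrder n) (I : Ideal (MvPolynomial (Fin n) k))
    (G : Set (MvPolynomial (Fin n) k)) : Prop :=
  G.Finite ∧ Ideal.span G = I ∧ τ.initialIdeal I = Ideal.span (τ.initialTerm '' G)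

/-- `G` is the reduced Gröbner basis of `I` w.r.t. `τ`. -/
def IsReducedGroebnerBasis (τ : TermOrder n) (I : Ideal (MvPolynomial (Fin n) k))
    (G : Set (MvPolynomial (Fin n) k)) : Prop :=
  IsGroebnerBasis τ I G ∧
  (∀ g ∈ G, g.coeff (τ.leadExp g) = 1) ∧
  (∀ g ∈ G, ∀ α ∈ g.support, α ≠ τ.leadExp g →
    (monomial α 1 : MvPolynomial (Fin n) k) ∉ τ.initialIdeal I) ∧
  (∀ g ∈ G, Ideal.span (τ.initialTerm '' (G \ {g})) ≠ τ.initialIdeal I)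

/-!
Fix `v` with positive coordinates and refine the `v`-degree by the lexicographic order; as `v` is
positive this is a well-order on exponents (`wellFounded_key`). It has a finite reduced Gröbner
basis `g β` of `I` (`exists_isRedBasis`): `g β` is monic with leading exponent `β`, and all its
other monomials are standard, that is, not leading exponents of elements of `I`.

Let `D` be the set of all weights `u`, possibly with negative coordinates, such that every term of
`in_v(g β)` is a term of `in_u(g β)`, for all `β`. This is a polyhedral cone. Dividing by the basis
never increases `u`-degrees for `u ∈ D`, and so the following hold.

* `in_u(I)` is generated by the `in_u(g β)` for `u ∈ D`. As the `in_u(g β)` are determined by which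
  of the inequalities defining `D` are tight at `u`, the ideal `in_u(I)` is constant on relative
  interiors of faces of `D` (`IsRedBasis.ideal_congr`).
* Elements of `in_u(I)` have the same leading exponents as elements of `I`, and their top
  `v`-degree parts lie in `in_v(I)`, for `u ∈ D`. If `in_u'(I) = in_u(I)`, then
  `in_v(g β) - in_v(in_u'(g β))` is an element of `in_v(I)` with only standard monomials, hence
  zero, and `u' ∈ D`. So `D` is a union of equivalence classes (`IsRedBasis.compat_congr`).

These two facts give `C_v(I) = D` (`IsRedBasis.Cv_eq`), because `v` is in the relative interior of
`D`. A nonempty face of a polyhedral cone is cut out by turning inequalities into equalities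
(`exists_eq_coneFace`), so a face of a face of `D` is a face of `D`. Lastly, if `x` is a relative
interior point of the intersection of a face of `C_v(I)` with a face of `C_{v'}(I)`, the face of
`C_v(I)` having `x` in its relative interior meets only weights equivalent to `x` in its relative
interior; these lie in `C_{v'}(I)`, so the intersection is exactly that face (`isFaceOf_inter`).
-/

/-! ### Faces of polyhedral cones -/

/-- The face of the polyhedral cone `{x | ∀ w ∈ T, w ⬝ᵥ x ≤ 0}` on which the inequalities
belonging to `S` are equalities; `S = ∅` gives the whole cone. -/
def coneFace (T S : Finset (Fin n → ℝ)) : Set (Fin n → ℝ) :=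
  {x | (∀ w ∈ T, w ⬝ᵥ x ≤ 0) ∧ ∀ s ∈ S, s ⬝ᵥ x = 0}

theorem zero_mem_coneFace (T S : Finset (Fin n → ℝ)) : (0 : Fin n → ℝ) ∈ coneFace T S := by
  simp [coneFace]

theorem add_mem_coneFace {T S : Finset (Fin n → ℝ)} {x y : Fin n → ℝ}
    (hx : x ∈ coneFace T S) (hy : y ∈ coneFace T S) : x + y ∈ coneFace T S := by
  refine ⟨fun w hw => ?_, fun s hs => ?_⟩
  · rw [dotProduct_add]; linarith [hx.1 w hw, hy.1 w hw]
  · rw [dotProduct_add, hx.2 s hs, hy.2 s hs, add_zero]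

theorem smul_mem_coneFace {T S : Finset (Fin n → ℝ)} {x : Fin n → ℝ} {c : ℝ} (hc : 0 ≤ c)
    (hx : x ∈ coneFace T S) : c • x ∈ coneFace T S := by
  refine ⟨fun w hw => ?_, fun s hs => ?_⟩
  · rw [dotProduct_smul, smul_eq_mul]; exact mul_nonpos_of_nonneg_of_nonpos hc (hx.1 w hw)
  · rw [dotProduct_smul, hx.2 s hs, smul_zero]

theorem coneFace_anti {T S S' : Finset (Fin n → ℝ)} (h : S ⊆ S') :
    coneFace T S' ⊆ coneFace T S :=
  fun _ hx => ⟨hx.1, fun s hs => hx.2 s (h hs)⟩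

theorem isClosed_coneFace (T S : Finset (Fin n → ℝ)) : IsClosed (coneFace T S) := by
  have : coneFace T S = (⋂ w ∈ T, {x | w ⬝ᵥ x ≤ 0}) ∩ ⋂ s ∈ S, {x | s ⬝ᵥ x = 0} := by
    ext x; simp [coneFace]
  rw [this]
  refine IsClosed.inter (isClosed_biInter fun w _ => ?_) (isClosed_biInter fun w _ => ?_)
  · exact isClosed_le (by unfold dotProduct; fun_prop) continuous_const
  · exact isClosed_eq (by unfold dotProduct; fun_prop) continuous_const

open Classical in
/-- The inequalities from `T` that are equalities at `x`. -/
noncomputable def tightSet (T : Finset (Fin n → ℝ)) (x : Fin n → ℝ) : Finset (Fin n → ℝ) :=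
  T.filter fun w => w ⬝ᵥ x = 0

theorem mem_tightSet {T : Finset (Fin n → ℝ)} {x w : Fin n → ℝ} :
    w ∈ tightSet T x ↔ w ∈ T ∧ w ⬝ᵥ x = 0 := by
  simp [tightSet]

/-- A point with as few tight inequalities as possible is in the relative interior: any
inequality tight there is tight on the whole of `K`. -/
theorem exists_relint (T : Finset (Fin n → ℝ)) (K : Set (Fin n → ℝ)) (hne : K.Nonempty)
    (hadd : ∀ x ∈ K, ∀ y ∈ K, x + y ∈ K) (hK : K ⊆ coneFace T ∅) :
    ∃ x ∈ K, K ⊆ coneFace T (tightSet T x) := by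
  obtain ⟨x, hx, hmin⟩ := exists_minimalFor_of_wellFoundedLT (fun x => x ∈ K)
    (fun x => (tightSet T x).card) hne
  refine ⟨x, hx, fun y hy => ⟨(hK hy).1, fun w hw => ?_⟩⟩
  have key : ∀ w ∈ T, w ⬝ᵥ (x + y) = 0 → w ⬝ᵥ x = 0 ∧ w ⬝ᵥ y = 0 := by
    intro w hw h
    rw [dotProduct_add] at h
    have h1 := (hK hx).1 w hw
    have h2 := (hK hy).1 w hw
    constructor <;> linarith
  have hsub : tightSet T (x + y) ⊆ tightSet T x := by
    intro w hw
    rw [mem_tightSet] at hw ⊢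
    exact ⟨hw.1, (key w hw.1 hw.2).1⟩
  have heq := Finset.eq_of_subset_of_card_le hsub
    (hmin (hadd x hx y hy) (Finset.card_le_card hsub))
  rw [← heq, mem_tightSet] at hw
  exact (key w hw.1 hw.2).2

/-- A relative interior point can be moved a little away from any point of its face. -/
theorem exists_sub_smul_mem {T : Finset (Fin n → ℝ)} {x y : Fin n → ℝ}
    (hx : x ∈ coneFace T ∅) (hy : y ∈ coneFace T (tightSet T x)) :
    ∃ ε : ℝ, 0 < ε ∧ x - ε • y ∈ coneFace T (tightSet T x) := by
  have h1 : ∀ᶠ ε : ℝ in nhdsWithin 0 (Set.Ioi 0), ∀ w ∈ T, w ⬝ᵥ (x - ε • y) ≤ 0 := by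
    rw [Filter.eventually_all_finset]
    intro w hw
    rcases (hx.1 w hw).lt_or_eq with h | h
    · have hc : Continuous fun ε : ℝ => w ⬝ᵥ (x - ε • y) := by unfold dotProduct; fun_prop
      have ht : Filter.Tendsto (fun ε : ℝ => w ⬝ᵥ (x - ε • y)) (nhds 0) (nhds (w ⬝ᵥ x)) := by
        simpa using hc.tendsto 0
      exact ((ht.eventually (gt_mem_nhds h)).mono fun _ h => le_of_lt h).filter_mono
        nhdsWithin_le_nhds
    · refine Filter.Eventually.of_forall fun ε => ?_
      rw [dotProduct_sub, dotProduct_smul, h, hy.2 w (mem_tightSet.2 ⟨hw, h⟩)]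
      simp
  obtain ⟨ε, hε, hpos⟩ := (h1.and self_mem_nhdsWithin).exists
  refine ⟨ε, hpos, hε, fun s hs => ?_⟩
  rw [dotProduct_sub, dotProduct_smul, hy.2 s hs, (mem_tightSet.1 hs).2]
  simp

theorem isFaceOf_coneFace {T S S' : Finset (Fin n → ℝ)} (h : S ⊆ S') (hT : S' ⊆ T) :
    IsFaceOf (coneFace T S) (coneFace T S') := by
  refine Or.inr ⟨∑ s ∈ S', s, ?_⟩
  have hsum : ∀ x : Fin n → ℝ, ∑ i, (∑ s ∈ S', s) i * x i = ∑ s ∈ S', s ⬝ᵥ x := by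
    intro x
    rw [← sum_dotProduct]
    rfl
  simp only [hsum]
  ext x
  constructor
  · intro hx
    refine ⟨coneFace_anti h hx, fun y hy => ?_⟩
    rw [Finset.sum_eq_zero hx.2]
    exact Finset.sum_nonpos fun s hs => hy.1 s (hT hs)
  · rintro ⟨hx, hmax⟩
    refine ⟨hx.1, ?_⟩
    have h0 := hmax 0 (zero_mem_coneFace T S)
    simp only [dotProduct_zero, Finset.sum_const_zero] at h0
    have hle : ∀ s ∈ S', s ⬝ᵥ x ≤ 0 := fun s hs => hx.1 s (hT hs)
    exact (Finset.sum_eq_zero_iff_of_nonpos hle).1 (le_antisymm (Finset.sum_nonpos hle) h0)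

/-- Every nonempty face of a polyhedral cone, in the sense of maximizing a linear functional, is
cut out by turning some of the defining inequalities into equalities. -/
theorem exists_eq_coneFace {T S : Finset (Fin n → ℝ)} (hST : S ⊆ T) {F : Set (Fin n → ℝ)}
    (hF : IsFaceOf (coneFace T S) F) (hne : F.Nonempty) :
    ∃ S', S ⊆ S' ∧ S' ⊆ T ∧ F = coneFace T S' := by
  rcases hF with rfl | ⟨w, hw⟩
  · exact absurd hne Set.not_nonempty_empty
  change F = {x ∈ coneFace T S | ∀ y ∈ coneFace T S, w ⬝ᵥ y ≤ w ⬝ᵥ x} at hw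
  -- The maximum of a linear functional on a cone is `0`.
  have hzero : ∀ x ∈ F, w ⬝ᵥ x = 0 := by
    intro x hx
    rw [hw] at hx
    have h0 := hx.2 0 (zero_mem_coneFace T S)
    have h2 := hx.2 (x + x) (add_mem_coneFace hx.1 hx.1)
    rw [dotProduct_add] at h2
    rw [dotProduct_zero] at h0
    linarith
  have hnonpos : ∀ y ∈ coneFace T S, w ⬝ᵥ y ≤ 0 := by
    obtain ⟨x, hx⟩ := hne
    have h0 := hzero x hx
    rw [hw] at hx
    intro y hy
    exact h0 ▸ hx.2 y hy
  have hmem : ∀ x, x ∈ coneFace T S → w ⬝ᵥ x = 0 → x ∈ F := by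
    intro x hx h0
    rw [hw]
    exact ⟨hx, fun y hy => h0.symm ▸ hnonpos y hy⟩
  have hsub : F ⊆ coneFace T S := by
    rw [hw]; exact fun x hx => hx.1
  obtain ⟨x, hx, hFx⟩ := exists_relint T F hne
    (fun x hx y hy => hmem _ (add_mem_coneFace (hsub hx) (hsub hy))
      (by rw [dotProduct_add, hzero x hx, hzero y hy, add_zero]))
    (hsub.trans (coneFace_anti (Finset.empty_subset S)))
  have hS : S ⊆ tightSet T x := fun s hs => mem_tightSet.2 ⟨hST hs, (hsub hx).2 s hs⟩
  refine ⟨tightSet T x, hS, fun s hs => (mem_tightSet.1 hs).1, hFx.antisymm fun y hy => ?_⟩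
  obtain ⟨ε, hε, hmv⟩ := exists_sub_smul_mem
    (coneFace_anti (Finset.empty_subset S) (hsub hx)) hy
  have h1 := hnonpos _ (coneFace_anti hS hmv)
  have h2 := hnonpos _ (coneFace_anti hS hy)
  rw [dotProduct_sub, dotProduct_smul, hzero x hx, smul_eq_mul] at h1
  refine hmem y (coneFace_anti hS hy) (le_antisymm h2 ?_)
  by_contra hlt
  nlinarith [mul_pos_of_neg_of_neg (not_le.1 hlt) (neg_neg_of_pos hε)]

/-- If membership in the cone of `T₂` is constant on the relative interiors of the faces of the
cone of `T₁`, then the intersection of a face of the first with a face of the second is a face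
of the former. -/
theorem isFaceOf_inter {T₁ S₁ T₂ S₂ : Finset (Fin n → ℝ)} (h₁ : S₁ ⊆ T₁) (h₂ : S₂ ⊆ T₂)
    (H : ∀ x ∈ coneFace T₁ ∅, ∀ z ∈ coneFace T₁ ∅, tightSet T₁ x = tightSet T₁ z →
      x ∈ coneFace T₂ ∅ → z ∈ coneFace T₂ ∅) :
    IsFaceOf (coneFace T₁ S₁) (coneFace T₁ S₁ ∩ coneFace T₂ S₂) := by
  obtain ⟨x, hx, hK⟩ := exists_relint T₁ (coneFace T₁ S₁ ∩ coneFace T₂ S₂)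
    ⟨0, zero_mem_coneFace _ _, zero_mem_coneFace _ _⟩
    (fun x hx y hy => ⟨add_mem_coneFace hx.1 hy.1, add_mem_coneFace hx.2 hy.2⟩)
    (fun x hx => coneFace_anti (Finset.empty_subset _) hx.1)
  have hx₁ : x ∈ coneFace T₁ ∅ := coneFace_anti (Finset.empty_subset _) hx.1
  have hx₂ : x ∈ coneFace T₂ ∅ := coneFace_anti (Finset.empty_subset _) hx.2
  have hS : S₁ ⊆ tightSet T₁ x := fun s hs => mem_tightSet.2 ⟨h₁ hs, hx.1.2 s hs⟩
  -- The closed face with `x` in its relative interior lies in the cone of `T₂`, by a limit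
  -- along `y + ε • x`, which stays in the relative interior.
  have hface : ∀ y ∈ coneFace T₁ (tightSet T₁ x), y ∈ coneFace T₂ ∅ := by
    intro y hy
    have hy₁ : y ∈ coneFace T₁ ∅ := coneFace_anti (Finset.empty_subset _) hy
    have hmove : ∀ ε : ℝ, 0 < ε → y + ε • x ∈ coneFace T₂ ∅ := by
      intro ε hε
      refine H x hx₁ _ (add_mem_coneFace hy₁ (smul_mem_coneFace hε.le hx₁)) ?_ hx₂
      ext w
      simp only [mem_tightSet, and_congr_right_iff]
      intro hw
      rw [dotProduct_add, dotProduct_smul, smul_eq_mul]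
      constructor
      · intro h
        rw [h, hy.2 w (mem_tightSet.2 ⟨hw, h⟩)]
        simp
      · intro h
        have ha := hy₁.1 w hw
        have hb := hx₁.1 w hw
        have hc : ε * (w ⬝ᵥ x) ≤ 0 := mul_nonpos_of_nonneg_of_nonpos hε.le hb
        have hd : ε * (w ⬝ᵥ x) = 0 := by linarith
        exact (mul_eq_zero.1 hd).resolve_left hε.ne'
    have ht : Filter.Tendsto (fun ε : ℝ => y + ε • x) (nhdsWithin 0 (Set.Ioi 0)) (nhds y) := by
      have hc : Continuous fun ε : ℝ => y + ε • x := by fun_prop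
      have := hc.tendsto 0
      simp only [zero_smul, add_zero] at this
      exact this.mono_left nhdsWithin_le_nhds
    exact (isClosed_coneFace T₂ ∅).mem_of_tendsto ht
      (Filter.eventually_of_mem self_mem_nhdsWithin hmove)
  have heq : coneFace T₁ S₁ ∩ coneFace T₂ S₂ = coneFace T₁ (tightSet T₁ x) := by
    refine hK.antisymm fun y hy => ⟨coneFace_anti hS hy, (hface y hy).1, fun s hs => ?_⟩
    obtain ⟨ε, hε, hmv⟩ := exists_sub_smul_mem hx₁ hy
    have h1 := (hface _ hmv).1 s (h₂ hs)
    have h2 := (hface _ hy).1 s (h₂ hs)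
    rw [dotProduct_sub, dotProduct_smul, hx.2.2 s hs, smul_eq_mul] at h1
    refine le_antisymm h2 ?_
    by_contra hlt
    nlinarith [mul_pos_of_neg_of_neg (not_le.1 hlt) (neg_neg_of_pos hε)]
  rw [heq]
  exact isFaceOf_coneFace hS fun s hs => (mem_tightSet.1 hs).1

/-! ### Leading exponents for the weight order refined by the lexicographic order -/

/-- The monomial order used for a weight `v`: compare `v`-degrees, break ties
lexicographically. -/
noncomputable def key (v : Fin n → ℝ) (α : Fin n →₀ ℕ) : ℝ ×ₗ Lex (Fin n →₀ ℕ) :=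
  toLex (wdeg v α, toLex α)

theorem wdeg_add (v : Fin n → ℝ) (α β : Fin n →₀ ℕ) :
    wdeg v (α + β) = wdeg v α + wdeg v β := by
  simp [wdeg, mul_add, Finset.sum_add_distrib]

theorem key_add (v : Fin n → ℝ) (α β : Fin n →₀ ℕ) : key v (α + β) = key v α + key v β := by
  simp only [key, wdeg_add]
  rfl

theorem key_injective (v : Fin n → ℝ) : Function.Injective (key v) := by
  intro α β h
  have := congrArg (fun x => (ofLex x).2) h
  exact this

theorem wdeg_le_of_key_le {v : Fin n → ℝ} {α β : Fin n →₀ ℕ} (h : key v α ≤ key v β) :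
    wdeg v α ≤ wdeg v β := by
  rcases Prod.Lex.le_iff.1 h with h | h
  · exact h.le
  · exact h.1.le

/-- For a positive weight only finitely many exponents have bounded degree, so the order is a
well-order. -/
theorem wellFounded_key {v : Fin n → ℝ} (hv : ∀ i, 0 < v i) :
    WellFounded fun α β : Fin n →₀ ℕ => key v α < key v β := by
  have hfin : ∀ c : ℝ, {α : Fin n →₀ ℕ | wdeg v α ≤ c}.Finite := by
    intro c
    refine (Set.finite_Iic (Finsupp.equivFunOnFinite.symm fun i => ⌊c / v i⌋₊)).subset ?_
    intro α hα i
    simp only [Finsupp.equivFunOnFinite_symm_apply_apply]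
    apply Nat.le_floor
    rw [le_div_iff₀ (hv i), mul_comm]
    refine le_trans ?_ hα
    exact Finset.single_le_sum (f := fun i => v i * (α i : ℝ))
      (fun j _ => mul_nonneg (hv j).le (Nat.cast_nonneg _)) (Finset.mem_univ i)
  have hfin' : ∀ β : Fin n →₀ ℕ, {α | key v α < key v β}.Finite := fun β =>
    (hfin (wdeg v β)).subset fun α hα => wdeg_le_of_key_le hα.le
  refine Subrelation.wf (r := InvImage (· < ·) fun β => {α | key v α < key v β}.ncard) ?_
    (InvImage.wf _ wellFounded_lt)
  intro α β h
  refine Set.ncard_lt_ncard ⟨fun γ hγ => lt_trans hγ h, fun hsub => ?_⟩ (hfin' β)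
  have hself : key v α < key v α := hsub h
  exact lt_irrefl _ hself

/-- `α` is the leading exponent of `f` for the order `key v`. -/
def IsLead (v : Fin n → ℝ) (f : MvPolynomial (Fin n) k) (α : Fin n →₀ ℕ) : Prop :=
  α ∈ f.support ∧ ∀ γ ∈ f.support, key v γ ≤ key v α

theorem exists_isLead (v : Fin n → ℝ) {f : MvPolynomial (Fin n) k} (hf : f ≠ 0) :
    ∃ α, IsLead v f α :=
  Finset.exists_max_image f.support (key v) (support_nonempty.2 hf)

/-- The exponents of a monomial multiple of `p` whose leading exponent is `α`. -/
theorem mem_support_monomial_mul {α β δ : Fin n →₀ ℕ} (hβα : β ≤ α) {c : k}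
    {p : MvPolynomial (Fin n) k} (hδ : δ ∈ (monomial (α - β) c * p).support) :
    ∃ γ ∈ p.support, δ + β = α + γ := by
  rw [mem_support_iff, coeff_monomial_mul'] at hδ
  split_ifs at hδ with h
  · refine ⟨δ - (α - β), mem_support_iff.2 (right_ne_zero_of_mul hδ), ?_⟩
    have e1 : δ - (α - β) + (α - β) = δ := tsub_add_cancel_of_le h
    have e2 : α - β + β = α := tsub_add_cancel_of_le hβα
    calc δ + β = δ - (α - β) + (α - β) + β := by rw [e1]
      _ = δ - (α - β) + (α - β + β) := add_assoc _ _ _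
      _ = α + (δ - (α - β)) := by rw [e2, add_comm]
  · exact absurd rfl hδ

/-- Cancelling the leading term of `h` by a monomial multiple of `p` lowers all exponents. -/
theorem key_lt_of_mem_support_sub {v : Fin n → ℝ} {h p : MvPolynomial (Fin n) k}
    {α β : Fin n →₀ ℕ} (hh : IsLead v h α) (hp : IsLead v p β) (hp1 : coeff β p = 1)
    (hβα : β ≤ α) {δ : Fin n →₀ ℕ}
    (hδ : δ ∈ (h - monomial (α - β) (coeff α h) * p).support) : key v δ < key v α := by
  classical
  refine lt_of_le_of_ne ?_ fun heq => ?_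
  · rcases Finset.mem_union.1 (support_sub _ _ _ hδ) with hδ | hδ
    · exact hh.2 δ hδ
    · obtain ⟨γ, hγ, he⟩ := mem_support_monomial_mul hβα hδ
      have := congrArg (key v) he
      rw [key_add, key_add] at this
      exact le_of_add_le_add_right (this.le.trans (add_le_add_right (hp.2 γ hγ) _))
  · rw [key_injective v heq, mem_support_iff, coeff_sub, coeff_monomial_mul',
      if_pos tsub_le_self, tsub_tsub_cancel_of_le hβα, hp1, mul_one, sub_self] at hδ
    exact hδ rfl

/-- Induction along the division algorithm: a property of the elements of `J` holds if it can
be lifted through each cancellation of a leading term by the polynomials `p β`, `β ∈ B`. -/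
theorem division_induction {v : Fin n → ℝ} (hv : ∀ i, 0 < v i)
    {J : Ideal (MvPolynomial (Fin n) k)} {B : Set (Fin n →₀ ℕ)}
    {p : (Fin n →₀ ℕ) → MvPolynomial (Fin n) k}
    (hp : ∀ β ∈ B, p β ∈ J ∧ IsLead v (p β) β ∧ coeff β (p β) = 1)
    (hB : ∀ h ∈ J, ∀ α, IsLead v h α → ∃ β ∈ B, β ≤ α)
    {P : MvPolynomial (Fin n) k → Prop} (h0 : P 0)
    (step : ∀ h ∈ J, ∀ α, ∀ β ∈ B, β ≤ α → IsLead v h α →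
      P (h - monomial (α - β) (coeff α h) * p β) → P h) :
    ∀ h ∈ J, P h := by
  have main : ∀ α, ∀ h ∈ J, (∀ γ ∈ h.support, key v γ ≤ key v α) → P h := by
    intro α
    induction α using (wellFounded_key hv).induction with
    | _ α ih =>
      intro h hh hle
      by_cases hz : h = 0
      · rwa [hz]
      obtain ⟨α', hα'⟩ := exists_isLead v hz
      obtain ⟨β, hβ, hβα⟩ := hB h hh α' hα'
      obtain ⟨hpJ, hpl, hp1⟩ := hp β hβ
      refine step h hh α' β hβ hβα hα' ?_
      have hmem : h - monomial (α' - β) (coeff α' h) * p β ∈ J :=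
        J.sub_mem hh (J.mul_mem_left _ hpJ)
      by_cases hz' : h - monomial (α' - β) (coeff α' h) * p β = 0
      · rwa [hz']
      obtain ⟨δ, hδ⟩ := exists_isLead v hz'
      exact ih δ ((key_lt_of_mem_support_sub hα' hpl hp1 hβα hδ.1).trans_le (hle α' hα'.1))
        _ hmem hδ.2
  intro h hh
  by_cases hz : h = 0
  · rwa [hz]
  obtain ⟨α, hα⟩ := exists_isLead v hz
  exact main α h hh hα.2

/-- The exponents of the monomials in the initial ideal of `I` for the order `key v`. -/
def leadSet (v : Fin n → ℝ) (I : Ideal (MvPolynomial (Fin n) k)) : Set (Fin n →₀ ℕ) :=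
  {α | ∃ f ∈ I, IsLead v f α}

/-- Every monomial is congruent modulo `I` to a combination of standard monomials. -/
theorem exists_normalForm {v : Fin n → ℝ} (hv : ∀ i, 0 < v i)
    (I : Ideal (MvPolynomial (Fin n) k)) (α : Fin n →₀ ℕ) :
    ∃ r : MvPolynomial (Fin n) k, monomial α 1 - r ∈ I ∧
      ∀ γ ∈ r.support, γ ∉ leadSet v I ∧ key v γ ≤ key v α := by
  classical
  induction α using (wellFounded_key hv).induction with
  | _ α ih =>
    by_cases hα : α ∈ leadSet v I
    · obtain ⟨f, hf, hl⟩ := hα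
      choose! r hr hrs using ih
      have hc : coeff α f ≠ 0 := mem_support_iff.1 hl.1
      have hlt : ∀ γ ∈ f.support.erase α, key v γ < key v α := fun γ hγ =>
        lt_of_le_of_ne (hl.2 γ (Finset.mem_of_mem_erase hγ))
          fun h => Finset.ne_of_mem_erase hγ (key_injective v h)
      refine ⟨-(C (coeff α f)⁻¹ * ∑ γ ∈ f.support.erase α, C (coeff γ f) * r γ), ?_, ?_⟩
      · have hf' : f = C (coeff α f) * monomial α 1 +
            ∑ γ ∈ f.support.erase α, C (coeff γ f) * monomial γ 1 := by
          rw [Finset.add_sum_erase f.support (fun γ => C (coeff γ f) * monomial γ (1 : k)) hl.1]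
          simp only [C_mul_monomial, mul_one]
          exact (support_sum_monomial_coeff f).symm
        have hinv : (C (coeff α f)⁻¹ : MvPolynomial (Fin n) k) * C (coeff α f) = 1 := by
          rw [← C_mul, inv_mul_cancel₀ hc, C_1]
        -- `x^α + c⁻¹ ∑ f_γ r_γ = c⁻¹ (f - ∑ f_γ (x^γ - r_γ))`, with `c` the leading coefficient.
        have e : monomial α 1 - -(C (coeff α f)⁻¹ *
              ∑ γ ∈ f.support.erase α, C (coeff γ f) * r γ) =
            C (coeff α f)⁻¹ * (f - ∑ γ ∈ f.support.erase α,
              C (coeff γ f) * (monomial γ 1 - r γ)) := by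
          have : f - ∑ γ ∈ f.support.erase α, C (coeff γ f) * (monomial γ 1 - r γ) =
              C (coeff α f) * monomial α 1 +
                ∑ γ ∈ f.support.erase α, C (coeff γ f) * r γ := by
            simp only [mul_sub, Finset.sum_sub_distrib]
            nth_rewrite 1 [hf']
            ring
          rw [this, mul_add, ← mul_assoc, hinv]
          ring
        rw [e]
        exact I.mul_mem_left _ (I.sub_mem hf (I.sum_mem fun γ hγ =>
          I.mul_mem_left _ (hr γ (hlt γ hγ))))
      · intro δ hδ
        rw [support_neg, mem_support_iff, coeff_C_mul, coeff_sum] at hδ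
        obtain ⟨γ, hγ, hne⟩ := Finset.exists_ne_zero_of_sum_ne_zero (right_ne_zero_of_mul hδ)
        rw [coeff_C_mul] at hne
        have := hrs γ (hlt γ hγ) δ (mem_support_iff.2 (right_ne_zero_of_mul hne))
        exact ⟨this.1, this.2.trans (hlt γ hγ).le⟩
    · refine ⟨monomial α 1, by simp, fun γ hγ => ?_⟩
      have : γ = α := by simpa using support_monomial_subset hγ
      rw [this]
      exact ⟨hα, le_rfl⟩

/-- The elements of the reduced Gröbner basis: monic polynomials with prescribed leading exponent,
all of whose other monomials are standard. -/
theorem exists_reduced {v : Fin n → ℝ} (hv : ∀ i, 0 < v i)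
    (I : Ideal (MvPolynomial (Fin n) k)) {α : Fin n →₀ ℕ} (hα : α ∈ leadSet v I) :
    ∃ g ∈ I, IsLead v g α ∧ coeff α g = 1 ∧ ∀ γ ∈ g.support, γ ∈ leadSet v I → γ = α := by
  classical
  obtain ⟨r, hr, hrs⟩ := exists_normalForm hv I α
  have hαr : coeff α r = 0 := by
    by_contra h
    exact (hrs α (mem_support_iff.2 h)).1 hα
  have h1 : coeff α (monomial α 1 - r) = 1 := by simp [hαr]
  have hsupp : ∀ γ ∈ (monomial α 1 - r).support, γ = α ∨ γ ∈ r.support := by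
    intro γ hγ
    rcases Finset.mem_union.1 (support_sub _ _ _ hγ) with h | h
    · left; simpa using support_monomial_subset h
    · exact Or.inr h
  refine ⟨_, hr, ⟨mem_support_iff.2 (by rw [h1]; exact one_ne_zero), fun γ hγ => ?_⟩, h1,
    fun γ hγ hM => ?_⟩
  · rcases hsupp γ hγ with rfl | h
    · exact le_rfl
    · exact (hrs γ h).2
  · exact (hsupp γ hγ).resolve_right fun h => (hrs γ h).1 hM

/-! ### Initial forms and homogeneous parts -/

/-- The part of `f` of `u`-degree `d`. -/
noncomputable def part (u : Fin n → ℝ) (d : ℝ) :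
    MvPolynomial (Fin n) k →ₗ[k] MvPolynomial (Fin n) k :=
  weightedHomogeneousComponent u d

theorem coeff_part (u : Fin n → ℝ) (d : ℝ) (f : MvPolynomial (Fin n) k) (α : Fin n →₀ ℕ) :
    coeff α (part u d f) = if wdeg u α = d then coeff α f else 0 := by
  have : Finsupp.weight u α = wdeg u α := by
    rw [Finsupp.weight_apply, wdeg, Finsupp.sum_fintype _ _ (by simp)]
    exact Finset.sum_congr rfl fun i _ => by rw [nsmul_eq_mul, mul_comm]
  rw [part, coeff_weightedHomogeneousComponent, this]

theorem part_monomial_mul (u : Fin n → ℝ) (d : ℝ) (γ : Fin n →₀ ℕ) (c : k)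
    (f : MvPolynomial (Fin n) k) :
    part u d (monomial γ c * f) = monomial γ c * part u (d - wdeg u γ) f := by
  ext α
  rw [coeff_part, coeff_monomial_mul', coeff_monomial_mul']
  by_cases h : γ ≤ α
  · have : wdeg u α = wdeg u (α - γ) + wdeg u γ := by
      rw [← wdeg_add, tsub_add_cancel_of_le h]
    rw [if_pos h, if_pos h, coeff_part]
    by_cases h' : wdeg u α = d
    · rw [if_pos h', if_pos (by linarith)]
    · rw [if_neg h', if_neg (fun e => h' (by linarith)), mul_zero]
  · rw [if_neg h, if_neg h, ite_self]

theorem coeff_initialForm (u : Fin n → ℝ) (f : MvPolynomial (Fin n) k) (α : Fin n →₀ ℕ)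
    [Decidable (∀ β ∈ f.support, wdeg u β ≤ wdeg u α)] :
    coeff α (initialForm u f) =
      if ∀ β ∈ f.support, wdeg u β ≤ wdeg u α then coeff α f else 0 := by
  classical
  rw [initialForm, coeff_sum]
  simp only [coeff_monomial]
  rw [Finset.sum_ite_eq']
  by_cases h : coeff α f = 0
  · simp [h]
  · simp [h]

theorem mem_support_initialForm {u : Fin n → ℝ} {f : MvPolynomial (Fin n) k}
    {α : Fin n →₀ ℕ} :
    α ∈ (initialForm u f).support ↔
      α ∈ f.support ∧ ∀ β ∈ f.support, wdeg u β ≤ wdeg u α := by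
  classical
  rw [mem_support_iff, coeff_initialForm, mem_support_iff]
  simp [and_comm]

theorem coeff_initialForm_of_mem {u : Fin n → ℝ} {f : MvPolynomial (Fin n) k}
    {α : Fin n →₀ ℕ} (h : α ∈ (initialForm u f).support) :
    coeff α (initialForm u f) = coeff α f := by
  classical
  rw [coeff_initialForm, if_pos (mem_support_initialForm.1 h).2]

/-- The initial form is the part of maximal degree. -/
theorem initialForm_eq_part {u : Fin n → ℝ} {f : MvPolynomial (Fin n) k} {α : Fin n →₀ ℕ}
    (hα : α ∈ (initialForm u f).support) : initialForm u f = part u (wdeg u α) f := by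
  classical
  rw [mem_support_initialForm] at hα
  ext γ
  rw [coeff_part, coeff_initialForm]
  by_cases hγ : γ ∈ f.support
  · have : (∀ β ∈ f.support, wdeg u β ≤ wdeg u γ) ↔ wdeg u γ = wdeg u α :=
      ⟨fun h => le_antisymm (hα.2 γ hγ) (h α hα.1), fun h => h ▸ hα.2⟩
    simp only [this]
  · rw [notMem_support_iff.1 hγ, ite_self, ite_self]

theorem initialForm_mem (u : Fin n → ℝ) {I : Ideal (MvPolynomial (Fin n) k)}
    {f : MvPolynomial (Fin n) k} (hf : f ∈ I) : initialForm u f ∈ initialFormIdeal u I :=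
  Ideal.subset_span ⟨f, hf, rfl⟩

theorem initialForm_zero (u : Fin n → ℝ) :
    initialForm u (0 : MvPolynomial (Fin n) k) = 0 := by
  simp [initialForm]

theorem exists_mem_support_initialForm (u : Fin n → ℝ) {f : MvPolynomial (Fin n) k}
    (hf : f ≠ 0) : ∃ α, α ∈ (initialForm u f).support := by
  obtain ⟨α, h1, h2⟩ := Finset.exists_max_image f.support (wdeg u) (support_nonempty.2 hf)
  exact ⟨α, mem_support_initialForm.2 ⟨h1, h2⟩⟩

/-- The homogeneous parts of elements of `in_u(I)` are themselves top-degree parts of elements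
of `I`. -/
theorem exists_part_eq {u : Fin n → ℝ} {I : Ideal (MvPolynomial (Fin n) k)}
    {h : MvPolynomial (Fin n) k} (hh : h ∈ initialFormIdeal u I) :
    ∀ d : ℝ, ∃ f ∈ I, (∀ γ ∈ f.support, wdeg u γ ≤ d) ∧ part u d h = part u d f := by
  classical
  have hadd : ∀ x y : MvPolynomial (Fin n) k,
      (∀ d : ℝ, ∃ f ∈ I, (∀ γ ∈ f.support, wdeg u γ ≤ d) ∧ part u d x = part u d f) →
      (∀ d : ℝ, ∃ f ∈ I, (∀ γ ∈ f.support, wdeg u γ ≤ d) ∧ part u d y = part u d f) →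
      ∀ d : ℝ, ∃ f ∈ I, (∀ γ ∈ f.support, wdeg u γ ≤ d) ∧
        part u d (x + y) = part u d f := by
    intro x y hx hy d
    obtain ⟨f, hf, hfd, hfe⟩ := hx d
    obtain ⟨g, hg, hgd, hge⟩ := hy d
    refine ⟨f + g, I.add_mem hf hg, fun γ hγ => ?_, by rw [map_add, map_add, hfe, hge]⟩
    rcases Finset.mem_union.1 (support_add hγ) with h | h
    exacts [hfd γ h, hgd γ h]
  refine Submodule.span_induction (p := fun h _ => ∀ d : ℝ, ∃ f ∈ I,
    (∀ γ ∈ f.support, wdeg u γ ≤ d) ∧ part u d h = part u d f) ?_ ?_ ?_ ?_ hh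
  · rintro _ ⟨f, hf, rfl⟩ d
    by_cases hz : f = 0
    · exact ⟨0, I.zero_mem, by simp, by rw [hz, initialForm_zero]⟩
    obtain ⟨α, hα⟩ := exists_mem_support_initialForm u hz
    by_cases hd : wdeg u α = d
    · refine ⟨f, hf, hd ▸ (mem_support_initialForm.1 hα).2, ?_⟩
      rw [initialForm_eq_part hα, hd]
      ext γ
      simp only [coeff_part]
      split_ifs <;> rfl
    · refine ⟨0, I.zero_mem, by simp, ?_⟩
      rw [initialForm_eq_part hα, map_zero]
      ext γ
      rw [coeff_part, coeff_part, coeff_zero]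
      by_cases h1 : wdeg u γ = d
      · rw [if_pos h1, if_neg (fun h2 => hd (h2.symm.trans h1))]
      · rw [if_neg h1]
  · exact fun d => ⟨0, I.zero_mem, by simp, rfl⟩
  · exact fun x y _ _ hx hy => hadd x y hx hy
  · intro a x _ hx
    rw [smul_eq_mul]
    induction a using MvPolynomial.induction_on' with
    | monomial δ c =>
      intro d
      obtain ⟨f, hf, hfd, hfe⟩ := hx (d - wdeg u δ)
      refine ⟨monomial δ c * f, I.mul_mem_left _ hf, fun γ hγ => ?_, ?_⟩
      · rw [mem_support_iff, coeff_monomial_mul'] at hγ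
        split_ifs at hγ with hle
        · have h1 := hfd _ (mem_support_iff.2 (right_ne_zero_of_mul hγ))
          have h2 : wdeg u γ = wdeg u (γ - δ) + wdeg u δ := by
            rw [← wdeg_add, tsub_add_cancel_of_le hle]
          linarith
        · exact absurd rfl hγ
      · rw [part_monomial_mul, part_monomial_mul, hfe]
    | add p q hp hq =>
      rw [add_mul]
      exact hadd _ _ hp hq

/-! ### Reduced bases and the cone attached to them -/

/-- The polynomials `g β`, `β ∈ B`, form a reduced Gröbner basis of `I` for the order `key v`,
where `β` is the leading exponent of `g β`. (Minimality of `B` is not required.) -/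
structure IsRedBasis (v : Fin n → ℝ) (I : Ideal (MvPolynomial (Fin n) k))
    (B : Finset (Fin n →₀ ℕ)) (g : (Fin n →₀ ℕ) → MvPolynomial (Fin n) k) : Prop where
  mem : ∀ β ∈ B, g β ∈ I
  lead : ∀ β ∈ B, IsLead v (g β) β
  monic : ∀ β ∈ B, coeff β (g β) = 1
  reduced : ∀ β ∈ B, ∀ γ ∈ (g β).support, γ ∈ leadSet v I → γ = β
  cover : ∀ α ∈ leadSet v I, ∃ β ∈ B, β ≤ α

/-- By Dickson's lemma the minimal leading exponents are finite in number. -/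
theorem exists_isRedBasis {v : Fin n → ℝ} (hv : ∀ i, 0 < v i)
    (I : Ideal (MvPolynomial (Fin n) k)) : ∃ B g, IsRedBasis v I B g := by
  have hfin : {α | Minimal (fun α => α ∈ leadSet v I) α}.Finite :=
    WellQuasiOrderedLE.finite_of_isAntichain (setOfPred_minimal_antichain _)
  have hex : ∀ α : Fin n →₀ ℕ, α ∈ leadSet v I → ∃ g ∈ I, IsLead v g α ∧ coeff α g = 1 ∧
    ∀ γ ∈ g.support, γ ∈ leadSet v I → γ = α := fun α hα => exists_reduced hv I hα
  choose! g hg using hex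
  have hB : ∀ β ∈ hfin.toFinset, β ∈ leadSet v I := fun β hβ =>
    ((Set.Finite.mem_toFinset hfin).1 hβ).prop
  refine ⟨hfin.toFinset, g, fun β hβ => (hg β (hB β hβ)).1, fun β hβ => (hg β (hB β hβ)).2.1,
    fun β hβ => (hg β (hB β hβ)).2.2.1, fun β hβ => (hg β (hB β hβ)).2.2.2, fun α hα => ?_⟩
  obtain ⟨β, hβ, hm⟩ := exists_minimal_le_of_wellFoundedLT (fun α => α ∈ leadSet v I) α hα
  exact ⟨β, (Set.Finite.mem_toFinset hfin).2 hm, hβ⟩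

/-- The weights `u` for which every `in_u(g β)` contains all the terms of `in_v(g β)`. This is
shown below to be the cone `C_v(I)`. -/
def Compat (v : Fin n → ℝ) (B : Finset (Fin n →₀ ℕ))
    (g : (Fin n →₀ ℕ) → MvPolynomial (Fin n) k) (u : Fin n → ℝ) : Prop :=
  ∀ β ∈ B, (initialForm v (g β)).support ⊆ (initialForm u (g β)).support

section

variable {v u : Fin n → ℝ} {I : Ideal (MvPolynomial (Fin n) k)}
  {B : Finset (Fin n →₀ ℕ)} {g : (Fin n →₀ ℕ) → MvPolynomial (Fin n) k}

theorem IsRedBasis.self_mem_support (hG : IsRedBasis v I B g) {β : Fin n →₀ ℕ}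
    (hβ : β ∈ B) : β ∈ (initialForm v (g β)).support :=
  mem_support_initialForm.2 ⟨(hG.lead β hβ).1, fun γ hγ =>
    wdeg_le_of_key_le ((hG.lead β hβ).2 γ hγ)⟩

theorem IsRedBasis.initialForm_spec (hG : IsRedBasis v I B g) (hu : Compat v B g u)
    {β : Fin n →₀ ℕ} (hβ : β ∈ B) : initialForm u (g β) ∈ initialFormIdeal u I ∧
      IsLead v (initialForm u (g β)) β ∧ coeff β (initialForm u (g β)) = 1 := by
  have hm := hu β hβ (hG.self_mem_support hβ)
  refine ⟨initialForm_mem u (hG.mem β hβ), ⟨hm, fun γ hγ => ?_⟩, ?_⟩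
  · exact (hG.lead β hβ).2 γ (mem_support_initialForm.1 hγ).1
  · rw [coeff_initialForm_of_mem hm, hG.monic β hβ]

/-- For `u` in the cone, passing to `in_u(I)` creates no new leading exponents. For the part `p`
of top `u`-degree of some `f ∈ I`, divide `f` by the basis: as long as the leading term of `f` is
not in `p` the division step leaves `p` unchanged. -/
theorem IsRedBasis.lead_mem (hv : ∀ i, 0 < v i) (hG : IsRedBasis v I B g)
    (hu : Compat v B g u) {h : MvPolynomial (Fin n) k} (hh : h ∈ initialFormIdeal u I)
    {α : Fin n →₀ ℕ} (hα : IsLead v h α) : α ∈ leadSet v I := by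
  classical
  have main : ∀ d : ℝ, ∀ f ∈ I, (∀ γ ∈ f.support, wdeg u γ ≤ d) → ∀ α,
      IsLead v (part u d f) α → α ∈ leadSet v I := by
    intro d
    refine division_induction hv (J := I) (B := ↑B) (p := g)
      (fun β hβ => ⟨hG.mem β hβ, hG.lead β hβ, hG.monic β hβ⟩)
      (fun h hh α hα => hG.cover α ⟨h, hh, hα⟩) ?_ ?_
    · intro _ α hα
      simp [IsLead] at hα
    · intro f hf α₀ β hβ hβα hα₀ ih hd α hα
      -- All terms of the subtracted multiple have at most the `u`-degree of the leading term.
      have hβu := mem_support_initialForm.1 (hu β hβ (hG.self_mem_support hβ))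
      have hw : wdeg u (α₀ - β) + wdeg u β = wdeg u α₀ := by
        rw [← wdeg_add, tsub_add_cancel_of_le hβα]
      have hq : ∀ δ ∈ (monomial (α₀ - β) (coeff α₀ f) * g β).support,
          wdeg u δ ≤ wdeg u α₀ := by
        intro δ hδ
        obtain ⟨γ, hγ, he⟩ := mem_support_monomial_mul hβα hδ
        have h1 := congrArg (wdeg u) he
        rw [wdeg_add, wdeg_add] at h1
        linarith [hβu.2 γ hγ]
      rcases (hd α₀ hα₀.1).lt_or_eq with hlt | heq
      · have hp : part u d (monomial (α₀ - β) (coeff α₀ f) * g β) = 0 := by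
          ext δ
          rw [coeff_part, coeff_zero]
          split_ifs with hδ
          · by_contra hne
            linarith [hq δ (mem_support_iff.2 hne)]
          · rfl
        refine ih (fun γ hγ => ?_) α (by rwa [map_sub, hp, sub_zero])
        rcases Finset.mem_union.1 (support_sub _ _ _ hγ) with h | h
        exacts [hd γ h, (hq γ h).trans hlt.le]
      -- Here the leading term of `f` lies in the top part, so it is its leading term too.
      · have hmem : α₀ ∈ (part u d f).support := by
          rw [mem_support_iff, coeff_part, if_pos heq]
          exact mem_support_iff.1 hα₀.1
        have hαf : α ∈ f.support := by
          have := mem_support_iff.1 hα.1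
          rw [coeff_part] at this
          split_ifs at this with h
          · exact mem_support_iff.2 this
          · exact absurd rfl this
        have : α = α₀ := key_injective v (le_antisymm (hα₀.2 α hαf) (hα.2 α₀ hmem))
        rw [this]
        exact ⟨f, hf, hα₀⟩
  obtain ⟨f, hf, hfd, hfe⟩ := exists_part_eq hh (wdeg u α)
  refine main _ f hf hfd α ?_
  rw [← hfe]
  refine ⟨?_, fun γ hγ => ?_⟩
  · rw [mem_support_iff, coeff_part, if_pos rfl]
    exact mem_support_iff.1 hα.1
  · refine hα.2 γ (mem_support_iff.2 fun h0 => mem_support_iff.1 hγ ?_)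
    rw [coeff_part, h0, ite_self]

/-- Division in `in_u(I)` by the initial forms of the basis. -/
theorem IsRedBasis.induction (hv : ∀ i, 0 < v i) (hG : IsRedBasis v I B g)
    (hu : Compat v B g u) {P : MvPolynomial (Fin n) k → Prop} (h0 : P 0)
    (step : ∀ h ∈ initialFormIdeal u I, ∀ α, ∀ β ∈ B, β ≤ α → IsLead v h α →
      P (h - monomial (α - β) (coeff α h) * initialForm u (g β)) → P h) :
    ∀ h ∈ initialFormIdeal u I, P h :=
  division_induction hv (B := ↑B) (p := fun β => initialForm u (g β))
    (fun _ hβ => hG.initialForm_spec hu hβ)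
    (fun _ hh α hα => hG.cover α (hG.lead_mem hv hu hh hα)) h0 step

/-- For `u` in the cone, `in_u(I)` is generated by the initial forms of the basis. -/
theorem IsRedBasis.initialFormIdeal_eq (hv : ∀ i, 0 < v i) (hG : IsRedBasis v I B g)
    (hu : Compat v B g u) :
    initialFormIdeal u I = Ideal.span ((fun β => initialForm u (g β)) '' (B : Set _)) := by
  apply le_antisymm
  · refine hG.induction hv hu (Ideal.zero_mem _) fun h _ α β hβ _ _ ih => ?_
    have := Ideal.add_mem _ ih (Ideal.mul_mem_left _ (monomial (α - β) (coeff α h))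
      (Ideal.subset_span (Set.mem_image_of_mem (fun β => initialForm u (g β)) hβ)))
    rwa [sub_add_cancel] at this
  · rw [Ideal.span_le]
    rintro _ ⟨β, hβ, rfl⟩
    exact initialForm_mem u (hG.mem β hβ)

/-- For `u` in the cone, the top `v`-degree part of an element of `in_u(I)` lies in `in_v(I)`. -/
theorem IsRedBasis.part_mem (hv : ∀ i, 0 < v i) (hG : IsRedBasis v I B g)
    (hu : Compat v B g u) (e : ℝ) : ∀ h ∈ initialFormIdeal u I,
      (∀ γ ∈ h.support, wdeg v γ ≤ e) → part v e h ∈ initialFormIdeal v I := by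
  classical
  refine hG.induction hv hu (fun _ => by simp) fun h _ α β hβ hβα hα ih hd => ?_
  have hw : wdeg v (α - β) + wdeg v β = wdeg v α := by
    rw [← wdeg_add, tsub_add_cancel_of_le hβα]
  have hβv := hG.self_mem_support hβ
  have hβm := (mem_support_initialForm.1 hβv).2
  have hsub : ∀ γ ∈ (initialForm u (g β)).support, wdeg v γ ≤ wdeg v β := fun γ hγ =>
    hβm γ (mem_support_initialForm.1 hγ).1
  have hd' := hd α hα.1
  have hpart : part v (e - wdeg v (α - β)) (initialForm u (g β)) ∈ initialFormIdeal v I := by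
    by_cases he : e = wdeg v α
    · have : e - wdeg v (α - β) = wdeg v β := by linarith
      rw [this]
      have heq : part v (wdeg v β) (initialForm u (g β)) = initialForm v (g β) := by
        rw [initialForm_eq_part hβv]
        ext γ
        rw [coeff_part, coeff_part]
        split_ifs with h1
        · by_cases h2 : γ ∈ (g β).support
          · exact coeff_initialForm_of_mem (hu β hβ (mem_support_initialForm.2
              ⟨h2, fun δ hδ => h1 ▸ hβm δ hδ⟩))
          · rw [notMem_support_iff.1 h2, ← notMem_support_iff]
            exact fun h3 => h2 (mem_support_initialForm.1 h3).1
        · rfl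
      rw [heq]
      exact initialForm_mem v (hG.mem β hβ)
    · have : part v (e - wdeg v (α - β)) (initialForm u (g β)) = 0 := by
        ext γ
        rw [coeff_part, coeff_zero]
        split_ifs with h1
        · by_contra hne
          have h2 := hsub γ (mem_support_iff.2 hne)
          exact he (by linarith)
        · rfl
      rw [this]
      exact Ideal.zero_mem _
  have hrec := ih fun δ hδ => ?_
  · rw [map_sub, part_monomial_mul] at hrec
    have := Ideal.add_mem _ hrec (Ideal.mul_mem_left _ (monomial (α - β) (coeff α h)) hpart)
    rwa [sub_add_cancel] at this
  · rcases Finset.mem_union.1 (support_sub _ _ _ hδ) with h1 | h1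
    · exact hd δ h1
    · obtain ⟨γ, hγ, he⟩ := mem_support_monomial_mul hβα h1
      have h2 := congrArg (wdeg v) he
      rw [wdeg_add, wdeg_add] at h2
      linarith [hsub γ hγ]

/-- Membership of `u` in the cone depends only on the ideal `in_u(I)`. -/
theorem IsRedBasis.compat_congr (hv : ∀ i, 0 < v i) (hG : IsRedBasis v I B g)
    (hu : Compat v B g u) {u' : Fin n → ℝ}
    (h : initialFormIdeal u' I = initialFormIdeal u I) : Compat v B g u' := by
  classical
  intro β hβ
  have hvc : Compat v B g v := fun _ _ => subset_rfl
  have hβv := hG.self_mem_support hβ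
  have hβm := mem_support_initialForm.1 hβv
  have hmem : initialForm u' (g β) ∈ initialFormIdeal u I :=
    h ▸ initialForm_mem u' (hG.mem β hβ)
  have hsub : (initialForm u' (g β)).support ⊆ (g β).support := fun γ hγ =>
    (mem_support_initialForm.1 hγ).1
  have hβu' : β ∈ (initialForm u' (g β)).support := by
    obtain ⟨γ, hγ⟩ := exists_mem_support_initialForm u' (support_nonempty.1 ⟨β, hβm.1⟩)
    obtain ⟨α, hα⟩ := exists_isLead v (support_nonempty.1 ⟨γ, hγ⟩)
    have := hG.reduced β hβ α (hsub hα.1) (hG.lead_mem hv hu hmem hα)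
    exact this ▸ hα.1
  -- The difference of `in_v(g β)` and `in_v(in_u'(g β))` is a combination of standard
  -- monomials lying in `in_v(I)`, so it vanishes.
  have hq : initialForm v (g β) - part v (wdeg v β) (initialForm u' (g β)) = 0 := by
    by_contra hne
    obtain ⟨α, hα⟩ := exists_isLead v hne
    have hqmem := Ideal.sub_mem _ (initialForm_mem v (hG.mem β hβ))
      (hG.part_mem hv hu (wdeg v β) _ hmem fun γ hγ => hβm.2 γ (hsub hγ))
    have hlead := hG.lead_mem hv hvc hqmem hα
    have hαg : α ∈ (g β).support := by
      rcases Finset.mem_union.1 (support_sub _ _ _ hα.1) with h1 | h1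
      · exact (mem_support_initialForm.1 h1).1
      · refine hsub (mem_support_iff.2 fun h2 => mem_support_iff.1 h1 ?_)
        rw [coeff_part, h2, ite_self]
    have hαβ := hG.reduced β hβ α hαg hlead
    have := mem_support_iff.1 hα.1
    rw [hαβ, coeff_sub, coeff_part, if_pos rfl, coeff_initialForm_of_mem hβv,
      coeff_initialForm_of_mem hβu', sub_self] at this
    exact this rfl
  intro α hα
  rw [sub_eq_zero.1 hq, mem_support_iff, coeff_part] at hα
  split_ifs at hα with h1
  · exact mem_support_iff.2 hα
  · exact absurd rfl hα

end

/-- The differences `γ - α` of exponents, where `α` occurs in `in_v(g β)` and `γ` in `g β`. -/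
noncomputable def normals (v : Fin n → ℝ) (B : Finset (Fin n →₀ ℕ))
    (g : (Fin n →₀ ℕ) → MvPolynomial (Fin n) k) : Finset (Fin n → ℝ) :=
  letI := Classical.decEq (Fin n → ℝ)
  B.biUnion fun β => ((initialForm v (g β)).support ×ˢ (g β).support).image
    fun p i => (p.2 i : ℝ) - (p.1 i : ℝ)

theorem forall_mem_normals {v : Fin n → ℝ} {B : Finset (Fin n →₀ ℕ)}
    {g : (Fin n →₀ ℕ) → MvPolynomial (Fin n) k} {P : (Fin n → ℝ) → Prop} :
    (∀ w ∈ normals v B g, P w) ↔ ∀ β ∈ B, ∀ α ∈ (initialForm v (g β)).support,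
      ∀ γ ∈ (g β).support, P fun i => (γ i : ℝ) - (α i : ℝ) := by
  classical
  simp only [normals, Finset.mem_biUnion, Finset.mem_image, Finset.mem_product, Prod.exists]
  constructor
  · exact fun h β hβ α hα γ hγ => h _ ⟨β, hβ, α, γ, ⟨hα, hγ⟩, rfl⟩
  · rintro h _ ⟨β, hβ, α, γ, ⟨hα, hγ⟩, rfl⟩
    exact h β hβ α hα γ hγ

theorem sub_dotProduct_eq (u : Fin n → ℝ) (α γ : Fin n →₀ ℕ) :
    (fun i => (γ i : ℝ) - (α i : ℝ)) ⬝ᵥ u = wdeg u γ - wdeg u α := by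
  simp only [dotProduct, wdeg, ← Finset.sum_sub_distrib]
  exact Finset.sum_congr rfl fun i _ => by ring

theorem compat_iff {v u : Fin n → ℝ} {B : Finset (Fin n →₀ ℕ)}
    {g : (Fin n →₀ ℕ) → MvPolynomial (Fin n) k} :
    Compat v B g u ↔ u ∈ coneFace (normals v B g) ∅ := by
  have : u ∈ coneFace (normals v B g) ∅ ↔ ∀ w ∈ normals v B g, w ⬝ᵥ u ≤ 0 := by
    simp [coneFace]
  rw [this, forall_mem_normals]
  simp only [sub_dotProduct_eq, sub_nonpos]
  constructor
  · exact fun h β hβ α hα => (mem_support_initialForm.1 (h β hβ hα)).2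
  · exact fun h β hβ α hα =>
      mem_support_initialForm.2 ⟨(mem_support_initialForm.1 hα).1, h β hβ α hα⟩

/-- Weights in the relative interior of the same face of the cone give the same initial ideal. -/
theorem IsRedBasis.ideal_congr {v : Fin n → ℝ} (hv : ∀ i, 0 < v i)
    {I : Ideal (MvPolynomial (Fin n) k)} {B : Finset (Fin n →₀ ℕ)}
    {g : (Fin n →₀ ℕ) → MvPolynomial (Fin n) k} (hG : IsRedBasis v I B g)
    {u u' : Fin n → ℝ} (hu : Compat v B g u) (hu' : Compat v B g u')
    (h : tightSet (normals v B g) u = tightSet (normals v B g) u') :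
    initialFormIdeal u I = initialFormIdeal u' I := by
  rw [hG.initialFormIdeal_eq hv hu, hG.initialFormIdeal_eq hv hu']
  congr 1
  refine Set.image_congr fun β hβ => ?_
  have hT : ∀ w ∈ normals v B g, (w ⬝ᵥ u = 0 ↔ w ⬝ᵥ u' = 0) := by
    intro w hw
    have := Finset.ext_iff.1 h w
    simpa [mem_tightSet, hw] using this
  rw [forall_mem_normals] at hT
  simp only [sub_dotProduct_eq, sub_eq_zero] at hT
  have hβv := hG.self_mem_support hβ
  rw [initialForm_eq_part (hu β hβ hβv), initialForm_eq_part (hu' β hβ hβv)]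
  ext γ
  rw [coeff_part, coeff_part]
  by_cases hγ : γ ∈ (g β).support
  · simp only [hT β hβ β hβv γ hγ]
  · rw [notMem_support_iff.1 hγ, ite_self, ite_self]

/-- The closure of the equivalence class of `v` is the polyhedral cone of the reduced basis: `v`
has the fewest tight inequalities, so `u + ε • v` is equivalent to `v` for `u` in the cone. -/
theorem IsRedBasis.Cv_eq {v : Fin n → ℝ} (hv : ∀ i, 0 < v i)
    {I : Ideal (MvPolynomial (Fin n) k)} {B : Finset (Fin n →₀ ℕ)}
    {g : (Fin n →₀ ℕ) → MvPolynomial (Fin n) k} (hG : IsRedBasis v I B g) :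
    Cv I v = coneFace (normals v B g) ∅ := by
  have hvc : Compat v B g v := fun _ _ => subset_rfl
  have hvm := compat_iff.1 hvc
  apply subset_antisymm
  · refine closure_minimal (fun u hu => ?_) (isClosed_coneFace _ _)
    exact compat_iff.1 (hG.compat_congr hv hvc hu)
  · intro u hu
    have hmin : ∀ w ∈ normals v B g, w ⬝ᵥ v = 0 → w ⬝ᵥ u = 0 := by
      rw [forall_mem_normals]
      intro β hβ α hα γ hγ h0
      rw [sub_dotProduct_eq, sub_eq_zero] at h0 ⊢
      have hc := compat_iff.2 hu β hβ
      have h1 := mem_support_initialForm.1 hα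
      have h2 := mem_support_initialForm.1 (hc hα)
      have h3 := mem_support_initialForm.1
        (hc (mem_support_initialForm.2 ⟨hγ, fun δ hδ => h0 ▸ h1.2 δ hδ⟩))
      exact le_antisymm (h2.2 γ hγ) (h3.2 α h1.1)
    have hmove : ∀ ε : ℝ, 0 < ε → u + ε • v ∈
        {u : Fin n → ℝ | initialFormIdeal u I = initialFormIdeal v I} := by
      intro ε hε
      refine hG.ideal_congr hv (compat_iff.2 (add_mem_coneFace hu
        (smul_mem_coneFace hε.le hvm))) hvc ?_
      ext w
      simp only [mem_tightSet, and_congr_right_iff]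
      intro hw
      rw [dotProduct_add, dotProduct_smul, smul_eq_mul]
      constructor
      · intro h
        have ha := hu.1 w hw
        have hb := mul_nonpos_of_nonneg_of_nonpos hε.le (hvm.1 w hw)
        have hd : ε * (w ⬝ᵥ v) = 0 := by linarith
        exact (mul_eq_zero.1 hd).resolve_left hε.ne'
      · intro h
        rw [h, hmin w hw h, mul_zero, add_zero]
    have ht : Filter.Tendsto (fun ε : ℝ => u + ε • v) (nhdsWithin 0 (Set.Ioi 0)) (nhds u) := by
      have hc : Continuous fun ε : ℝ => u + ε • v := by fun_prop
      have := hc.tendsto 0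
      simp only [zero_smul, add_zero] at this
      exact this.mono_left nhdsWithin_le_nhds
    exact mem_closure_of_tendsto ht (Filter.eventually_of_mem self_mem_nhdsWithin hmove)

/-- Each member of the Gröbner fan is a face of the cone of a reduced basis. -/
theorem exists_of_mem_groebnerFan {I : Ideal (MvPolynomial (Fin n) k)}
    {C : Set (Fin n → ℝ)} (hC : C ∈ GroebnerFan I) :
    ∃ (v : Fin n → ℝ) (B : Finset (Fin n →₀ ℕ)) (g : (Fin n →₀ ℕ) → MvPolynomial (Fin n) k)
      (S : Finset (Fin n → ℝ)), (∀ i, 0 < v i) ∧ IsRedBasis v I B g ∧ S ⊆ normals v B g ∧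
        C = coneFace (normals v B g) S := by
  obtain ⟨hne, v, hv, hF⟩ := hC
  obtain ⟨B, g, hG⟩ := exists_isRedBasis hv I
  rw [hG.Cv_eq hv] at hF
  obtain ⟨S, _, hS, rfl⟩ := exists_eq_coneFace (Finset.empty_subset _) hF hne
  exact ⟨v, B, g, S, hv, hG, hS, rfl⟩

/-- The Gröbner fan of an ideal `I ⊆ k[x_1,…,x_n]` is a polyhedral complex of
cones: every cone `C_v(I)` for `v ∈ ℝ^n_{>0}` is a closed convex polyhedral
cone, every nonempty face of a member of the Gröbner fan is again a member,
and the intersection of any two members is a face of each of them. -/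
theorem groebnerFan_is_polyhedral_complex (I : Ideal (MvPolynomial (Fin n) k)) :
    (∀ v : Fin n → ℝ, (∀ i, 0 < v i) →
      IsClosed (Cv I v) ∧ Convex ℝ (Cv I v) ∧
      (∀ c : ℝ, 0 < c → ∀ x ∈ Cv I v, c • x ∈ Cv I v) ∧
      ∃ (m : ℕ) (w : Fin m → Fin n → ℝ),
        Cv I v = {x : Fin n → ℝ | ∀ j, ∑ i, w j i * x i ≤ 0}) ∧
    (∀ C ∈ GroebnerFan I, ∀ F : Set (Fin n → ℝ),
      IsFaceOf C F → F.Nonempty → F ∈ GroebnerFan I) ∧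
    (∀ C₁ ∈ GroebnerFan I, ∀ C₂ ∈ GroebnerFan I, IsFaceOf C₁ (C₁ ∩ C₂)) := by
  have hinter : ∀ C₁ ∈ GroebnerFan I, ∀ C₂ ∈ GroebnerFan I, IsFaceOf C₁ (C₁ ∩ C₂) := by
    intro C₁ h₁ C₂ h₂
    obtain ⟨v₁, B₁, g₁, S₁, hv₁, hG₁, hS₁, rfl⟩ := exists_of_mem_groebnerFan h₁
    obtain ⟨v₂, B₂, g₂, S₂, hv₂, hG₂, hS₂, rfl⟩ := exists_of_mem_groebnerFan h₂
    refine isFaceOf_inter hS₁ hS₂ fun x hx z hz hxz hx₂ => ?_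
    rw [← compat_iff] at hx hz hx₂ ⊢
    exact hG₂.compat_congr hv₂ hx₂ (hG₁.ideal_congr hv₁ hx hz hxz).symm
  refine ⟨fun v hv => ?_, fun C hC F hF hne => ?_, hinter⟩
  · obtain ⟨B, g, hG⟩ := exists_isRedBasis hv I
    rw [hG.Cv_eq hv]
    refine ⟨isClosed_coneFace _ _, fun x hx y hy a b ha hb _ => ?_, fun c hc x hx => ?_, ?_⟩
    · exact add_mem_coneFace (smul_mem_coneFace ha hx) (smul_mem_coneFace hb hy)
    · exact smul_mem_coneFace hc.le hx
    · refine ⟨(normals v B g).card, fun j => (normals v B g).equivFin.symm j, ?_⟩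
      ext x
      constructor
      · exact fun hx j => hx.1 _ ((normals v B g).equivFin.symm j).2
      · refine fun hx => ⟨fun w hw => ?_, by simp⟩
        have := hx ((normals v B g).equivFin ⟨w, hw⟩)
        simp only [Equiv.symm_apply_apply] at this
        exact this
  · obtain ⟨v, B, g, S, hv, hG, hS, rfl⟩ := exists_of_mem_groebnerFan hC
    obtain ⟨S', _, hS', rfl⟩ := exists_eq_coneFace hS hF hne
    refine ⟨hne, v, hv, ?_⟩
    rw [hG.Cv_eq hv]
    exact isFaceOf_coneFace (Finset.empty_subset _) hS'
end

section
/- Let I ⊆ k[x_1,…,x_n] be an ideal and ≺ any term order. Then the orientation of the graph of the Gröbner fan of I induced by ≺ (orienting each edge {C_1,C_2} with common facet F from C_1 to C_2 when x^p ≺ x^q for p,q ∈ ℕ^n with q−p a normal of F that is negative on C_1∖F and positive on C_2∖F) has no directed cycles and has a unique sink, namely the cone C_≺(I). -/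
/-! For a term order `τ`, the monomials outside `in_τ(I)` (the standard monomials) form a basis of
`R/I`, and every monomial `x^m` has a normal form `nf τ I m` supported on them. The cone `C_τ(I)` is
the set of `u` with `⟨u, α⟩ ≤ ⟨u, m⟩` for all `m` and all exponents `α` of `nf τ I m`
(`Cprec_eq_cone`); `in_u(I) = in_τ(I)` exactly when these inequalities are strict for `x^m ∈ in_τ(I)`
(`initialFormIdeal_eq_iff`). It is enough to take `m` among finitely many generators of `in_τ(I)`
(`propagate`), so the set of such `u` is open. By Gordan's alternative a term order is
represented on finitely many pairs of monomials by a positive weight (`exists_weight`), so this set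
is nonempty; conversely each full-dimensional cone of the fan is the cone of a term order
(`exists_termOrder`).

Acyclicity. A directed cycle involves finitely many normals `q - p`, so a positive weight `ω`
represents `≺` on all of them. Let `u` be a relative interior point of the facet shared by the cones
of `τ₁` and `τ₂`. Both sets of standard monomials are bases of `R/in_u(I)`, and the relations of
`in_u(I)` only involve differences parallel to `q - p`. When the edge points from `τ₁` to `τ₂`,
rewriting `τ₁`-standard monomials in terms of `τ₂`-standard ones does not raise the `ω`-degree, so
the number of standard monomials of `ω`-degree at most `t` weakly increases for every `t`, and
strictly for some `t` (`stdCount_lt`). Hence a cycle would give a function smaller than itself.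

Sink. For an edge with normal `q - p`, a positive weight with `⟨ω, p⟩ < ⟨ω, q⟩` may be chosen in the
interior of `C_≺(I)`, so no edge leaves `C_≺(I)` (`isSink`). For any other cone, with interior point `v`, walk
along a segment from `v` to a generic positive `ω` in the interior of `C_≺(I)` that represents `≺` on
the finitely many pairs defining the cone. By genericity the first wall is crossed at a point `u`
where all tight inequalities have the same direction (`exists_first_wall`), so `u` lies in the
relative interior of a facet. The cone on the other side is that of the term order comparing
`u`-degrees, then `ω`-degrees, then `≺`, and the edge towards it is directed outwards
(`exists_edge`). -/

open MvPolynomial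

variable {n : ℕ} {k : Type*} [Field k]

/-- The directed-edge relation on the graph of the Gröbner fan of `I`,
oriented by the term order `τ` as in Definition "reverse search property":
`C₁` and `C₂` are full-dimensional cones of the fan sharing a facet
`F = C₁ ∩ C₂`, and the edge points from `C₁` to `C₂` when `x^p ≺ x^q` for a
normal `q - p` of `F` which is negative on `C₁ \ F` and positive on `C₂ \ F`. -/
noncomputable def DirectedEdge (τ : TermOrder n) (I : Ideal (MvPolynomial (Fin n) k))
    (C₁ C₂ : Set (Fin n → ℝ)) : Prop :=
  C₁ ∈ GroebnerFan I ∧ C₂ ∈ GroebnerFan I ∧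
  (interior C₁).Nonempty ∧ (interior C₂).Nonempty ∧ C₁ ≠ C₂ ∧
  Module.finrank ℝ ↥(vectorSpan ℝ (C₁ ∩ C₂)) = n - 1 ∧
  ∃ p q : Fin n →₀ ℕ, τ.lt p q ∧
    (∀ u ∈ C₁ ∩ C₂, ∑ i, u i * ((q i : ℝ) - (p i : ℝ)) = 0) ∧
    (∀ u ∈ C₁ \ C₂, ∑ i, u i * ((q i : ℝ) - (p i : ℝ)) < 0) ∧
    (∀ u ∈ C₂ \ C₁, 0 < ∑ i, u i * ((q i : ℝ) - (p i : ℝ)))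

namespace GFan

/-! ### Term orders and monomial initial ideals -/

lemma lt_of_le_of_ne (τ : TermOrder n) {a b : Fin n →₀ ℕ} (h : a ≤ b) (hne : a ≠ b) :
    τ.lt a b := by
  obtain ⟨c, rfl⟩ := exists_add_of_le h
  have hc : c ≠ 0 := by rintro rfl; simp at hne
  have := τ.add_right 0 c a (τ.zero_lt c hc)
  simpa [add_comm] using this

lemma lt_asymm (τ : TermOrder n) {a b : Fin n →₀ ℕ} (h : τ.lt a b) : ¬ τ.lt b a :=
  fun hba => τ.irrefl _ (τ.trans _ _ _ h hba)

/-- A term order extends divisibility, which is a well-quasi-order by Dickson's lemma; hence it is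
a well-order. -/
lemma wf (τ : TermOrder n) : WellFounded τ.lt := by
  have : IsStrictOrder _ τ.lt := { irrefl := τ.irrefl, trans := τ.trans }
  rw [RelEmbedding.wellFounded_iff_isEmpty]
  refine ⟨fun f => ?_⟩
  obtain ⟨i, j, hij, hle⟩ :=
    wellQuasiOrdered_le (α := Fin n →₀ ℕ) (fun i => f i)
  have h : τ.lt (f j) (f i) := f.map_rel_iff.2 hij
  have hne : f i ≠ f j := fun e => τ.irrefl (f i) (by nth_rewrite 1 [e]; exact h)
  exact lt_asymm τ h (lt_of_le_of_ne τ hle hne)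

lemma exists_max (τ : TermOrder n) (S : Finset (Fin n →₀ ℕ)) (hS : S.Nonempty) :
    ∃ α ∈ S, ∀ β ∈ S, β ≠ α → τ.lt β α := by
  classical
  induction hS using Finset.Nonempty.cons_induction with
  | singleton a => exact ⟨a, by simp, by simp⟩
  | cons a s ha hs ih =>
    obtain ⟨α, hα, hmax⟩ := ih
    rcases τ.total a α (by rintro rfl; exact ha hα) with h | h
    · refine ⟨α, by simp [hα], fun β hβ hne => ?_⟩
      rcases Finset.mem_cons.1 hβ with rfl | hβ
      · exact h
      · exact hmax β hβ hne
    · refine ⟨a, by simp, fun β hβ hne => ?_⟩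
      rcases Finset.mem_cons.1 hβ with rfl | hβ
      · exact absurd rfl hne
      · by_cases e : β = α
        · rwa [e]
        · exact τ.trans _ _ _ (hmax β hβ e) h

lemma leadExp_spec (τ : TermOrder n) {f : MvPolynomial (Fin n) k} (hf : f ≠ 0) :
    τ.leadExp f ∈ f.support ∧ ∀ β ∈ f.support, β ≠ τ.leadExp f → τ.lt β (τ.leadExp f) := by
  have h : ∃ α, α ∈ f.support ∧ ∀ β ∈ f.support, β ≠ α → τ.lt β α := by
    obtain ⟨α, h1, h2⟩ := exists_max τ f.support (by simpa using hf)
    exact ⟨α, h1, h2⟩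
  have e : τ.leadExp f = h.choose := by
    unfold TermOrder.leadExp
    exact dif_pos h
  rw [e]
  exact h.choose_spec

lemma leadExp_eq (τ : TermOrder n) {f : MvPolynomial (Fin n) k} {α : Fin n →₀ ℕ}
    (hα : α ∈ f.support) (hmax : ∀ β ∈ f.support, β ≠ α → τ.lt β α) : τ.leadExp f = α := by
  have hf : f ≠ 0 := by rintro rfl; simp at hα
  obtain ⟨h1, h2⟩ := leadExp_spec τ hf
  by_contra hne
  exact lt_asymm τ (h2 α hα (Ne.symm hne)) (hmax _ h1 hne)

/-- The exponents of the monomials lying in the initial ideal of `I`, described as the leading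
exponents of nonzero elements of `I`; the remaining exponents are those of standard monomials. -/
def leadSet (τ : TermOrder n) (I : Ideal (MvPolynomial (Fin n) k)) : Set (Fin n →₀ ℕ) :=
  {m | ∃ f ∈ I, f ≠ 0 ∧ τ.leadExp f = m}

lemma leadSet_upper (τ : TermOrder n) (I : Ideal (MvPolynomial (Fin n) k))
    {a : Fin n →₀ ℕ} (ha : a ∈ leadSet τ I) (c : Fin n →₀ ℕ) : c + a ∈ leadSet τ I := by
  obtain ⟨f, hf, hf0, rfl⟩ := ha
  obtain ⟨h1, h2⟩ := leadExp_spec τ hf0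
  refine ⟨monomial c 1 * f, I.mul_mem_left _ hf, mul_ne_zero (by simp) hf0, ?_⟩
  apply leadExp_eq
  · rw [mem_support_iff, coeff_monomial_mul]; simpa using h1
  · intro β hβ hne
    rw [mem_support_iff, coeff_monomial_mul'] at hβ
    split_ifs at hβ with hc
    · obtain ⟨d, rfl⟩ := exists_add_of_le hc
      have hd : d ∈ f.support := by simpa using hβ
      have := τ.add_right _ _ c (h2 d hd (by rintro rfl; exact hne rfl))
      rwa [add_comm d c, add_comm _ c] at this
    · exact absurd rfl hβ

lemma mem_initialIdeal (τ : TermOrder n) (I : Ideal (MvPolynomial (Fin n) k))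
    (x : MvPolynomial (Fin n) k) :
    x ∈ τ.initialIdeal I ↔ ∀ α ∈ x.support, α ∈ leadSet τ I := by
  have e : τ.initialIdeal I
      = Ideal.span ((fun s => monomial s (1 : k)) '' (leadSet τ I)) := by
    unfold TermOrder.initialIdeal
    apply le_antisymm
    · rw [Ideal.span_le]
      rintro p ⟨f, hf, hf0, rfl⟩
      have : τ.initialTerm f = C (f.coeff (τ.leadExp f)) * monomial (τ.leadExp f) 1 := by
        rw [C_mul_monomial, mul_one]; rfl
      rw [this]
      exact Ideal.mul_mem_left _ _ (Ideal.subset_span ⟨_, ⟨f, hf, hf0, rfl⟩, rfl⟩)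
    · rw [Ideal.span_le]
      rintro p ⟨_, ⟨f, hf, hf0, rfl⟩, rfl⟩
      have hc : f.coeff (τ.leadExp f) ≠ 0 := by simpa using (leadExp_spec τ hf0).1
      have : (monomial (τ.leadExp f) (1 : k))
          = C (f.coeff (τ.leadExp f))⁻¹ * τ.initialTerm f := by
        rw [TermOrder.initialTerm, C_mul_monomial, inv_mul_cancel₀ hc]
      simp only [this]
      exact Ideal.mul_mem_left _ _ (Ideal.subset_span ⟨f, hf, hf0, rfl⟩)
  rw [e, mem_ideal_span_monomial_image]
  refine forall₂_congr fun α _ => ⟨?_, fun h => ⟨α, h, le_rfl⟩⟩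
  rintro ⟨s, hs, hle⟩
  obtain ⟨c, rfl⟩ := exists_add_of_le hle
  rw [add_comm]
  exact leadSet_upper τ I hs c

lemma monomial_mem_initialIdeal (τ : TermOrder n) (I : Ideal (MvPolynomial (Fin n) k))
    (m : Fin n →₀ ℕ) : monomial m (1 : k) ∈ τ.initialIdeal I ↔ m ∈ leadSet τ I := by
  classical
  rw [mem_initialIdeal, support_monomial]; simp

/-- Dickson's lemma: `A` is a finite set of exponents generating the initial ideal. -/
lemma exists_gens (τ : TermOrder n) (I : Ideal (MvPolynomial (Fin n) k)) :
    ∃ A : Finset (Fin n →₀ ℕ), (∀ a ∈ A, a ∈ leadSet τ I) ∧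
      ∀ m ∈ leadSet τ I, ∃ a ∈ A, ∃ c, m = c + a := by
  have hfin : {a | Minimal (· ∈ leadSet τ I) a}.Finite :=
    WellQuasiOrderedLE.finite_of_isAntichain (setOfPred_minimal_antichain _)
  refine ⟨hfin.toFinset, fun a ha => ?_, fun m hm => ?_⟩
  · exact ((hfin.mem_toFinset).1 ha).1
  · obtain ⟨a, hle, ha⟩ := exists_minimal_le_of_wellFoundedLT (· ∈ leadSet τ I) m hm
    obtain ⟨c, hc⟩ := exists_add_of_le hle
    exact ⟨a, hfin.mem_toFinset.2 ha, c, by rw [hc, add_comm]⟩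

lemma eq_zero_of_std {τ : TermOrder n} {I : Ideal (MvPolynomial (Fin n) k)}
    {f : MvPolynomial (Fin n) k} (hf : f ∈ I) (hs : ∀ α ∈ f.support, α ∉ leadSet τ I) : f = 0 := by
  by_contra h0
  exact hs _ (leadExp_spec τ h0).1 ⟨f, hf, h0, rfl⟩

/-! ### Normal forms of monomials -/

/-- Division algorithm, by induction on the well-order `τ`. -/
lemma exists_nf (τ : TermOrder n) (I : Ideal (MvPolynomial (Fin n) k)) (m : Fin n →₀ ℕ) :
    ∃ r : MvPolynomial (Fin n) k, (∀ α ∈ r.support, α ∉ leadSet τ I) ∧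
      (∀ α ∈ r.support, α = m ∨ τ.lt α m) ∧ monomial m 1 - r ∈ I := by
  classical
  induction m using (wf τ).induction with
  | _ m ih =>
  by_cases hm : m ∈ leadSet τ I
  swap
  · refine ⟨monomial m 1, ?_, ?_, by simp⟩ <;> simp [support_monomial, hm]
  obtain ⟨f, hf, hf0, rfl⟩ := hm
  obtain ⟨h1, h2⟩ := leadExp_spec τ hf0
  set m := τ.leadExp f with hmdef
  choose! r hr1 hr2 hr3 using ih
  have hc : f.coeff m ≠ 0 := by simpa using h1
  have hlt : ∀ β ∈ f.support.erase m, τ.lt β m := fun β hβ =>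
    h2 β (Finset.mem_of_mem_erase hβ) (Finset.ne_of_mem_erase hβ)
  have hsupp : ∀ α ∈ (C (-(f.coeff m)⁻¹) * ∑ β ∈ f.support.erase m, C (f.coeff β) * r β).support,
      ∃ β ∈ f.support.erase m, α ∈ (r β).support := by
    intro α hα
    by_contra hcon
    push Not at hcon
    apply mem_support_iff.1 hα
    rw [coeff_C_mul, coeff_sum, Finset.sum_eq_zero, mul_zero]
    intro β hβ
    rw [coeff_C_mul, notMem_support_iff.1 (hcon β hβ), mul_zero]
  refine ⟨C (-(f.coeff m)⁻¹) * ∑ β ∈ f.support.erase m, C (f.coeff β) * r β, ?_, ?_, ?_⟩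
  · intro α hα
    obtain ⟨β, hβ, hαβ⟩ := hsupp α hα
    exact hr1 β (hlt β hβ) α hαβ
  · intro α hα
    obtain ⟨β, hβ, hαβ⟩ := hsupp α hα
    right
    rcases hr2 β (hlt β hβ) α hαβ with rfl | h
    · exact hlt _ hβ
    · exact τ.trans _ _ _ h (hlt β hβ)
  · have hsum : f = C (f.coeff m) * monomial m 1
        + ∑ β ∈ f.support.erase m, C (f.coeff β) * monomial β 1 := by
      rw [Finset.add_sum_erase _ (fun β => C (f.coeff β) * monomial β (1 : k)) h1]
      conv_lhs => rw [as_sum f]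
      exact Finset.sum_congr rfl fun β _ => by rw [C_mul_monomial, mul_one]
    have hCC : (C ((f.coeff m)⁻¹) : MvPolynomial (Fin n) k) * C (f.coeff m) = 1 := by
      rw [← C_mul, inv_mul_cancel₀ hc, C_1]
    have key : monomial m 1 - C (-(f.coeff m)⁻¹) * ∑ β ∈ f.support.erase m, C (f.coeff β) * r β
        = C ((f.coeff m)⁻¹) * f - C ((f.coeff m)⁻¹) *
          ∑ β ∈ f.support.erase m, C (f.coeff β) * (monomial β 1 - r β) := by
      simp only [mul_sub, Finset.sum_sub_distrib, C_neg]
      linear_combination (-(monomial m (1 : k))) * hCC - C ((f.coeff m)⁻¹) * hsum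
    rw [key]
    refine I.sub_mem (I.mul_mem_left _ hf) (I.mul_mem_left _ (I.sum_mem fun β hβ => ?_))
    exact I.mul_mem_left _ (hr3 β (hlt β hβ))

/-- The normal form of the monomial `x^m`: the unique combination of standard monomials congruent
to `x^m` modulo `I`. For minimal generators `x^m` of the initial ideal, the elements
`x^m - nf τ I m` form the reduced Gröbner basis. -/
noncomputable def nf (τ : TermOrder n) (I : Ideal (MvPolynomial (Fin n) k)) (m : Fin n →₀ ℕ) :
    MvPolynomial (Fin n) k := (exists_nf τ I m).choose

lemma nf_std {τ : TermOrder n} {I : Ideal (MvPolynomial (Fin n) k)} {m α : Fin n →₀ ℕ}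
    (h : α ∈ (nf τ I m).support) : α ∉ leadSet τ I := (exists_nf τ I m).choose_spec.1 α h

lemma nf_le {τ : TermOrder n} {I : Ideal (MvPolynomial (Fin n) k)} {m α : Fin n →₀ ℕ}
    (h : α ∈ (nf τ I m).support) : α = m ∨ τ.lt α m := (exists_nf τ I m).choose_spec.2.1 α h

lemma sub_nf_mem (τ : TermOrder n) (I : Ideal (MvPolynomial (Fin n) k)) (m : Fin n →₀ ℕ) :
    monomial m 1 - nf τ I m ∈ I := (exists_nf τ I m).choose_spec.2.2

lemma mem_support_sub {f g : MvPolynomial (Fin n) k} {α : Fin n →₀ ℕ}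
    (h : α ∈ (f - g).support) : α ∈ f.support ∨ α ∈ g.support := by
  classical
  exact Finset.mem_union.1 (support_sub _ f g h)

lemma mem_support_sum {ι : Type*} {s : Finset ι} {c : ι → k} {r : ι → MvPolynomial (Fin n) k}
    {α : Fin n →₀ ℕ} (h : α ∈ (∑ i ∈ s, C (c i) * r i).support) :
    ∃ i ∈ s, α ∈ (r i).support := by
  by_contra hcon
  push Not at hcon
  apply mem_support_iff.1 h
  rw [coeff_sum, Finset.sum_eq_zero]
  intro β hβ
  rw [coeff_C_mul, notMem_support_iff.1 (hcon β hβ), mul_zero]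

lemma mem_support_monomial {m α : Fin n →₀ ℕ} (h : α ∈ (monomial m (1 : k)).support) : α = m := by
  classical
  rw [support_monomial] at h
  simpa using h

lemma nf_of_std {τ : TermOrder n} {I : Ideal (MvPolynomial (Fin n) k)} {m : Fin n →₀ ℕ}
    (h : m ∉ leadSet τ I) : nf τ I m = monomial m 1 := by
  refine (sub_eq_zero.1 (eq_zero_of_std (τ := τ) (sub_nf_mem τ I m) fun α hα => ?_)).symm
  rcases mem_support_sub hα with h' | h'
  · rwa [mem_support_monomial h']
  · exact nf_std h'

lemma as_sum_C (f : MvPolynomial (Fin n) k) :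
    f = ∑ m ∈ f.support, C (f.coeff m) * monomial m 1 := by
  conv_lhs => rw [as_sum f]
  exact Finset.sum_congr rfl fun β _ => by rw [C_mul_monomial, mul_one]

/-- The normal form, extended linearly, vanishes on `I`. -/
lemma sum_nf_eq_zero {τ : TermOrder n} {I : Ideal (MvPolynomial (Fin n) k)}
    {f : MvPolynomial (Fin n) k} (hf : f ∈ I) :
    ∑ m ∈ f.support, C (f.coeff m) * nf τ I m = 0 := by
  refine eq_zero_of_std (τ := τ) (I := I) ?_ fun α hα => ?_
  · have h : ∑ m ∈ f.support, C (f.coeff m) * nf τ I m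
        = f - ∑ m ∈ f.support, C (f.coeff m) * (monomial m 1 - nf τ I m) := by
      simp only [mul_sub, Finset.sum_sub_distrib]
      rw [← as_sum_C]; ring
    rw [h]
    exact I.sub_mem hf (I.sum_mem fun m _ => I.mul_mem_left _ (sub_nf_mem τ I m))
  · obtain ⟨m, _, h⟩ := mem_support_sum hα
    exact nf_std h

/-- An exponent vector, viewed in `ℝ^n`. -/
def vec (α : Fin n →₀ ℕ) : Fin n → ℝ := fun i => (α i : ℝ)

lemma vec_add (a b : Fin n →₀ ℕ) : vec (a + b) = vec a + vec b := by
  ext i; simp [vec]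

lemma vec_inj {a b : Fin n →₀ ℕ} (h : vec a = vec b) : a = b := by
  ext i; have := congrFun h i; simpa [vec] using this

/-- An additive condition on the differences `m - α`, for `α` an exponent of the normal form of
`x^m`, holds for all `m` once it holds for generators of the initial ideal: reduce `x^(c + a)`
first by the relation for `a`, and then reduce the smaller monomials `x^(c + β)`. -/
lemma propagate {τ : TermOrder n} {I : Ideal (MvPolynomial (Fin n) k)}
    {A : Finset (Fin n →₀ ℕ)} (hA : ∀ m ∈ leadSet τ I, ∃ a ∈ A, ∃ c, m = c + a)
    (hAE : ∀ a ∈ A, a ∈ leadSet τ I)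
    (Q : AddSubmonoid (Fin n → ℝ))
    (hQ : ∀ a ∈ A, ∀ α ∈ (nf τ I a).support, vec a - vec α ∈ Q) (m : Fin n →₀ ℕ) :
    ∀ α ∈ (nf τ I m).support, vec m - vec α ∈ Q := by
  induction m using (wf τ).induction with
  | _ m ih =>
  by_cases hm : m ∈ leadSet τ I
  swap
  · intro α hα
    rw [nf_of_std hm] at hα
    rw [mem_support_monomial hα, sub_self]
    exact Q.zero_mem
  obtain ⟨a, ha, c, rfl⟩ := hA m hm
  have hred : nf τ I (c + a)
      = ∑ β ∈ (nf τ I a).support, C ((nf τ I a).coeff β) * nf τ I (c + β) := by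
    rw [← sub_eq_zero]
    refine eq_zero_of_std (τ := τ) (I := I) ?_ fun α hα => ?_
    · have h : nf τ I (c + a)
            - ∑ β ∈ (nf τ I a).support, C ((nf τ I a).coeff β) * nf τ I (c + β)
          = monomial c 1 * (monomial a 1 - nf τ I a) - (monomial (c + a) 1 - nf τ I (c + a))
            + ∑ β ∈ (nf τ I a).support,
              C ((nf τ I a).coeff β) * (monomial (c + β) 1 - nf τ I (c + β)) := by
        have h2 : ∑ β ∈ (nf τ I a).support, C ((nf τ I a).coeff β) * monomial (c + β) (1 : k)
            = monomial c 1 * nf τ I a := by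
          conv_rhs => rw [as_sum_C (nf τ I a), Finset.mul_sum]
          refine Finset.sum_congr rfl fun β _ => ?_
          rw [mul_left_comm, monomial_mul, one_mul]
        have h3 : monomial (c + a) (1 : k) = monomial c 1 * monomial a 1 := by
          rw [monomial_mul, one_mul]
        simp only [mul_sub, Finset.sum_sub_distrib, h2, h3]
        ring
      rw [h]
      refine I.add_mem (I.sub_mem (I.mul_mem_left _ (sub_nf_mem τ I a)) (sub_nf_mem τ I _)) ?_
      exact I.sum_mem fun β _ => I.mul_mem_left _ (sub_nf_mem τ I _)
    · rcases mem_support_sub hα with h' | h'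
      · exact nf_std h'
      · obtain ⟨m, _, h⟩ := mem_support_sum h'
        exact nf_std h
  intro α hα
  rw [hred] at hα
  obtain ⟨β, hβ, hαβ⟩ := mem_support_sum hα
  have hlt : τ.lt β a := by
    rcases nf_le hβ with rfl | h
    · exact absurd (hAE _ ha) (nf_std hβ)
    · exact h
  have h1 := ih (c + β) (by simpa [add_comm] using τ.add_right _ _ c hlt) α hαβ
  have h2 := Q.add_mem (hQ a ha β hβ) h1
  have e : vec (c + a) - vec α = vec a - vec β + (vec (c + β) - vec α) := by
    rw [vec_add, vec_add]; abel
  rwa [e]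

/-! ### Initial forms and the ideals `in_u(I)` -/

lemma wdeg_eq (u : Fin n → ℝ) (α : Fin n →₀ ℕ) : wdeg u α = u ⬝ᵥ vec α := rfl

lemma wdeg_add (u : Fin n → ℝ) (a b : Fin n →₀ ℕ) : wdeg u (a + b) = wdeg u a + wdeg u b := by
  rw [wdeg_eq, vec_add, dotProduct_add]; rfl

/-- The sum of the terms of `f` of `u`-degree exactly `d`. -/
noncomputable def top (u : Fin n → ℝ) (d : ℝ) :
    MvPolynomial (Fin n) k →ₗ[k] MvPolynomial (Fin n) k := weightedHomogeneousComponent u d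

open Classical in
lemma coeff_top (u : Fin n → ℝ) (d : ℝ) (f : MvPolynomial (Fin n) k) (α : Fin n →₀ ℕ) :
    (top u d f).coeff α = if wdeg u α = d then f.coeff α else 0 := by
  have h : Finsupp.weight u α = wdeg u α := by
    rw [Finsupp.weight_apply, Finsupp.sum_fintype _ _ (by simp), wdeg]
    exact Finset.sum_congr rfl fun i _ => by rw [nsmul_eq_mul, mul_comm]
  unfold top
  rw [coeff_weightedHomogeneousComponent, h]

lemma mem_support_top {u : Fin n → ℝ} {d : ℝ} {f : MvPolynomial (Fin n) k} {α : Fin n →₀ ℕ} :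
    α ∈ (top u d f).support ↔ wdeg u α = d ∧ α ∈ f.support := by
  classical
  rw [mem_support_iff, mem_support_iff, coeff_top]
  split_ifs with h <;> simp [h]

lemma top_C_mul (u : Fin n → ℝ) (d : ℝ) (c : k) (f : MvPolynomial (Fin n) k) :
    top u d (C c * f) = C c * top u d f := by
  rw [C_mul', C_mul', map_smul]

lemma top_monomial_mul (u : Fin n → ℝ) (d : ℝ) (c : Fin n →₀ ℕ) (r : k)
    (f : MvPolynomial (Fin n) k) :
    top u d (monomial c r * f) = monomial c r * top u (d - wdeg u c) f := by
  classical
  ext γ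
  rw [coeff_top, coeff_monomial_mul', coeff_monomial_mul']
  by_cases hc : c ≤ γ
  · obtain ⟨e, rfl⟩ := exists_add_of_le hc
    simp only [if_pos hc, add_tsub_cancel_left, coeff_top, wdeg_add, eq_sub_iff_add_eq, add_comm,
      mul_ite, mul_zero]
  · simp [hc]

open Classical in
lemma coeff_initialForm (u : Fin n → ℝ) (f : MvPolynomial (Fin n) k) (γ : Fin n →₀ ℕ) :
    (initialForm u f).coeff γ
      = if ∀ β ∈ f.support, wdeg u β ≤ wdeg u γ then f.coeff γ else 0 := by
  unfold initialForm
  rw [coeff_sum]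
  simp only [coeff_monomial]
  rw [Finset.sum_ite_eq']
  simp only [Finset.mem_filter, mem_support_iff]
  by_cases h0 : f.coeff γ = 0
  · simp [h0]
  · simp [h0]

lemma mem_support_initialForm {u : Fin n → ℝ} {f : MvPolynomial (Fin n) k} {γ : Fin n →₀ ℕ} :
    γ ∈ (initialForm u f).support ↔ γ ∈ f.support ∧ ∀ β ∈ f.support, wdeg u β ≤ wdeg u γ := by
  classical
  rw [mem_support_iff, mem_support_iff, coeff_initialForm]
  split_ifs with h
  · simpa using fun _ => h
  · simp only [ne_eq, not_true_eq_false, false_iff]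
    exact fun h' => h h'.2

lemma initialForm_ne_zero (u : Fin n → ℝ) {f : MvPolynomial (Fin n) k} (hf : f ≠ 0) :
    initialForm u f ≠ 0 := by
  obtain ⟨γ, h1, h2⟩ := f.support.exists_max_image (wdeg u) (by simpa using hf)
  intro h
  have := mem_support_initialForm.2 ⟨h1, h2⟩
  simp [h] at this

lemma initialForm_mem {u : Fin n → ℝ} {I : Ideal (MvPolynomial (Fin n) k)}
    {f : MvPolynomial (Fin n) k} (hf : f ∈ I) : initialForm u f ∈ initialFormIdeal u I :=
  Ideal.subset_span ⟨f, hf, rfl⟩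

lemma top_eq_initialForm {u : Fin n → ℝ} {f : MvPolynomial (Fin n) k} {d : ℝ} {γ : Fin n →₀ ℕ}
    (hγ : γ ∈ f.support) (hd : wdeg u γ = d) (hle : ∀ β ∈ f.support, wdeg u β ≤ d) :
    top u d f = initialForm u f := by
  classical
  ext δ
  rw [coeff_top, coeff_initialForm]
  by_cases h0 : f.coeff δ = 0
  · simp [h0]
  have hδ : δ ∈ f.support := by simpa using h0
  congr 1
  refine propext ⟨fun h β hβ => h ▸ hle β hβ, fun h => le_antisymm (hle δ hδ) (hd ▸ h γ hγ)⟩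

lemma top_mem {u : Fin n → ℝ} {I : Ideal (MvPolynomial (Fin n) k)}
    {f : MvPolynomial (Fin n) k} (hf : f ∈ I) {d : ℝ} (hle : ∀ β ∈ f.support, wdeg u β ≤ d) :
    top u d f ∈ initialFormIdeal u I := by
  by_cases h : ∃ γ ∈ f.support, wdeg u γ = d
  · obtain ⟨γ, h1, h2⟩ := h
    rw [top_eq_initialForm h1 h2 hle]
    exact initialForm_mem hf
  · push Not at h
    have : top u d f = 0 := by
      rw [← support_eq_empty, Finset.eq_empty_iff_forall_notMem]
      intro γ hγ
      obtain ⟨h1, h2⟩ := mem_support_top.1 hγ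
      exact h γ h2 h1
    rw [this]; exact zero_mem _

/-- The homogeneous components of the elements of `in_u(I)` are themselves top components of
elements of `I`. -/
lemma exists_lift {u : Fin n → ℝ} {I : Ideal (MvPolynomial (Fin n) k)}
    {j : MvPolynomial (Fin n) k} (hj : j ∈ initialFormIdeal u I) (d : ℝ) :
    ∃ f ∈ I, (∀ β ∈ f.support, wdeg u β ≤ d) ∧ top u d f = top u d j := by
  classical
  unfold initialFormIdeal Ideal.span at hj
  induction hj using Submodule.span_induction generalizing d with
  | mem x hx =>
    obtain ⟨f, hf, rfl⟩ := hx
    by_cases h : ∃ γ ∈ (initialForm u f).support, wdeg u γ = d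
    · obtain ⟨γ, hγ, rfl⟩ := h
      obtain ⟨h1, h2⟩ := mem_support_initialForm.1 hγ
      refine ⟨f, hf, h2, ?_⟩
      rw [← top_eq_initialForm h1 rfl h2]
      ext δ
      simp only [coeff_top]
      split_ifs <;> rfl
    · push Not at h
      refine ⟨0, I.zero_mem, by simp, ?_⟩
      rw [map_zero, eq_comm, ← support_eq_empty, Finset.eq_empty_iff_forall_notMem]
      intro γ hγ
      obtain ⟨h1, h2⟩ := mem_support_top.1 hγ
      exact h γ h2 h1
  | zero => exact ⟨0, I.zero_mem, by simp, rfl⟩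
  | add x y _ _ hx hy =>
    obtain ⟨f, hf, hf1, hf2⟩ := hx d
    obtain ⟨g, hg, hg1, hg2⟩ := hy d
    refine ⟨f + g, I.add_mem hf hg, fun β hβ => ?_, by rw [map_add, map_add, hf2, hg2]⟩
    rcases Finset.mem_union.1 (support_add hβ) with h | h
    · exact hf1 β h
    · exact hg1 β h
  | smul a x _ hx =>
    induction a using MvPolynomial.induction_on' with
    | monomial c r =>
      obtain ⟨f, hf, hf1, hf2⟩ := hx (d - wdeg u c)
      refine ⟨monomial c r * f, I.mul_mem_left _ hf, fun β hβ => ?_, ?_⟩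
      · rw [mem_support_iff, coeff_monomial_mul'] at hβ
        split_ifs at hβ with hc
        · obtain ⟨e, rfl⟩ := exists_add_of_le hc
          rw [add_tsub_cancel_left] at hβ
          have := hf1 e (by rw [mem_support_iff]; exact right_ne_zero_of_mul hβ)
          rw [wdeg_add]; linarith
        · exact absurd rfl hβ
      · rw [smul_eq_mul, top_monomial_mul, top_monomial_mul, hf2]
    | add p q hp hq =>
      obtain ⟨f, hf, hf1, hf2⟩ := hp
      obtain ⟨g, hg, hg1, hg2⟩ := hq
      refine ⟨f + g, I.add_mem hf hg, fun β hβ => ?_, by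
        rw [add_smul, map_add, map_add, hf2, hg2]⟩
      rcases Finset.mem_union.1 (support_add hβ) with h | h
      · exact hf1 β h
      · exact hg1 β h

/-- The vectors `u` for which each leading monomial `x^m` has maximal `u`-degree among the terms of
`x^m - nf τ I m`; this is the polyhedral description of the closed cone `C_τ(I)`. -/
def cone (τ : TermOrder n) (I : Ideal (MvPolynomial (Fin n) k)) : Set (Fin n → ℝ) :=
  {u | ∀ m, ∀ α ∈ (nf τ I m).support, wdeg u α ≤ wdeg u m}

section

variable {τ : TermOrder n} {I : Ideal (MvPolynomial (Fin n) k)} {u : Fin n → ℝ}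

/-- For `u` in the closed cone of `τ`, standard monomials of `τ` stay independent modulo
`in_u(I)`. -/
lemma eq_zero_of_std_initialForm (hu : u ∈ cone τ I) {s : MvPolynomial (Fin n) k}
    (hs : s ∈ initialFormIdeal u I) (hstd : ∀ α ∈ s.support, α ∉ leadSet τ I) : s = 0 := by
  classical
  have key : ∀ d, top u d s = 0 := by
    intro d
    obtain ⟨f, hf, hle, heq⟩ := exists_lift hs d
    have h0 := congrArg (top u d) (sum_nf_eq_zero (τ := τ) hf)
    rw [map_sum, map_zero] at h0
    rw [← heq, ← h0]
    conv_lhs => rw [as_sum_C f, map_sum]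
    refine Finset.sum_congr rfl fun m hm => ?_
    rw [top_C_mul, top_C_mul]
    congr 1
    rcases (hle m hm).lt_or_eq with hlt | he
    · have h1 : ∀ g : MvPolynomial (Fin n) k, (∀ α ∈ g.support, wdeg u α ≤ wdeg u m) →
          top u d g = 0 := by
        intro g hg
        rw [← support_eq_empty, Finset.eq_empty_iff_forall_notMem]
        intro γ hγ
        obtain ⟨h1, h2⟩ := mem_support_top.1 hγ
        linarith [hg γ h2]
      rw [h1, h1 _ (hu m)]
      intro α hα
      rw [mem_support_monomial hα]
    · have hm' : m ∈ (top u d s).support := heq ▸ mem_support_top.2 ⟨he, hm⟩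
      rw [nf_of_std (hstd m (mem_support_top.1 hm').2)]
  ext γ
  have := congrArg (coeff γ) (key (wdeg u γ))
  rw [coeff_top, if_pos rfl] at this
  simpa using this

lemma sub_top_nf_mem (hu : u ∈ cone τ I) (m : Fin n →₀ ℕ) :
    monomial m 1 - top u (wdeg u m) (nf τ I m) ∈ initialFormIdeal u I := by
  classical
  have h := top_mem (u := u) (d := wdeg u m) (sub_nf_mem τ I m) (fun β hβ => by
    rcases mem_support_sub hβ with h | h
    · rw [mem_support_monomial h]
    · exact hu m β h)
  have e : top u (wdeg u m) (monomial m (1 : k)) = monomial m 1 := by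
    ext γ
    rw [coeff_top, coeff_monomial]
    split_ifs with h1 h2 h3 <;> try rfl
    subst h3; exact absurd rfl h1
  rwa [map_sub, e] at h

lemma eq_sum_of_mem (hu : u ∈ cone τ I) {f : MvPolynomial (Fin n) k}
    (hf : f ∈ initialFormIdeal u I) :
    f = ∑ m ∈ f.support, C (f.coeff m) * (monomial m 1 - top u (wdeg u m) (nf τ I m)) := by
  have h0 : ∑ m ∈ f.support, C (f.coeff m) * top u (wdeg u m) (nf τ I m) = 0 := by
    refine eq_zero_of_std_initialForm hu ?_ fun α hα => ?_
    · have h : ∑ m ∈ f.support, C (f.coeff m) * top u (wdeg u m) (nf τ I m)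
          = f - ∑ m ∈ f.support,
            C (f.coeff m) * (monomial m 1 - top u (wdeg u m) (nf τ I m)) := by
        simp only [mul_sub, Finset.sum_sub_distrib]
        rw [← as_sum_C]; ring
      rw [h]
      exact sub_mem hf (Ideal.sum_mem _ fun m _ => Ideal.mul_mem_left _ _ (sub_top_nf_mem hu m))
    · obtain ⟨m, _, h⟩ := mem_support_sum hα
      exact nf_std (mem_support_top.1 h).2
  simp only [mul_sub, Finset.sum_sub_distrib]
  rw [← as_sum_C, h0, sub_zero]

/-- Within the closed cone of `τ`, the ideal `in_u(I)` only depends on which of the defining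
inequalities of the cone are tight at `u`. -/
lemma initialFormIdeal_congr {w : Fin n → ℝ} (hu : u ∈ cone τ I) (hw : w ∈ cone τ I)
    (h : ∀ m, ∀ α ∈ (nf τ I m).support, wdeg u α = wdeg u m ↔ wdeg w α = wdeg w m) :
    initialFormIdeal u I = initialFormIdeal w I := by
  classical
  have e : ∀ m, top u (wdeg u m) (nf τ I m) = top w (wdeg w m) (nf τ I m) := by
    intro m
    ext γ
    rw [coeff_top, coeff_top]
    by_cases h0 : (nf τ I m).coeff γ = 0
    · simp [h0]
    · exact if_congr (h m γ (by simpa using h0)) rfl rfl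
  apply le_antisymm
  · intro f hf
    rw [eq_sum_of_mem hu hf]
    refine Ideal.sum_mem _ fun m _ => Ideal.mul_mem_left _ _ ?_
    rw [e]; exact sub_top_nf_mem hw m
  · intro f hf
    rw [eq_sum_of_mem hw hf]
    refine Ideal.sum_mem _ fun m _ => Ideal.mul_mem_left _ _ ?_
    rw [← e]; exact sub_top_nf_mem hu m

/-- If no nonzero element of `in_w(I)` is a combination of standard monomials of `τ`, then `w` lies
in the closed cone of `τ`. -/
lemma mem_cone_of_indep {w : Fin n → ℝ}
    (h : ∀ s ∈ initialFormIdeal w I, (∀ α ∈ s.support, α ∉ leadSet τ I) → s = 0) :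
    w ∈ cone τ I := by
  classical
  intro m α hα
  by_cases hm : m ∈ leadSet τ I
  swap
  · rw [nf_of_std hm] at hα
    rw [mem_support_monomial hα]
  have hαg : α ≠ m := by rintro rfl; exact nf_std hα hm
  have hmg : m ∈ (monomial m 1 - nf τ I m).support := by
    rw [mem_support_iff, coeff_sub, notMem_support_iff.1 (fun h => nf_std h hm)]
    simp
  have hαs : α ∈ (monomial m 1 - nf τ I m).support := by
    rw [mem_support_iff, coeff_sub, coeff_monomial, if_neg (Ne.symm hαg), zero_sub, neg_ne_zero]
    simpa using hα
  have hg : monomial m 1 - nf τ I m ≠ 0 := fun h => by simp [h] at hmg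
  by_contra hlt
  refine initialForm_ne_zero w hg (h _ (initialForm_mem (sub_nf_mem τ I m)) fun β hβ => ?_)
  obtain ⟨h1, h2⟩ := mem_support_initialForm.1 hβ
  rcases mem_support_sub h1 with h' | h'
  · rw [mem_support_monomial h'] at h2
    exact absurd (h2 α hαs) hlt
  · exact nf_std h'

lemma mem_cone_of_eq {w : Fin n → ℝ} (hu : u ∈ cone τ I)
    (h : initialFormIdeal w I = initialFormIdeal u I) : w ∈ cone τ I :=
  mem_cone_of_indep fun _ hs hstd => eq_zero_of_std_initialForm hu (h ▸ hs) hstd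

lemma tight_of_eq {w : Fin n → ℝ} (hu : u ∈ cone τ I)
    (h : initialFormIdeal w I = initialFormIdeal u I) {m α : Fin n →₀ ℕ}
    (hα : α ∈ (nf τ I m).support) (ht : wdeg u α = wdeg u m) : wdeg w α = wdeg w m := by
  have hw := mem_cone_of_eq hu h
  have e : top u (wdeg u m) (nf τ I m) = top w (wdeg w m) (nf τ I m) := by
    rw [← sub_eq_zero]
    refine eq_zero_of_std_initialForm hu ?_ fun β hβ => ?_
    · have := sub_mem (h ▸ sub_top_nf_mem hw m) (sub_top_nf_mem hu m)
      rwa [sub_sub_sub_cancel_left] at this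
    · rcases mem_support_sub hβ with h' | h' <;> exact nf_std (mem_support_top.1 h').2
  have : α ∈ (top w (wdeg w m) (nf τ I m)).support := e ▸ mem_support_top.2 ⟨ht, hα⟩
  exact (mem_support_top.1 this).1

/-- The vectors satisfying the strict inequalities are exactly those selecting the initial ideal
of `τ`. -/
lemma initialFormIdeal_eq_iff :
    initialFormIdeal u I = τ.initialIdeal I ↔
      ∀ m ∈ leadSet τ I, ∀ α ∈ (nf τ I m).support, wdeg u α < wdeg u m := by
  classical
  constructor
  · intro h m hm α hα
    have hmg : m ∈ (monomial m 1 - nf τ I m).support := by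
      rw [mem_support_iff, coeff_sub, notMem_support_iff.1 (fun h => nf_std h hm)]
      simp
    have hg : monomial m 1 - nf τ I m ≠ 0 := fun h => by simp [h] at hmg
    have hmem := h ▸ initialForm_mem (u := u) (sub_nf_mem τ I m)
    rw [mem_initialIdeal] at hmem
    have hsub : ∀ β ∈ (initialForm u (monomial m 1 - nf τ I m)).support, β = m := fun β hβ => by
      rcases mem_support_sub (mem_support_initialForm.1 hβ).1 with h' | h'
      · exact mem_support_monomial h'
      · exact absurd (hmem β hβ) (nf_std h')
    obtain ⟨β, hβ⟩ := Finset.nonempty_iff_ne_empty.2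
      (fun h => initialForm_ne_zero u hg (support_eq_empty.1 h))
    obtain rfl := hsub β hβ
    obtain ⟨-, hmax⟩ := mem_support_initialForm.1 hβ
    have hαg : α ≠ β := by rintro rfl; exact nf_std hα hm
    have hαs : α ∈ (monomial β 1 - nf τ I β).support := by
      rw [mem_support_iff, coeff_sub, coeff_monomial, if_neg (Ne.symm hαg), zero_sub, neg_ne_zero]
      simpa using hα
    by_contra hge
    push Not at hge
    exact hαg (hsub α (mem_support_initialForm.2
      ⟨hαs, fun γ hγ => (hmax γ hγ).trans hge⟩))
  · intro h
    have hu : u ∈ cone τ I := by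
      intro m α hα
      by_cases hm : m ∈ leadSet τ I
      · exact (h m hm α hα).le
      · rw [nf_of_std hm] at hα
        rw [mem_support_monomial hα]
    have hz : ∀ m ∈ leadSet τ I, top u (wdeg u m) (nf τ I m) = 0 := by
      intro m hm
      rw [← support_eq_empty, Finset.eq_empty_iff_forall_notMem]
      intro γ hγ
      obtain ⟨h1, h2⟩ := mem_support_top.1 hγ
      exact (h m hm γ h2).ne h1
    apply le_antisymm
    · intro f hf
      rw [eq_sum_of_mem hu hf, mem_initialIdeal]
      intro α hα
      obtain ⟨m, hm, hα'⟩ := mem_support_sum hα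
      by_cases hmE : m ∈ leadSet τ I
      · rw [hz m hmE, sub_zero] at hα'
        rwa [mem_support_monomial hα']
      · exfalso
        have e : top u (wdeg u m) (nf τ I m) = monomial m 1 := by
          rw [nf_of_std hmE]
          ext γ
          rw [coeff_top, coeff_monomial]
          split_ifs with h1 h2 h3 <;> try rfl
          subst h3; exact absurd rfl h1
        simp [e] at hα'
    · intro f hf
      rw [mem_initialIdeal] at hf
      rw [as_sum_C f]
      refine Ideal.sum_mem _ fun m hm => Ideal.mul_mem_left _ _ ?_
      have := sub_top_nf_mem hu m
      rwa [hz m (hf m hm), sub_zero] at this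

end

/-! ### Representing a term order by a weight vector on finitely many pairs -/

/-- Gordan's alternative over `ℚ`: finitely many vectors either lie in a common open half-space or
satisfy a nontrivial nonnegative linear relation. -/
lemma gordan {ι : Type} (s : Finset ι) : ∀ (V : Type) [AddCommGroup V] [Module ℚ V] (v : ι → V),
    (∃ f : V →ₗ[ℚ] ℚ, ∀ i ∈ s, 0 < f (v i)) ∨
    ∃ c : ι → ℚ, (∀ i ∈ s, 0 ≤ c i) ∧ (∃ i ∈ s, 0 < c i) ∧ ∑ i ∈ s, c i • v i = 0 := by
  classical
  induction s using Finset.induction_on with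
  | empty => intro V _ _ v; exact Or.inl ⟨0, by simp⟩
  | insert a s ha ih =>
    intro V _ _ v
    have hne : ∀ i ∈ s, i ≠ a := fun i hi e => ha (e ▸ hi)
    have hsum : ∀ (t : ℚ) (c : ι → ℚ),
        ∑ i ∈ insert a s, (if i = a then t else c i) • v i = t • v a + ∑ i ∈ s, c i • v i := by
      intro t c
      rw [Finset.sum_insert ha, if_pos rfl]
      congr 1
      exact Finset.sum_congr rfl fun i hi => by rw [if_neg (hne i hi)]
    have hrel : ∀ (t : ℚ) (c : ι → ℚ), 0 ≤ t → (∀ i ∈ s, 0 ≤ c i) →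
        (0 < t ∨ ∃ i ∈ s, 0 < c i) → t • v a + ∑ i ∈ s, c i • v i = 0 →
        ∃ c : ι → ℚ, (∀ i ∈ insert a s, 0 ≤ c i) ∧ (∃ i ∈ insert a s, 0 < c i) ∧
          ∑ i ∈ insert a s, c i • v i = 0 := by
      intro t c ht hc hpos h0
      refine ⟨fun i => if i = a then t else c i, fun i hi => ?_, ?_, by rw [hsum, h0]⟩
      · rcases Finset.mem_insert.1 hi with rfl | hi
        · simpa using ht
        · simpa [hne i hi] using hc i hi
      · rcases hpos with h | ⟨i, hi, h⟩
        · exact ⟨a, Finset.mem_insert_self _ _, by simpa using h⟩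
        · exact ⟨i, Finset.mem_insert_of_mem hi, by simpa [hne i hi] using h⟩
    by_cases hz : v a = 0
    · exact Or.inr (hrel 1 0 zero_le_one (by simp) (Or.inl one_pos) (by simp [hz]))
    -- Project along `v a`: a functional on the quotient is corrected by one that is positive on
    -- `v a`, and a relation in the quotient expresses a multiple of `v a` by the other vectors.
    rcases ih (V ⧸ (ℚ ∙ v a)) (fun i => Submodule.Quotient.mk (v i)) with ⟨f, hf⟩ | ⟨c, hc, hpos, h0⟩
    · obtain ⟨g, hg⟩ : ∃ g : V →ₗ[ℚ] ℚ, 0 < g (v a) := by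
        obtain ⟨g, hg⟩ : ∃ g : V →ₗ[ℚ] ℚ, g (v a) ≠ 0 := by
          by_contra hcon
          push Not at hcon
          exact hz ((Module.forall_dual_apply_eq_zero_iff ℚ (v a)).1 hcon)
        rcases lt_or_gt_of_ne hg with h | h
        · exact ⟨-g, by simpa using h⟩
        · exact ⟨g, h⟩
      set f' : V →ₗ[ℚ] ℚ := f ∘ₗ (ℚ ∙ v a).mkQ
      have hfa : f' (v a) = 0 := by
        have : (ℚ ∙ v a).mkQ (v a) = 0 := by
          rw [Submodule.mkQ_apply, Submodule.Quotient.mk_eq_zero]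
          exact Submodule.mem_span_singleton_self _
        simp [f', this]
      have hf' : ∀ i ∈ s, 0 < f' (v i) := hf
      obtain ⟨N, hN⟩ := Finset.exists_le (s.image fun i => -g (v i) / f' (v i) + 1)
      refine Or.inl ⟨N • f' + g, fun i hi => ?_⟩
      rcases Finset.mem_insert.1 hi with rfl | hi
      · simpa [hfa] using hg
      · have h1 := hN _ (Finset.mem_image_of_mem _ hi)
        have h2 := hf' i hi
        have h3 : -g (v i) / f' (v i) < N := by linarith
        rw [div_lt_iff₀ h2] at h3
        simp only [LinearMap.add_apply, LinearMap.smul_apply, smul_eq_mul]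
        linarith
    · have hmem : ∑ i ∈ s, c i • v i ∈ (ℚ ∙ v a) := by
        rw [← Submodule.Quotient.mk_eq_zero, ← h0, ← Submodule.mkQ_apply, map_sum]
        simp
      obtain ⟨t, ht⟩ := Submodule.mem_span_singleton.1 hmem
      rcases le_or_gt t 0 with hle | hgt
      · exact Or.inr (hrel (-t) c (by linarith) hc (Or.inr hpos) (by rw [← ht]; simp))
      · rcases ih V v with ⟨f, hf⟩ | ⟨c', hc', hpos', h0'⟩
        · refine Or.inl ⟨f, fun i hi => ?_⟩
          rcases Finset.mem_insert.1 hi with rfl | hi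
          · have h1 : t * f (v i) = ∑ j ∈ s, c j * f (v j) := by
              have := congrArg f ht
              simpa using this
            have h2 : 0 < ∑ j ∈ s, c j * f (v j) := by
              obtain ⟨j, hj, hcj⟩ := hpos
              exact Finset.sum_pos' (fun j hj => mul_nonneg (hc j hj) (hf j hj).le)
                ⟨j, hj, mul_pos hcj (hf j hj)⟩
            rw [← h1] at h2
            exact pos_of_mul_pos_right h2 hgt.le
          · exact hf i hi
        · exact Or.inr (hrel 0 c' le_rfl hc' (Or.inr hpos') (by simpa using h0'))

lemma lt_add_add (τ : TermOrder n) {a b c d : Fin n →₀ ℕ} (h : τ.lt a b) (h' : τ.lt c d) :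
    τ.lt (a + c) (b + d) := by
  refine τ.trans _ _ _ (τ.add_right _ _ c h) ?_
  rw [add_comm b c, add_comm b d]
  exact τ.add_right _ _ b h'

lemma lt_smul (τ : TermOrder n) {a b : Fin n →₀ ℕ} (h : τ.lt a b) {N : ℕ} (hN : 0 < N) :
    τ.lt (N • a) (N • b) := by
  induction N, hN using Nat.le_induction with
  | base => simpa using h
  | succ N _ ih => rw [succ_nsmul, succ_nsmul]; exact lt_add_add τ ih h

/-- A term order agrees on finitely many pairs with the order given by a positive weight vector. -/
lemma exists_weight (τ : TermOrder n) (P : Finset ((Fin n →₀ ℕ) × (Fin n →₀ ℕ)))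
    (hP : ∀ p ∈ P, τ.lt p.1 p.2) :
    ∃ ω : Fin n → ℝ, (∀ i, 0 < ω i) ∧ ∀ p ∈ P, wdeg ω p.1 < wdeg ω p.2 := by
  classical
  set P' := P ∪ Finset.univ.image
    (fun i : Fin n => ((0 : Fin n →₀ ℕ), (Finsupp.single i 1 : Fin n →₀ ℕ))) with hP'def
  have hP' : ∀ p ∈ P', τ.lt p.1 p.2 := by
    intro p hp
    rcases Finset.mem_union.1 hp with h | h
    · exact hP p h
    · obtain ⟨i, _, rfl⟩ := Finset.mem_image.1 h
      exact τ.zero_lt _ (by simp)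
  let q : (Fin n →₀ ℕ) → (Fin n → ℚ) := fun a i => (a i : ℚ)
  have q_add : ∀ a b, q (a + b) = q a + q b := fun a b => by ext i; simp [q]
  have q_smul : ∀ (N : ℕ) a, q (N • a) = (N : ℚ) • q a := fun N a => by ext i; simp [q]
  have q_inj : ∀ a b, q a = q b → a = b := fun a b h => by
    ext i; have := congrFun h i; simpa [q] using this
  rcases gordan P' (Fin n → ℚ) (fun p => q p.2 - q p.1) with ⟨f, hf⟩ | ⟨c, hc, ⟨p, hp, hpos⟩, h0⟩
  · have key : ∀ p ∈ P', wdeg (fun i => ((f (Pi.single i 1) : ℚ) : ℝ)) p.1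
        < wdeg (fun i => ((f (Pi.single i 1) : ℚ) : ℝ)) p.2 := by
      intro p hp
      have h := hf p hp
      rw [LinearMap.pi_apply_eq_sum_univ f] at h
      have h' : (0 : ℚ) < ∑ i, f (Pi.single i 1) * (p.2 i : ℚ) - ∑ i, f (Pi.single i 1) * (p.1 i : ℚ) := by
        rw [← Finset.sum_sub_distrib]
        refine lt_of_lt_of_eq h (Finset.sum_congr rfl fun i _ => ?_)
        simp only [q, Pi.sub_apply, smul_eq_mul]
        have : (fun j => if i = j then (1 : ℚ) else 0) = Pi.single i 1 := by
          ext j; simp [Pi.single_apply, eq_comm]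
        rw [this]; ring
      unfold wdeg
      have h'' := sub_pos.1 h'
      beta_reduce
      exact_mod_cast h''
    refine ⟨fun i => ((f (Pi.single i 1) : ℚ) : ℝ), fun i => ?_, fun p hp =>
      key p (Finset.mem_union_left _ hp)⟩
    have := key (0, Finsupp.single i 1)
      (Finset.mem_union_right _ (Finset.mem_image_of_mem _ (Finset.mem_univ i)))
    simpa [wdeg, Finsupp.single_apply] using this
  · -- The relation would produce `0` inside the cone of positive elements of the order.
    exfalso
    let Pos : (Fin n → ℚ) → Prop := fun v =>
      ∃ N : ℕ, 0 < N ∧ ∃ a b, τ.lt a b ∧ (N : ℚ) • v = q b - q a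
    have Pos_add : ∀ v w, Pos v → Pos w → Pos (v + w) := by
      rintro v w ⟨N, hN, a, b, hab, h⟩ ⟨N', hN', a', b', hab', h'⟩
      refine ⟨N * N', Nat.mul_pos hN hN', N' • a + N • a', N' • b + N • b',
        lt_add_add τ (lt_smul τ hab hN') (lt_smul τ hab' hN), ?_⟩
      rw [q_add, q_add, q_smul, q_smul, q_smul, q_smul]
      have e : ((N * N' : ℕ) : ℚ) • (v + w) = (N' : ℚ) • ((N : ℚ) • v) + (N : ℚ) • ((N' : ℚ) • w) := by
        push_cast; module
      rw [e, h, h']; module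
    have Pos_smul : ∀ (r : ℚ) v, 0 < r → Pos v → Pos (r • v) := by
      rintro r v hr ⟨N, hN, a, b, hab, h⟩
      have hs : 0 < r.num.toNat := by have := Rat.num_pos.2 hr; omega
      refine ⟨r.den * N, Nat.mul_pos r.den_pos hN, r.num.toNat • a, r.num.toNat • b,
        lt_smul τ hab hs, ?_⟩
      have hnum : ((r.num.toNat : ℕ) : ℚ) = r.den * r := by
        rw [mul_comm, Rat.mul_den_eq_num]
        have : ((r.num.toNat : ℕ) : ℤ) = r.num := Int.toNat_of_nonneg (Rat.num_pos.2 hr).le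
        exact_mod_cast congrArg (Int.cast : ℤ → ℚ) this
      rw [q_smul, q_smul, ← smul_sub, ← h, hnum]
      push_cast; module
    have Pos_zero : ¬ Pos 0 := by
      rintro ⟨N, _, a, b, hab, h⟩
      rw [smul_zero, eq_comm, sub_eq_zero] at h
      rw [q_inj _ _ h] at hab
      exact τ.irrefl _ hab
    have hpv : ∀ p ∈ P', Pos (q p.2 - q p.1) := fun p hp =>
      ⟨1, one_pos, p.1, p.2, hP' p hp, by simp⟩
    have hnn : ∀ S : Finset _, S ⊆ P' → (∑ i ∈ S, c i • (q i.2 - q i.1) = 0 ∨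
        Pos (∑ i ∈ S, c i • (q i.2 - q i.1))) := by
      intro S
      induction S using Finset.induction_on with
      | empty => intro _; left; simp
      | insert a s ha ih =>
        intro hS
        have haP := hS (Finset.mem_insert_self _ _)
        rw [Finset.sum_insert ha]
        have h1 := ih (fun x hx => hS (Finset.mem_insert_of_mem hx))
        rcases (hc a haP).eq_or_lt with e | hlt
        · rw [← e, zero_smul, zero_add]; exact h1
        · right
          rcases h1 with e | h1
          · rw [e, add_zero]; exact Pos_smul _ _ hlt (hpv a haP)
          · exact Pos_add _ _ (Pos_smul _ _ hlt (hpv a haP)) h1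
    rw [← Finset.add_sum_erase _ _ hp] at h0
    apply Pos_zero
    rw [← h0]
    rcases hnn (P'.erase p) (Finset.erase_subset _ _) with e | h1
    · rw [e, add_zero]; exact Pos_smul _ _ hpos (hpv p hp)
    · exact Pos_add _ _ (Pos_smul _ _ hpos (hpv p hp)) h1

/-- The term order comparing `v`-degrees first and breaking ties by `τ`. -/
def refine (τ : TermOrder n) (v : Fin n → ℝ) (hv : ∀ i, 0 ≤ v i) : TermOrder n where
  lt a b := wdeg v a < wdeg v b ∨ (wdeg v a = wdeg v b ∧ τ.lt a b)
  irrefl a h := by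
    rcases h with h | h
    · exact lt_irrefl _ h
    · exact τ.irrefl _ h.2
  trans a b c h h' := by
    rcases h with h | h <;> rcases h' with h' | h'
    · exact Or.inl (h.trans h')
    · exact Or.inl (h'.1 ▸ h)
    · exact Or.inl (h.1 ▸ h')
    · exact Or.inr ⟨h.1.trans h'.1, τ.trans _ _ _ h.2 h'.2⟩
  total a b hne := by
    rcases lt_trichotomy (wdeg v a) (wdeg v b) with h | h | h
    · exact Or.inl (Or.inl h)
    · rcases τ.total a b hne with h' | h'
      · exact Or.inl (Or.inr ⟨h, h'⟩)
      · exact Or.inr (Or.inr ⟨h.symm, h'⟩)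
    · exact Or.inr (Or.inl h)
  zero_lt a ha := by
    have h0 : wdeg v 0 = 0 := by simp [wdeg]
    have h1 : 0 ≤ wdeg v a := Finset.sum_nonneg fun i _ => mul_nonneg (hv i) (Nat.cast_nonneg _)
    rcases h1.lt_or_eq with h | h
    · exact Or.inl (by rwa [h0])
    · exact Or.inr ⟨by rw [h0, h], τ.zero_lt a ha⟩
  add_right a b c h := by
    rw [wdeg_add, wdeg_add]
    rcases h with h | h
    · exact Or.inl (by linarith)
    · exact Or.inr ⟨by rw [h.1], τ.add_right _ _ _ h.2⟩

lemma mem_cone_refine (τ : TermOrder n) (I : Ideal (MvPolynomial (Fin n) k)) (v : Fin n → ℝ)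
    (hv : ∀ i, 0 ≤ v i) : v ∈ cone (refine τ v hv) I := by
  intro m α hα
  rcases nf_le hα with rfl | h | h
  · exact le_rfl
  · exact h.le
  · exact h.1.le

/-! ### The full-dimensional cones of the Gröbner fan -/

lemma continuous_wdeg (α : Fin n →₀ ℕ) : Continuous fun u : Fin n → ℝ => wdeg u α := by
  unfold wdeg; fun_prop

lemma wdeg_add_smul (u w : Fin n → ℝ) (t : ℝ) (α : Fin n →₀ ℕ) :
    wdeg (u + t • w) α = wdeg u α + t * wdeg w α := by
  rw [wdeg_eq, add_dotProduct, smul_dotProduct]; rfl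

lemma wdeg_sub (u : Fin n → ℝ) (a b : Fin n →₀ ℕ) :
    u ⬝ᵥ (vec a - vec b) = wdeg u a - wdeg u b := by
  rw [dotProduct_sub]; rfl

lemma isClosed_cone (τ : TermOrder n) (I : Ideal (MvPolynomial (Fin n) k)) :
    IsClosed (cone τ I) := by
  have : cone τ I = ⋂ m, ⋂ α ∈ (nf τ I m).support, {u | wdeg u α ≤ wdeg u m} := by
    ext u; simp [cone]
  rw [this]
  exact isClosed_iInter fun m => isClosed_biInter fun α _ =>
    isClosed_le (continuous_wdeg α) (continuous_wdeg m)

/-- The open cone of `τ` is cut out by the finitely many strict inequalities coming from generators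
`A` of the initial ideal. -/
lemma cell_iff {τ : TermOrder n} {I : Ideal (MvPolynomial (Fin n) k)}
    {A : Finset (Fin n →₀ ℕ)} (hAE : ∀ a ∈ A, a ∈ leadSet τ I)
    (hA : ∀ m ∈ leadSet τ I, ∃ a ∈ A, ∃ c, m = c + a) {u : Fin n → ℝ} :
    initialFormIdeal u I = τ.initialIdeal I ↔
      ∀ a ∈ A, ∀ α ∈ (nf τ I a).support, wdeg u α < wdeg u a := by
  rw [initialFormIdeal_eq_iff]
  refine ⟨fun h a ha => h a (hAE a ha), fun h m hm α hα => ?_⟩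
  let Q : AddSubmonoid (Fin n → ℝ) :=
    { carrier := {x | x = 0 ∨ 0 < u ⬝ᵥ x}
      zero_mem' := Or.inl rfl
      add_mem' := by
        rintro x y (rfl | hx) (rfl | hy)
        · exact Or.inl (add_zero _)
        · exact Or.inr (by rwa [zero_add])
        · exact Or.inr (by rwa [add_zero])
        · exact Or.inr (by rw [dotProduct_add]; exact add_pos hx hy) }
  have hQ : ∀ a ∈ A, ∀ α ∈ (nf τ I a).support, vec a - vec α ∈ Q := fun a ha α hα =>
    Or.inr (by rw [wdeg_sub]; exact sub_pos.2 (h a ha α hα))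
  rcases propagate hA hAE Q hQ m α hα with h0 | hpos
  · exact absurd (vec_inj (sub_eq_zero.1 h0) ▸ hm) (nf_std hα)
  · rw [wdeg_sub] at hpos; exact sub_pos.1 hpos

lemma isOpen_cell (τ : TermOrder n) (I : Ideal (MvPolynomial (Fin n) k)) :
    IsOpen {u : Fin n → ℝ | initialFormIdeal u I = τ.initialIdeal I} := by
  obtain ⟨A, hAE, hA⟩ := exists_gens τ I
  have : {u : Fin n → ℝ | initialFormIdeal u I = τ.initialIdeal I}
      = ⋂ a ∈ A, ⋂ α ∈ (nf τ I a).support, {u | wdeg u α < wdeg u a} := by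
    ext u; simp only [Set.mem_ofPred_eq, Set.mem_iInter]; exact cell_iff hAE hA
  rw [this]
  exact isOpen_biInter_finset fun a _ => isOpen_biInter_finset fun α _ =>
    isOpen_lt (continuous_wdeg α) (continuous_wdeg a)

/-- The open cone of `τ` contains positive weights which also represent `τ` on prescribed pairs. -/
lemma exists_cell_weight (τ : TermOrder n) (I : Ideal (MvPolynomial (Fin n) k))
    (P : Finset ((Fin n →₀ ℕ) × (Fin n →₀ ℕ))) (hP : ∀ p ∈ P, τ.lt p.1 p.2) :
    ∃ ω : Fin n → ℝ, (∀ i, 0 < ω i) ∧ initialFormIdeal ω I = τ.initialIdeal I ∧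
      ∀ p ∈ P, wdeg ω p.1 < wdeg ω p.2 := by
  classical
  obtain ⟨A, hAE, hA⟩ := exists_gens τ I
  obtain ⟨ω, h1, h2⟩ := exists_weight τ
    (P ∪ A.biUnion fun a => (nf τ I a).support.image fun α => (α, a)) (by
      intro p hp
      rcases Finset.mem_union.1 hp with h | h
      · exact hP p h
      · simp only [Finset.mem_biUnion, Finset.mem_image] at h
        obtain ⟨a, ha, α, hα, rfl⟩ := h
        rcases nf_le hα with rfl | h
        · exact absurd (hAE _ ha) (nf_std hα)
        · exact h)
  refine ⟨ω, h1, (cell_iff hAE hA).2 fun a ha α hα => h2 (α, a) ?_,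
    fun p hp => h2 p (Finset.mem_union_left _ hp)⟩
  exact Finset.mem_union_right _ (Finset.mem_biUnion.2 ⟨a, ha, Finset.mem_image_of_mem _ hα⟩)

lemma cell_subset_cone {τ : TermOrder n} {I : Ideal (MvPolynomial (Fin n) k)} {u : Fin n → ℝ}
    (h : initialFormIdeal u I = τ.initialIdeal I) : u ∈ cone τ I :=
  mem_cone_of_indep fun s hs hstd => by
    rw [h, mem_initialIdeal] at hs
    rw [← support_eq_empty, Finset.eq_empty_iff_forall_notMem]
    exact fun α hα => hstd α hα (hs α hα)

lemma Cprec_eq_cone (τ : TermOrder n) (I : Ideal (MvPolynomial (Fin n) k)) :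
    Cprec τ I = cone τ I := by
  apply Set.Subset.antisymm
  · exact closure_minimal (fun u hu => cell_subset_cone hu) (isClosed_cone τ I)
  · intro u hu
    obtain ⟨ω, -, hω, -⟩ := exists_cell_weight τ I ∅ (by simp)
    have hlim : Filter.Tendsto (fun t : ℝ => u + t • ω) (nhdsWithin 0 (Set.Ioi 0)) (nhds u) := by
      have : Continuous fun t : ℝ => u + t • ω := by fun_prop
      simpa using (this.tendsto 0).mono_left nhdsWithin_le_nhds
    refine mem_closure_of_tendsto hlim ?_
    filter_upwards [self_mem_nhdsWithin] with t ht
    have ht : 0 < t := ht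
    change initialFormIdeal (u + t • ω) I = τ.initialIdeal I
    rw [initialFormIdeal_eq_iff] at hω ⊢
    intro m hm α hα
    rw [wdeg_add_smul, wdeg_add_smul]
    have h1 := hu m α hα
    have h2 := mul_lt_mul_of_pos_left (hω m hm α hα) ht
    linarith

/-- The open cone of one term order meets the closed cone of another one only if their initial
ideals agree. -/
lemma initialIdeal_eq_of_mem {τ σ : TermOrder n} {I : Ideal (MvPolynomial (Fin n) k)}
    {u : Fin n → ℝ} (h : initialFormIdeal u I = τ.initialIdeal I) (hu : u ∈ cone σ I) :
    τ.initialIdeal I = σ.initialIdeal I := by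
  rw [← Cprec_eq_cone] at hu
  obtain ⟨w, hw1, hw2⟩ := mem_closure_iff.1 hu _ (isOpen_cell τ I) h
  exact hw1.symm.trans hw2

lemma cone_congr {τ σ : TermOrder n} {I : Ideal (MvPolynomial (Fin n) k)}
    (h : τ.initialIdeal I = σ.initialIdeal I) : cone τ I = cone σ I := by
  rw [← Cprec_eq_cone, ← Cprec_eq_cone, Cprec, Cprec, h]

lemma leadSet_congr {τ σ : TermOrder n} {I : Ideal (MvPolynomial (Fin n) k)}
    (h : τ.initialIdeal I = σ.initialIdeal I) : leadSet τ I = leadSet σ I := by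
  ext m
  rw [← monomial_mem_initialIdeal, ← monomial_mem_initialIdeal, h]

lemma initialIdeal_congr {τ σ : TermOrder n} {I : Ideal (MvPolynomial (Fin n) k)}
    (h : leadSet τ I = leadSet σ I) : τ.initialIdeal I = σ.initialIdeal I := by
  ext x; rw [mem_initialIdeal, mem_initialIdeal, h]

lemma Cprec_mem_fan (τ : TermOrder n) (I : Ideal (MvPolynomial (Fin n) k)) :
    Cprec τ I ∈ GroebnerFan I ∧ (interior (Cprec τ I)).Nonempty := by
  obtain ⟨ω, hpos, hω, -⟩ := exists_cell_weight τ I ∅ (by simp)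
  have hmem : ω ∈ Cprec τ I := subset_closure hω
  refine ⟨⟨⟨ω, hmem⟩, ω, hpos, Or.inr ⟨0, ?_⟩⟩, ω, ?_⟩
  · have : Cv I ω = Cprec τ I := by unfold Cv Cprec; rw [hω]
    rw [this]; ext x; simp
  · exact interior_mono subset_closure ((isOpen_cell τ I).interior_eq.symm ▸ hω)

/-- A nonempty open set is not covered by finitely many hyperplanes through `0`. -/
lemma exists_generic {U : Set (Fin n → ℝ)} (hU : IsOpen U) (hne : U.Nonempty)
    (Y : Finset (Fin n → ℝ)) (hY : ∀ y ∈ Y, y ≠ 0) : ∃ ω ∈ U, ∀ y ∈ Y, ω ⬝ᵥ y ≠ 0 := by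
  classical
  induction Y using Finset.induction_on generalizing U with
  | empty => obtain ⟨ω, h⟩ := hne; exact ⟨ω, h, by simp⟩
  | insert y Y _ ih =>
    have hy : y ≠ 0 := hY y (Finset.mem_insert_self _ _)
    have hyy : y ⬝ᵥ y ≠ 0 := fun h => hy (dotProduct_self_eq_zero.1 h)
    have hcont : Continuous fun w : Fin n → ℝ => w ⬝ᵥ y := by unfold dotProduct; fun_prop
    have hV : IsOpen (U ∩ {w | w ⬝ᵥ y ≠ 0}) := hU.inter (isOpen_ne_fun hcont continuous_const)
    have hVne : (U ∩ {w | w ⬝ᵥ y ≠ 0}).Nonempty := by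
      obtain ⟨w, hw⟩ := hne
      have hc : Continuous fun t : ℝ => w + t • y := by fun_prop
      have h1 : ∀ᶠ t in nhdsWithin (0 : ℝ) {0}ᶜ, w + t • y ∈ U := by
        refine nhdsWithin_le_nhds ((hU.preimage hc).mem_nhds ?_)
        simpa using hw
      by_cases h0 : w ⬝ᵥ y = 0
      · obtain ⟨t, ht1, ht2⟩ := (h1.and self_mem_nhdsWithin).exists
        refine ⟨w + t • y, ht1, ?_⟩
        simp only [Set.mem_ofPred_eq, add_dotProduct, smul_dotProduct, h0, zero_add, smul_eq_mul]
        exact mul_ne_zero ht2 hyy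
      · exact ⟨w, hw, h0⟩
    obtain ⟨ω, hω, h⟩ := ih hV hVne fun z hz => hY z (Finset.mem_insert_of_mem hz)
    refine ⟨ω, hω.1, fun z hz => ?_⟩
    rcases Finset.mem_insert.1 hz with rfl | hz
    · exact hω.2
    · exact h z hz

/-- Every full-dimensional cone of the Gröbner fan is the cone of some term order. -/
lemma exists_termOrder (τ : TermOrder n) {I : Ideal (MvPolynomial (Fin n) k)}
    {C : Set (Fin n → ℝ)} (hC : C ∈ GroebnerFan I) (hfull : (interior C).Nonempty) :
    ∃ σ : TermOrder n, C = cone σ I := by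
  classical
  obtain ⟨hne, v, hv, hface⟩ := hC
  have hCv : C = Cv I v := by
    rcases hface with rfl | ⟨w, rfl⟩
    · exact absurd hne Set.not_nonempty_empty
    -- A linear functional which is constant on a set with interior points is zero.
    obtain ⟨z, hz⟩ := hfull
    have hc : Continuous fun t : ℝ => z + t • w := by fun_prop
    have h1 : ∀ᶠ t in nhdsWithin (0 : ℝ) (Set.Ioi 0), z + t • w ∈
        interior {x | x ∈ Cv I v ∧ ∀ y ∈ Cv I v, ∑ i, w i * y i ≤ ∑ i, w i * x i} := by
      refine nhdsWithin_le_nhds ((isOpen_interior.preimage hc).mem_nhds ?_)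
      simpa using hz
    obtain ⟨t, ht1, ht2⟩ := (h1.and self_mem_nhdsWithin).exists
    have ht2 : 0 < t := ht2
    have h2 : w ⬝ᵥ (z + t • w) ≤ w ⬝ᵥ z := (interior_subset hz).2 _ (interior_subset ht1).1
    rw [dotProduct_add, dotProduct_smul, smul_eq_mul] at h2
    have h3 : 0 ≤ w ⬝ᵥ w := Finset.sum_nonneg fun i _ => mul_self_nonneg _
    have h4 : w ⬝ᵥ w = 0 := by nlinarith
    have h5 : w = 0 := dotProduct_self_eq_zero.1 h4
    subst h5
    ext x; simp
  refine ⟨refine τ v (fun i => (hv i).le), ?_⟩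
  set σ := refine τ v (fun i => (hv i).le)
  have hvσ : v ∈ cone σ I := mem_cone_refine τ I v _
  obtain ⟨A, hAE, hA⟩ := exists_gens σ I
  -- A generic weight in the class of `v` selects a monomial ideal.
  obtain ⟨ω, hω, hgen⟩ := exists_generic isOpen_interior hfull
    (A.biUnion fun a => (nf σ I a).support.image fun α => vec a - vec α) (by
      intro y hy
      simp only [Finset.mem_biUnion, Finset.mem_image] at hy
      obtain ⟨a, ha, α, hα, rfl⟩ := hy
      intro h0
      exact nf_std hα (vec_inj (sub_eq_zero.1 h0) ▸ hAE a ha))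
  have hcont : ∀ y : Fin n → ℝ, Continuous fun w : Fin n → ℝ => w ⬝ᵥ y := fun y => by
    unfold dotProduct; fun_prop
  have hVopen : IsOpen (⋂ y ∈ (A.biUnion fun a => (nf σ I a).support.image
      fun α => vec a - vec α), {w : Fin n → ℝ | w ⬝ᵥ y ≠ 0}) :=
    isOpen_biInter_finset fun y _ => isOpen_ne_fun (hcont y) continuous_const
  have hωC : ω ∈ closure {u : Fin n → ℝ | initialFormIdeal u I = initialFormIdeal v I} := by
    have := interior_subset hω
    rwa [hCv] at this
  obtain ⟨u, hu1, hu2⟩ := mem_closure_iff.1 hωC _ hVopen (Set.mem_iInter₂.2 hgen)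
  have hucone : u ∈ cone σ I := mem_cone_of_eq hvσ hu2
  have hucell : initialFormIdeal u I = σ.initialIdeal I := by
    rw [cell_iff hAE hA]
    intro a ha α hα
    refine (hucone a α hα).lt_of_ne fun h => ?_
    refine Set.mem_iInter₂.1 hu1 (vec a - vec α) (Finset.mem_biUnion.2 ⟨a, ha, Finset.mem_image_of_mem _ hα⟩) ?_
    rw [wdeg_sub, h, sub_self]
  rw [hCv, ← Cprec_eq_cone, Cv, Cprec, ← hucell, ← hu2]

/-! ### Counting standard monomials across an edge -/

/-- The exponents of the standard monomials of `τ` of `ω`-degree at most `t`. -/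
def stdSet (τ : TermOrder n) (I : Ideal (MvPolynomial (Fin n) k)) (ω : Fin n → ℝ) (t : ℝ) :
    Set (Fin n →₀ ℕ) := {m | m ∉ leadSet τ I ∧ wdeg ω m ≤ t}

/-- The counting function of standard monomials by `ω`-degree. -/
noncomputable def stdCount (τ : TermOrder n) (I : Ideal (MvPolynomial (Fin n) k))
    (ω : Fin n → ℝ) (t : ℝ) : ℕ := (stdSet τ I ω t).ncard

lemma finite_stdSet (τ : TermOrder n) (I : Ideal (MvPolynomial (Fin n) k)) {ω : Fin n → ℝ}
    (hω : ∀ i, 0 < ω i) (t : ℝ) : (stdSet τ I ω t).Finite := by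
  classical
  refine (Set.finite_Iic (Finsupp.equivFunOnFinite.symm fun i => ⌈t / ω i⌉₊)).subset ?_
  intro m hm i
  have h1 : ω i * (m i : ℝ) ≤ t :=
    (Finset.single_le_sum (f := fun i => ω i * (m i : ℝ))
      (fun i _ => mul_nonneg (hω i).le (Nat.cast_nonneg _)) (Finset.mem_univ i)).trans hm.2
  have h2 : (m i : ℝ) ≤ t / ω i := by rw [le_div_iff₀ (hω i)]; linarith
  exact_mod_cast h2.trans (Nat.le_ceil _)

/-- Reduction modulo an ideal, as a `k`-linear map. -/
noncomputable def red (J : Ideal (MvPolynomial (Fin n) k)) :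
    MvPolynomial (Fin n) k →ₗ[k] MvPolynomial (Fin n) k ⧸ J := (Ideal.Quotient.mkₐ k J).toLinearMap

lemma red_eq_iff {J : Ideal (MvPolynomial (Fin n) k)} {f g : MvPolynomial (Fin n) k} :
    red J f = red J g ↔ f - g ∈ J := Ideal.Quotient.mk_eq_mk_iff_sub_mem f g

section

variable {τ : TermOrder n} {I : Ideal (MvPolynomial (Fin n) k)} {u ω : Fin n → ℝ}

lemma finrank_map_red (hu : u ∈ cone τ I) (t : ℝ) :
    Module.finrank k ((restrictSupport k (stdSet τ I ω t)).map (red (initialFormIdeal u I)))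
      = stdCount τ I ω t := by
  have hinj : Function.Injective ((red (initialFormIdeal u I)).domRestrict
      (restrictSupport k (stdSet τ I ω t))) := by
    intro f g h
    have h' : f.1 - g.1 ∈ initialFormIdeal u I := red_eq_iff.1 h
    refine Subtype.ext (sub_eq_zero.1 (eq_zero_of_std_initialForm hu h' fun α hα => ?_))
    rcases mem_support_sub hα with h | h
    · exact ((mem_restrictSupport_iff k).1 f.2 h).1
    · exact ((mem_restrictSupport_iff k).1 g.2 h).1
  rw [← LinearMap.range_domRestrict, LinearMap.finrank_range_of_inj hinj,
    Module.finrank_eq_nat_card_basis (basisRestrictSupport k _)]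
  rfl

end

/-- If passing from `τ₁` to `τ₂` across the wall through `u` reduces `ω`-degrees, then `τ₂` has
strictly more standard monomials of small `ω`-degree. Both sets of standard monomials are bases of
the quotient by `in_u(I)`, and rewriting `τ₁`-standard monomials by `τ₂`-standard ones does not
increase `ω`-degrees. -/
lemma stdCount_lt {τ₁ τ₂ : TermOrder n} {I : Ideal (MvPolynomial (Fin n) k)} {u ω : Fin n → ℝ}
    (hω : ∀ i, 0 < ω i) (hu1 : u ∈ cone τ₁ I) (hu2 : u ∈ cone τ₂ I)
    (h2 : ∀ m, ∀ α ∈ (nf τ₂ I m).support, wdeg u α = wdeg u m → wdeg ω α ≤ wdeg ω m)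
    (h1 : ∀ m ∈ leadSet τ₁ I, ∀ α ∈ (nf τ₁ I m).support, wdeg u α = wdeg u m →
      wdeg ω m < wdeg ω α)
    (hne : leadSet τ₁ I ≠ leadSet τ₂ I) :
    stdCount τ₁ I ω < stdCount τ₂ I ω := by
  classical
  set J := initialFormIdeal u I with hJ
  let S : TermOrder n → ℝ → Submodule k (MvPolynomial (Fin n) k ⧸ J) := fun τ t =>
    (restrictSupport k (stdSet τ I ω t)).map (red J)
  have hS : ∀ (τ : TermOrder n) t, u ∈ cone τ I → Module.finrank k (S τ t) = stdCount τ I ω t :=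
    fun τ t h => finrank_map_red h t
  have hfin : ∀ (τ : TermOrder n) t, FiniteDimensional k (S τ t) := by
    intro τ t
    have : Finite (stdSet τ I ω t) := finite_stdSet τ I hω t
    have := Module.Finite.of_basis (basisRestrictSupport k (stdSet τ I ω t))
    infer_instance
  have hle : ∀ t, S τ₁ t ≤ S τ₂ t := by
    intro t
    simp only [S]
    rw [restrictSupport_eq_span k (stdSet τ₁ I ω t), Submodule.map_span_le]
    rintro _ ⟨m, hm, rfl⟩
    refine ⟨top u (wdeg u m) (nf τ₂ I m), ?_, ?_⟩
    · refine (mem_restrictSupport_iff k).2 fun α hα => ?_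
      obtain ⟨h3, h4⟩ := mem_support_top.1 hα
      exact ⟨nf_std h4, (h2 m α h4 h3).trans hm.2⟩
    · exact (red_eq_iff.2 (sub_top_nf_mem hu2 m)).symm
  have hcle : stdCount τ₁ I ω ≤ stdCount τ₂ I ω := fun t => by
    have := hfin τ₂ t
    rw [← hS τ₁ t hu1, ← hS τ₂ t hu2]
    exact Submodule.finrank_mono (hle t)
  refine _root_.lt_of_le_of_ne hcle fun heq => ?_
  obtain ⟨m, hm1, hm2⟩ : ∃ m, m ∈ leadSet τ₁ I ∧ m ∉ leadSet τ₂ I := by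
    by_contra hcon
    push Not at hcon
    apply hne
    ext m
    refine ⟨hcon m, fun hm => by_contra fun hm' => ?_⟩
    have hsub : stdSet τ₂ I ω (wdeg ω m) ⊆ stdSet τ₁ I ω (wdeg ω m) :=
      fun β hβ => ⟨fun h => hβ.1 (hcon β h), hβ.2⟩
    have := Set.eq_of_subset_of_ncard_le hsub (congrFun heq (wdeg ω m)).le
      (finite_stdSet τ₁ I hω _)
    have hmem : m ∈ stdSet τ₂ I ω (wdeg ω m) := this ▸ ⟨hm', le_rfl⟩
    exact hmem.1 hm
  -- `x^m` is congruent both to `τ₁`-standard terms of `ω`-degree above that of `m`, and to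
  -- `τ₁`-standard terms of `ω`-degree at most that of `m`; hence it is zero.
  have hSeq : S τ₁ (wdeg ω m) = S τ₂ (wdeg ω m) := by
    have := hfin τ₂ (wdeg ω m)
    refine Submodule.eq_of_le_of_finrank_le (hle _) ?_
    rw [hS _ _ hu1, hS _ _ hu2, heq]
  have hmem : red J (monomial m 1) ∈ S τ₂ (wdeg ω m) :=
    Submodule.mem_map_of_mem ((monomial_mem_restrictSupport k).2 (Or.inl ⟨hm2, le_rfl⟩))
  rw [← hSeq] at hmem
  obtain ⟨s', hs', hs'eq⟩ := hmem
  have hs's := (mem_restrictSupport_iff k).1 hs'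
  have hJ' := sub_top_nf_mem hu1 m
  set s := top u (wdeg u m) (nf τ₁ I m) with hs
  have hss : s' = s := by
    refine sub_eq_zero.1 (eq_zero_of_std_initialForm hu1 ?_ fun α hα => ?_)
    · have := add_mem (red_eq_iff.1 hs'eq) hJ'
      rwa [sub_add_sub_cancel] at this
    · rcases mem_support_sub hα with h | h
      · exact (hs's h).1
      · exact nf_std (mem_support_top.1 h).2
  have hs0 : s = 0 := by
    rw [← support_eq_empty, Finset.eq_empty_iff_forall_notMem]
    intro α hα
    obtain ⟨h3, h4⟩ := mem_support_top.1 hα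
    have h5 := (hs's (hss.symm ▸ hα)).2
    exact absurd (h1 m hm1 α h4 h3) (not_lt.2 h5)
  rw [hs0, sub_zero] at hJ'
  have := eq_zero_of_std_initialForm hu2 hJ' fun α hα => by
    rwa [mem_support_monomial hα]
  simp at this

lemma exists_smul_eq {x y : Fin n → ℝ} (hy : y ≠ 0)
    (h : ∀ v : Fin n → ℝ, v ⬝ᵥ y = 0 → v ⬝ᵥ x = 0) : ∃ c : ℝ, x = c • y := by
  have hyy : y ⬝ᵥ y ≠ 0 := fun h => hy (dotProduct_self_eq_zero.1 h)
  refine ⟨x ⬝ᵥ y / y ⬝ᵥ y, ?_⟩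
  have h1 : (x - (x ⬝ᵥ y / y ⬝ᵥ y) • y) ⬝ᵥ y = 0 := by
    rw [sub_dotProduct, smul_dotProduct, smul_eq_mul, div_mul_cancel₀ _ hyy, sub_self]
  rw [← sub_eq_zero, ← dotProduct_self_eq_zero, dotProduct_sub, h _ h1, dotProduct_smul, h1]
  simp

/-- The functional `h ↦ h ⬝ᵥ y`, whose kernel is the hyperplane orthogonal to `y`. -/
def dotL (y : Fin n → ℝ) : Module.Dual ℝ (Fin n → ℝ) where
  toFun v := v ⬝ᵥ y
  map_add' a b := add_dotProduct a b y
  map_smul' c a := by simp [smul_dotProduct]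

lemma finrank_ker_dotL {y : Fin n → ℝ} (hy : y ≠ 0) :
    Module.finrank ℝ (LinearMap.ker (dotL y)) = n - 1 := by
  have h0 : dotL y ≠ 0 := fun h => hy (dotProduct_self_eq_zero.1 (LinearMap.congr_fun h y))
  have := Module.Dual.finrank_ker_add_one_of_ne_zero h0
  rw [Module.finrank_fin_fun] at this
  omega

lemma mem_span_of_finrank {F : Set (Fin n → ℝ)} {y : Fin n → ℝ} (hy : y ≠ 0)
    (hF : ∀ u ∈ F, u ⬝ᵥ y = 0) (hrank : Module.finrank ℝ (vectorSpan ℝ F) = n - 1)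
    {v : Fin n → ℝ} (hv : v ⬝ᵥ y = 0) : v ∈ Submodule.span ℝ F := by
  have h1 : vectorSpan ℝ F ≤ Submodule.span ℝ F := by
    refine Submodule.span_le.2 ?_
    rintro _ ⟨a, ha, b, hb, rfl⟩
    exact sub_mem (Submodule.subset_span ha) (Submodule.subset_span hb)
  have h2 : Submodule.span ℝ F ≤ LinearMap.ker (dotL y) := Submodule.span_le.2 hF
  have h3 := Submodule.eq_of_le_of_finrank_le (h1.trans h2) (by
    rw [hrank, finrank_ker_dotL hy])
  exact h1 (h3 ▸ (show v ∈ LinearMap.ker (dotL y) from hv))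

/-- A relative interior point of a convex cone `F`: a functional that is nonnegative on `F` and
vanishes at it vanishes on the span of `F`. -/
lemma exists_relint {F : Set (Fin n → ℝ)} (h0 : (0 : Fin n → ℝ) ∈ F)
    (hadd : ∀ a ∈ F, ∀ b ∈ F, a + b ∈ F) :
    ∃ u ∈ F, ∀ x : Fin n → ℝ, (∀ t ∈ F, 0 ≤ t ⬝ᵥ x) → u ⬝ᵥ x = 0 →
      ∀ v ∈ Submodule.span ℝ F, v ⬝ᵥ x = 0 := by
  classical
  obtain ⟨T, hTF, hT⟩ := (Submodule.fg_span_iff_fg_span_finset_subset F).1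
    (IsNoetherian.noetherian (Submodule.span ℝ F))
  refine ⟨∑ t ∈ T, t, ?_, fun x hx hux => ?_⟩
  · exact Finset.sum_induction _ (· ∈ F) (fun a b ha hb => hadd a ha b hb) h0 fun t ht => hTF ht
  · rw [sum_dotProduct] at hux
    have h := (Finset.sum_eq_zero_iff_of_nonneg fun t ht => hx t (hTF ht)).1 hux
    have : Submodule.span ℝ F ≤ LinearMap.ker (dotL x) := by
      rw [hT]; exact Submodule.span_le.2 h
    exact fun v hv => this hv

lemma zero_mem_cone (τ : TermOrder n) (I : Ideal (MvPolynomial (Fin n) k)) :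
    (0 : Fin n → ℝ) ∈ cone τ I := fun m α _ => by simp [wdeg_eq]

lemma add_mem_cone {τ : TermOrder n} {I : Ideal (MvPolynomial (Fin n) k)} {u w : Fin n → ℝ}
    (hu : u ∈ cone τ I) (hw : w ∈ cone τ I) : u + w ∈ cone τ I := fun m α hα => by
  have := add_le_add (hu m α hα) (hw m α hα)
  simpa [wdeg_eq, add_dotProduct] using this

lemma smul_mem_cone {τ : TermOrder n} {I : Ideal (MvPolynomial (Fin n) k)} {u : Fin n → ℝ}
    (hu : u ∈ cone τ I) {t : ℝ} (ht : 0 ≤ t) : t • u ∈ cone τ I := fun m α hα => by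
  have := mul_le_mul_of_nonneg_left (hu m α hα) ht
  simpa [wdeg_eq, smul_dotProduct] using this

lemma sum_eq (u : Fin n → ℝ) (p q : Fin n →₀ ℕ) :
    ∑ i, u i * ((q i : ℝ) - (p i : ℝ)) = u ⬝ᵥ (vec q - vec p) := rfl

/-- Along a directed edge the counting function of standard monomials strictly increases. -/
lemma stdCount_lt_of_edge {τ τ₁ τ₂ : TermOrder n} {I : Ideal (MvPolynomial (Fin n) k)}
    (h : DirectedEdge τ I (cone τ₁ I) (cone τ₂ I)) :
    ∃ p q : Fin n →₀ ℕ, τ.lt p q ∧ ∀ ω : Fin n → ℝ, (∀ i, 0 < ω i) → wdeg ω p < wdeg ω q →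
      stdCount τ₁ I ω < stdCount τ₂ I ω := by
  obtain ⟨-, -, -, -, hne, hrank, p, q, hpq, he0, he1, he2⟩ := h
  simp only [sum_eq] at he0 he1 he2
  refine ⟨p, q, hpq, fun ω hω hωpq => ?_⟩
  have hne' : τ₁.initialIdeal I ≠ τ₂.initialIdeal I := fun h => hne (cone_congr h)
  have hy : vec q - vec p ≠ 0 := fun h0 => τ.irrefl q (by
    rw [← vec_inj (sub_eq_zero.1 h0)] at hpq; exact hpq)
  set y := vec q - vec p with hydef
  have hωy : 0 < ω ⬝ᵥ y := by rw [hydef, wdeg_sub]; linarith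
  obtain ⟨v₁, -, hv₁, -⟩ := exists_cell_weight τ₁ I ∅ (by simp)
  obtain ⟨v₂, -, hv₂, -⟩ := exists_cell_weight τ₂ I ∅ (by simp)
  have hv₁y := he1 v₁ ⟨cell_subset_cone hv₁, fun h => hne' (initialIdeal_eq_of_mem hv₁ h)⟩
  have hv₂y := he2 v₂ ⟨cell_subset_cone hv₂, fun h => hne' (initialIdeal_eq_of_mem hv₂ h).symm⟩
  obtain ⟨u, hu, hrel⟩ := exists_relint (F := cone τ₁ I ∩ cone τ₂ I)
    ⟨zero_mem_cone _ _, zero_mem_cone _ _⟩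
    (fun a ha b hb => ⟨add_mem_cone ha.1 hb.1, add_mem_cone ha.2 hb.2⟩)
  have key : ∀ σ : TermOrder n, (∀ t ∈ cone τ₁ I ∩ cone τ₂ I, t ∈ cone σ I) →
      ∀ m, ∀ α ∈ (nf σ I m).support, wdeg u α = wdeg u m → ∃ c : ℝ, vec m - vec α = c • y := by
    intro σ hσ m α hα ht
    refine exists_smul_eq hy fun v hv => hrel _ (fun t ht => ?_) ?_ v
      (mem_span_of_finrank hy he0 hrank hv)
    · rw [wdeg_sub]; exact sub_nonneg.2 (hσ t ht m α hα)
    · rw [wdeg_sub, ht, sub_self]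
  refine stdCount_lt hω hu.1 hu.2 ?_ ?_ fun h => hne' (initialIdeal_congr h)
  · intro m α hα ht
    obtain ⟨c, hc⟩ := key τ₂ (fun t ht => ht.2) m α hα ht
    have h1 : 0 ≤ v₂ ⬝ᵥ (vec m - vec α) := by
      rw [wdeg_sub]; exact sub_nonneg.2 (cell_subset_cone hv₂ m α hα)
    rw [hc, dotProduct_smul, smul_eq_mul] at h1
    have hc0 : 0 ≤ c := nonneg_of_mul_nonneg_left h1 hv₂y
    have h2 : ω ⬝ᵥ (vec m - vec α) = c * (ω ⬝ᵥ y) := by rw [hc, dotProduct_smul, smul_eq_mul]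
    rw [wdeg_sub] at h2
    have := mul_nonneg hc0 hωy.le
    linarith
  · intro m hm α hα ht
    obtain ⟨c, hc⟩ := key τ₁ (fun t ht => ht.1) m α hα ht
    have h1 : 0 < v₁ ⬝ᵥ (vec m - vec α) := by
      rw [wdeg_sub]; exact sub_pos.2 (initialFormIdeal_eq_iff.1 hv₁ m hm α hα)
    rw [hc, dotProduct_smul, smul_eq_mul] at h1
    have hc0 : c < 0 := by
      by_contra hcon
      have := mul_nonneg (not_lt.1 hcon) (neg_nonneg.2 hv₁y.le)
      linarith
    have h2 : ω ⬝ᵥ (vec m - vec α) = c * (ω ⬝ᵥ y) := by rw [hc, dotProduct_smul, smul_eq_mul]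
    rw [wdeg_sub] at h2
    have := mul_neg_of_neg_of_pos hc0 hωy
    linarith

lemma cone_of_edge_left {τ : TermOrder n} {I : Ideal (MvPolynomial (Fin n) k)}
    {C₁ C₂ : Set (Fin n → ℝ)} (h : DirectedEdge τ I C₁ C₂) :
    (∃ σ : TermOrder n, C₁ = cone σ I) ∧ ∃ σ : TermOrder n, C₂ = cone σ I :=
  ⟨exists_termOrder τ h.1 h.2.2.1, exists_termOrder τ h.2.1 h.2.2.2.1⟩

/-- For a weight representing `τ` on the finitely many pairs attached to the edges of a directed
path, the counting function increases along the path. -/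
lemma stdCount_lt_of_path {τ : TermOrder n} {I : Ideal (MvPolynomial (Fin n) k)}
    {C C' : Set (Fin n → ℝ)} (h : Relation.TransGen (DirectedEdge τ I) C C') :
    ∃ P : Finset ((Fin n →₀ ℕ) × (Fin n →₀ ℕ)), (∀ p ∈ P, τ.lt p.1 p.2) ∧
      ∀ ω : Fin n → ℝ, (∀ i, 0 < ω i) → (∀ p ∈ P, wdeg ω p.1 < wdeg ω p.2) →
      ∀ τ₁ τ₂ : TermOrder n, C = cone τ₁ I → C' = cone τ₂ I →
        stdCount τ₁ I ω < stdCount τ₂ I ω := by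
  classical
  -- The counting function only depends on the cone, so the pair can be chosen before the orders.
  have hstep : ∀ {C C' : Set (Fin n → ℝ)}, DirectedEdge τ I C C' →
      ∃ p q : Fin n →₀ ℕ, τ.lt p q ∧ ∀ ω : Fin n → ℝ, (∀ i, 0 < ω i) → wdeg ω p < wdeg ω q →
      ∀ τ₁ τ₂ : TermOrder n, C = cone τ₁ I → C' = cone τ₂ I →
        stdCount τ₁ I ω < stdCount τ₂ I ω := by
    intro C C' h
    have hcongr : ∀ (σ τ₁ : TermOrder n) (ω : Fin n → ℝ), cone σ I = cone τ₁ I →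
        stdCount σ I ω = stdCount τ₁ I ω := by
      intro σ τ₁ ω hc
      obtain ⟨v, -, hv, -⟩ := exists_cell_weight σ I ∅ (by simp)
      have := leadSet_congr (initialIdeal_eq_of_mem hv (hc ▸ cell_subset_cone hv))
      funext t
      rw [stdCount, stdCount, stdSet, stdSet, this]
    obtain ⟨⟨σ₁, rfl⟩, σ₂, rfl⟩ := cone_of_edge_left h
    obtain ⟨p, q, hpq, hlt⟩ := stdCount_lt_of_edge h
    refine ⟨p, q, hpq, fun ω hω hωpq τ₁ τ₂ h1 h2 => ?_⟩
    rw [← hcongr _ _ ω h1, ← hcongr _ _ ω h2]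
    exact hlt ω hω hωpq
  induction h with
  | single h =>
    obtain ⟨p, q, hpq, hlt⟩ := hstep h
    exact ⟨{(p, q)}, by simpa using hpq, fun ω hω hP => hlt ω hω (hP (p, q) (by simp))⟩
  | tail _ h ih =>
    obtain ⟨P, hP, hlt⟩ := ih
    obtain ⟨p, q, hpq, hlt'⟩ := hstep h
    obtain ⟨⟨σ, hσ⟩, -⟩ := cone_of_edge_left h
    refine ⟨insert (p, q) P, ?_, fun ω hω hPω τ₁ τ₂ h1 h2 => ?_⟩
    · intro r hr
      rcases Finset.mem_insert.1 hr with rfl | hr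
      · exact hpq
      · exact hP r hr
    · exact (hlt ω hω (fun r hr => hPω r (Finset.mem_insert_of_mem hr)) τ₁ σ h1 hσ).trans
        (hlt' ω hω (hPω _ (Finset.mem_insert_self _ _)) σ τ₂ hσ h2)

lemma acyclic (τ : TermOrder n) (I : Ideal (MvPolynomial (Fin n) k)) (C : Set (Fin n → ℝ)) :
    ¬ Relation.TransGen (DirectedEdge τ I) C C := by
  intro h
  obtain ⟨σ, hσ⟩ : ∃ σ : TermOrder n, C = cone σ I := by
    obtain ⟨D, hD, -⟩ := Relation.TransGen.head'_iff.1 h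
    exact (cone_of_edge_left hD).1
  obtain ⟨P, hP, hlt⟩ := stdCount_lt_of_path h
  obtain ⟨ω, hω, hPω⟩ := exists_weight τ P hP
  exact lt_irrefl _ (hlt ω hω hPω σ σ hσ hσ)

/-! ### The cone of the term order is a sink -/

lemma isSink (τ : TermOrder n) (I : Ideal (MvPolynomial (Fin n) k)) (C₂ : Set (Fin n → ℝ)) :
    ¬ DirectedEdge τ I (Cprec τ I) C₂ := by
  rintro ⟨-, -, -, -, -, -, p, q, hpq, he0, he1, -⟩
  obtain ⟨ω, -, hω, hωpq⟩ := exists_cell_weight τ I {(p, q)} (by simpa using hpq)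
  have h1 : wdeg ω p < wdeg ω q := hωpq (p, q) (by simp)
  have hmem : ω ∈ Cprec τ I := subset_closure hω
  simp only [sum_eq, wdeg_sub] at he0 he1
  by_cases h : ω ∈ C₂
  · linarith [he0 ω ⟨hmem, h⟩]
  · linarith [he1 ω ⟨hmem, h⟩]

/-! ### Walls of the cone of a term order -/

lemma mem_cone_of_gens {τ : TermOrder n} {I : Ideal (MvPolynomial (Fin n) k)}
    {A : Finset (Fin n →₀ ℕ)} (hAE : ∀ a ∈ A, a ∈ leadSet τ I)
    (hA : ∀ m ∈ leadSet τ I, ∃ a ∈ A, ∃ c, m = c + a) {u : Fin n → ℝ}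
    (h : ∀ a ∈ A, ∀ α ∈ (nf τ I a).support, 0 ≤ u ⬝ᵥ (vec a - vec α)) : u ∈ cone τ I := by
  let Q : AddSubmonoid (Fin n → ℝ) :=
    { carrier := {x | 0 ≤ u ⬝ᵥ x}
      zero_mem' := (dotProduct_zero u).ge
      add_mem' := by
        intro x y hx hy
        have hx : 0 ≤ u ⬝ᵥ x := hx
        have hy : 0 ≤ u ⬝ᵥ y := hy
        show 0 ≤ u ⬝ᵥ (x + y)
        rw [dotProduct_add]; exact add_nonneg hx hy }
  intro m α hα
  have h1 : 0 ≤ u ⬝ᵥ (vec m - vec α) := propagate hA hAE Q h m α hα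
  rw [wdeg_sub] at h1
  exact sub_nonneg.1 h1

/-- If, among finitely many generators, the inequalities tight at `u` have directions that are
multiples of `x₀`, then the same holds for all the inequalities defining the cone of `τ`. -/
lemma tight_smul {τ : TermOrder n} {I : Ideal (MvPolynomial (Fin n) k)}
    {A : Finset (Fin n →₀ ℕ)} (hAE : ∀ a ∈ A, a ∈ leadSet τ I)
    (hA : ∀ m ∈ leadSet τ I, ∃ a ∈ A, ∃ c, m = c + a) {u x₀ : Fin n → ℝ}
    (h : ∀ a ∈ A, ∀ α ∈ (nf τ I a).support, 0 ≤ u ⬝ᵥ (vec a - vec α))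
    (h' : ∀ a ∈ A, ∀ α ∈ (nf τ I a).support, u ⬝ᵥ (vec a - vec α) = 0 →
      ∃ c : ℝ, vec a - vec α = c • x₀) (m : Fin n →₀ ℕ) :
    ∀ α ∈ (nf τ I m).support, wdeg u α = wdeg u m → ∃ c : ℝ, vec m - vec α = c • x₀ := by
  let Q : AddSubmonoid (Fin n → ℝ) :=
    { carrier := {x | 0 ≤ u ⬝ᵥ x ∧ (u ⬝ᵥ x = 0 → ∃ c : ℝ, x = c • x₀)}
      zero_mem' := ⟨(dotProduct_zero u).ge, fun _ => ⟨0, (zero_smul _ _).symm⟩⟩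
      add_mem' := by
        rintro x y ⟨hx1, hx2⟩ ⟨hy1, hy2⟩
        refine ⟨by rw [dotProduct_add]; exact add_nonneg hx1 hy1, fun h0 => ?_⟩
        rw [dotProduct_add] at h0
        obtain ⟨c, hc⟩ := hx2 (by linarith)
        obtain ⟨d, hd⟩ := hy2 (by linarith)
        exact ⟨c + d, by rw [add_smul, ← hc, ← hd]⟩ }
  intro α hα ht
  have h1 : vec m - vec α ∈ Q :=
    propagate hA hAE Q (fun a ha α hα => ⟨h a ha α hα, h' a ha α hα⟩) m α hα
  exact h1.2 (by rw [wdeg_sub, ht, sub_self])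

section

variable {τ σ : TermOrder n} {I : Ideal (MvPolynomial (Fin n) k)} {u x₀ : Fin n → ℝ}

lemma initialFormIdeal_wall (hu : u ∈ cone τ I)
    (ht : ∀ m, ∀ α ∈ (nf τ I m).support, wdeg u α = wdeg u m → ∃ c : ℝ, vec m - vec α = c • x₀)
    {w : Fin n → ℝ} (hw : w ∈ cone τ I) (hwx : w ⬝ᵥ x₀ = 0) {ε : ℝ} (hε : 0 < ε) :
    initialFormIdeal (w + ε • u) I = initialFormIdeal u I := by
  refine initialFormIdeal_congr (add_mem_cone hw (smul_mem_cone hu hε.le)) hu fun m α hα => ?_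
  rw [wdeg_add_smul, wdeg_add_smul]
  have h1 := hw m α hα
  have h2 := hu m α hα
  constructor
  · intro h
    by_contra hne
    have := mul_lt_mul_of_pos_left (_root_.lt_of_le_of_ne h2 hne) hε
    linarith
  · intro h
    obtain ⟨c, hc⟩ := ht m α hα h
    have h3 : w ⬝ᵥ (vec m - vec α) = 0 := by rw [hc, dotProduct_smul, hwx, smul_zero]
    rw [wdeg_sub] at h3
    rw [h]; linarith

/-- If all inequalities of the cone of `τ` that are tight at `u` have direction `x₀`, then the
points of that cone orthogonal to `x₀` belong to every cone containing `u`. -/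
lemma wall_subset (hu : u ∈ cone τ I) (hu' : u ∈ cone σ I)
    (ht : ∀ m, ∀ α ∈ (nf τ I m).support, wdeg u α = wdeg u m → ∃ c : ℝ, vec m - vec α = c • x₀)
    {w : Fin n → ℝ} (hw : w ∈ cone τ I) (hwx : w ⬝ᵥ x₀ = 0) : w ∈ cone σ I := by
  have hlim : Filter.Tendsto (fun t : ℝ => w + t • u) (nhdsWithin 0 (Set.Ioi 0)) (nhds w) := by
    have : Continuous fun t : ℝ => w + t • u := by fun_prop
    simpa using (this.tendsto 0).mono_left nhdsWithin_le_nhds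
  refine (isClosed_cone σ I).mem_of_tendsto hlim ?_
  filter_upwards [self_mem_nhdsWithin] with t hpos
  exact mem_cone_of_eq hu' (initialFormIdeal_wall hu ht hw hwx hpos)

lemma exists_add_smul_mem (hu : u ∈ cone τ I)
    (ht : ∀ m, ∀ α ∈ (nf τ I m).support, wdeg u α = wdeg u m → ∃ c : ℝ, vec m - vec α = c • x₀)
    {h : Fin n → ℝ} (hx : h ⬝ᵥ x₀ = 0) : ∃ δ : ℝ, 0 < δ ∧ u + δ • h ∈ cone τ I := by
  obtain ⟨A, hAE, hA⟩ := exists_gens τ I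
  have hev : ∀ᶠ δ in nhdsWithin (0 : ℝ) (Set.Ioi 0), ∀ a ∈ A, ∀ α ∈ (nf τ I a).support,
      0 ≤ (u + δ • h) ⬝ᵥ (vec a - vec α) := by
    rw [Filter.eventually_all_finset]
    intro a _
    rw [Filter.eventually_all_finset]
    intro α hα
    simp only [add_dotProduct, smul_dotProduct, smul_eq_mul]
    have h1 : 0 ≤ u ⬝ᵥ (vec a - vec α) := by rw [wdeg_sub]; exact sub_nonneg.2 (hu a α hα)
    rcases h1.eq_or_lt with h0 | hlt
    · obtain ⟨c, hc⟩ := ht a α hα (by rw [wdeg_sub] at h0; linarith)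
      refine Filter.Eventually.of_forall fun δ => ?_
      rw [← h0, hc, dotProduct_smul, hx]; simp
    · refine nhdsWithin_le_nhds ?_
      have hc : Continuous fun δ : ℝ => u ⬝ᵥ (vec a - vec α) + δ * (h ⬝ᵥ (vec a - vec α)) := by
        fun_prop
      have hz : (0 : ℝ) < u ⬝ᵥ (vec a - vec α) + 0 * (h ⬝ᵥ (vec a - vec α)) := by
        rwa [zero_mul, add_zero]
      exact (continuousAt_const.eventually_lt hc.continuousAt hz).mono fun δ h => h.le
  obtain ⟨δ, h1, h2⟩ := (hev.and self_mem_nhdsWithin).exists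
  exact ⟨δ, h2, mem_cone_of_gens hAE hA h1⟩

/-- The inequalities of a neighbouring cone that are tight at the wall point `u` again have
direction `x₀`. -/
lemma tight_neighbour (hu : u ∈ cone τ I) (hu' : u ∈ cone σ I) (hx₀ : x₀ ≠ 0) (hux : u ⬝ᵥ x₀ = 0)
    (ht : ∀ m, ∀ α ∈ (nf τ I m).support, wdeg u α = wdeg u m → ∃ c : ℝ, vec m - vec α = c • x₀)
    (m : Fin n →₀ ℕ) :
    ∀ α ∈ (nf σ I m).support, wdeg u α = wdeg u m → ∃ c : ℝ, vec m - vec α = c • x₀ := by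
  intro α hα hum
  refine exists_smul_eq hx₀ fun h hh => ?_
  obtain ⟨δ, hδ, hmem⟩ := exists_add_smul_mem hu ht hh
  have e := initialFormIdeal_wall hu ht hmem
    (by rw [add_dotProduct, smul_dotProduct, hux, hh]; simp) one_pos
  have h1 := tight_of_eq hu' e hα hum
  simp only [wdeg_add_smul] at h1
  have h2 : δ * (wdeg h m - wdeg h α) = 0 := by rw [mul_sub]; linarith
  rw [wdeg_sub]
  exact (mul_eq_zero.1 h2).resolve_left hδ.ne'

end

/-! ### Every other cone has an outgoing edge -/

/-- Walking from `v` to a generic `ω`, the first of the hyperplanes orthogonal to vectors of `X`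
is met at a point `u` lying on no other such hyperplane. -/
lemma exists_first_wall {X : Finset (Fin n → ℝ)} {v ω : Fin n → ℝ} (hv : ∀ x ∈ X, 0 < v ⬝ᵥ x)
    (hgen : ∀ x ∈ X, ∀ x' ∈ X, (v ⬝ᵥ x) • x' - (v ⬝ᵥ x') • x ≠ 0 →
      ω ⬝ᵥ ((v ⬝ᵥ x) • x' - (v ⬝ᵥ x') • x) ≠ 0)
    (hneg : ∃ x ∈ X, ω ⬝ᵥ x < 0) :
    ∃ x₀ ∈ X, ω ⬝ᵥ x₀ < 0 ∧ ∃ s : ℝ, 0 < s ∧ s < 1 ∧ ((1 - s) • v + s • ω) ⬝ᵥ x₀ = 0 ∧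
      (∀ x ∈ X, 0 ≤ ((1 - s) • v + s • ω) ⬝ᵥ x) ∧
      ∀ x ∈ X, ((1 - s) • v + s • ω) ⬝ᵥ x = 0 → ∃ c : ℝ, x = c • x₀ := by
  classical
  have hdot : ∀ (s : ℝ) (x : Fin n → ℝ),
      ((1 - s) • v + s • ω) ⬝ᵥ x = (1 - s) * (v ⬝ᵥ x) + s * (ω ⬝ᵥ x) := fun s x => by
    rw [add_dotProduct, smul_dotProduct, smul_dotProduct, smul_eq_mul, smul_eq_mul]
  obtain ⟨x₀, hx₀, hmin⟩ := (X.filter fun x => ω ⬝ᵥ x < 0).exists_min_image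
    (fun x => v ⬝ᵥ x / (v ⬝ᵥ x - ω ⬝ᵥ x)) (by
      obtain ⟨x, hx, h⟩ := hneg
      exact ⟨x, Finset.mem_filter.2 ⟨hx, h⟩⟩)
  obtain ⟨hx₀X, hx₀neg⟩ := Finset.mem_filter.1 hx₀
  have hv₀ := hv x₀ hx₀X
  have hd₀ : 0 < v ⬝ᵥ x₀ - ω ⬝ᵥ x₀ := by linarith
  set s := v ⬝ᵥ x₀ / (v ⬝ᵥ x₀ - ω ⬝ᵥ x₀) with hs
  have hs0 : 0 < s := div_pos hv₀ hd₀
  have hs1 : s < 1 := by rw [hs, div_lt_one hd₀]; linarith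
  have hux : (1 - s) * (v ⬝ᵥ x₀) + s * (ω ⬝ᵥ x₀) = 0 := by
    have : s * (v ⬝ᵥ x₀ - ω ⬝ᵥ x₀) = v ⬝ᵥ x₀ := div_mul_cancel₀ _ hd₀.ne'
    linarith
  refine ⟨x₀, hx₀X, hx₀neg, s, hs0, hs1, by rw [hdot, hux], fun x hx => ?_, fun x hx h0 => ?_⟩
  · rw [hdot]
    have hvx := hv x hx
    rcases le_or_gt 0 (ω ⬝ᵥ x) with h | h
    · have h1 := mul_nonneg hs0.le h
      have h2 := mul_pos (sub_pos.2 hs1) hvx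
      linarith
    · have h1 := hmin x (Finset.mem_filter.2 ⟨hx, h⟩)
      rw [le_div_iff₀ (by linarith)] at h1
      linarith
  · rw [hdot] at h0
    have hvx := hv x hx
    have h1 : ω ⬝ᵥ ((v ⬝ᵥ x) • x₀ - (v ⬝ᵥ x₀) • x) = 0 := by
      rw [dotProduct_sub, dotProduct_smul, dotProduct_smul, smul_eq_mul, smul_eq_mul]
      have h2 : s * (v ⬝ᵥ x * (ω ⬝ᵥ x₀) - v ⬝ᵥ x₀ * (ω ⬝ᵥ x)) = 0 := by
        linear_combination (v ⬝ᵥ x) * hux - (v ⬝ᵥ x₀) * h0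
      exact (mul_eq_zero.1 h2).resolve_left hs0.ne'
    have h2 : (v ⬝ᵥ x) • x₀ - (v ⬝ᵥ x₀) • x = 0 := by
      by_contra hne
      exact hgen x hx x₀ hx₀X hne h1
    refine ⟨v ⬝ᵥ x / v ⬝ᵥ x₀, ?_⟩
    rw [div_eq_inv_mul, mul_smul, sub_eq_zero.1 h2, smul_smul, inv_mul_cancel₀ hv₀.ne', one_smul]

/-- A cone other than the cone of `τ` has an outgoing edge, through the first wall on the way to the
cone of `τ`. -/
lemma exists_edge (τ τ₁ : TermOrder n) (I : Ideal (MvPolynomial (Fin n) k))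
    (hne : cone τ₁ I ≠ cone τ I) : ∃ C₂, DirectedEdge τ I (cone τ₁ I) C₂ := by
  classical
  obtain ⟨A, hAE, hA⟩ := exists_gens τ₁ I
  obtain ⟨v, hvpos, hv, -⟩ := exists_cell_weight τ₁ I ∅ (by simp)
  have hv' := initialFormIdeal_eq_iff.1 hv
  -- The directions of the finitely many inequalities defining the cone of `τ₁`.
  let E : Finset ((Fin n →₀ ℕ) × (Fin n →₀ ℕ)) :=
    A.biUnion fun a => (nf τ₁ I a).support.image fun α => (α, a)
  have hE : ∀ p, p ∈ E ↔ p.2 ∈ A ∧ p.1 ∈ (nf τ₁ I p.2).support := by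
    rintro ⟨α, a⟩
    simp only [E, Finset.mem_biUnion, Finset.mem_image, Prod.mk.injEq]
    constructor
    · rintro ⟨a', ha', α', hα', rfl, rfl⟩; exact ⟨ha', hα'⟩
    · rintro ⟨h1, h2⟩; exact ⟨a, h1, α, h2, rfl, rfl⟩
  let X : Finset (Fin n → ℝ) := E.image fun p => vec p.2 - vec p.1
  have hX : ∀ a ∈ A, ∀ α ∈ (nf τ₁ I a).support, vec a - vec α ∈ X := fun a ha α hα =>
    Finset.mem_image.2 ⟨(α, a), (hE _).2 ⟨ha, hα⟩, rfl⟩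
  have hvX : ∀ x ∈ X, 0 < v ⬝ᵥ x := by
    intro x hx
    obtain ⟨p, hp, rfl⟩ := Finset.mem_image.1 hx
    obtain ⟨h1, h2⟩ := (hE p).1 hp
    rw [wdeg_sub]
    exact sub_pos.2 (hv' _ (hAE _ h1) _ h2)
  -- A generic positive weight `ω` representing `τ`, both for `I` and on the pairs of `E`.
  obtain ⟨ω, ⟨hωpos, hωcell, hωE⟩, hωgen⟩ : ∃ ω : Fin n → ℝ, ((∀ i, 0 < ω i) ∧
      initialFormIdeal ω I = τ.initialIdeal I ∧
      ∀ p ∈ E.filter (fun p => τ.lt p.1 p.2), wdeg ω p.1 < wdeg ω p.2) ∧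
      ∀ x ∈ X, ∀ x' ∈ X, (v ⬝ᵥ x) • x' - (v ⬝ᵥ x') • x ≠ 0 →
        ω ⬝ᵥ ((v ⬝ᵥ x) • x' - (v ⬝ᵥ x') • x) ≠ 0 := by
    have hopen : IsOpen ({ω : Fin n → ℝ | ∀ i, 0 < ω i} ∩
        ({ω | initialFormIdeal ω I = τ.initialIdeal I} ∩
        {ω | ∀ p ∈ E.filter (fun p => τ.lt p.1 p.2), wdeg ω p.1 < wdeg ω p.2})) := by
      refine IsOpen.inter ?_ ((isOpen_cell τ I).inter ?_)
      · rw [Set.ofPred_forall]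
        exact isOpen_iInter_of_finite fun i => isOpen_lt continuous_const (continuous_apply i)
      · have : {ω : Fin n → ℝ | ∀ p ∈ E.filter (fun p => τ.lt p.1 p.2), wdeg ω p.1 < wdeg ω p.2}
            = ⋂ p ∈ E.filter (fun p => τ.lt p.1 p.2), {ω | wdeg ω p.1 < wdeg ω p.2} := by
          ext; simp
        rw [this]
        exact isOpen_biInter_finset fun p _ => isOpen_lt (continuous_wdeg _) (continuous_wdeg _)
    obtain ⟨ω₀, h1, h2, h3⟩ := exists_cell_weight τ I (E.filter fun p => τ.lt p.1 p.2)
      fun p hp => (Finset.mem_filter.1 hp).2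
    obtain ⟨ω, hω, hgen⟩ := exists_generic hopen ⟨ω₀, h1, h2, h3⟩
      (((X ×ˢ X).image fun p => (v ⬝ᵥ p.1) • p.2 - (v ⬝ᵥ p.2) • p.1).filter (· ≠ 0))
      fun y hy => (Finset.mem_filter.1 hy).2
    exact ⟨ω, hω, fun x hx x' hx' h => hgen _ (Finset.mem_filter.2
      ⟨Finset.mem_image.2 ⟨(x, x'), Finset.mem_product.2 ⟨hx, hx'⟩, rfl⟩, h⟩)⟩
  have hneg : ∃ x ∈ X, ω ⬝ᵥ x < 0 := by
    by_contra hcon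
    push Not at hcon
    have := mem_cone_of_gens hAE hA fun a ha α hα => hcon _ (hX a ha α hα)
    exact hne (cone_congr (initialIdeal_eq_of_mem hωcell this)).symm
  obtain ⟨x₀, hx₀X, hωx₀, s, hs0, hs1, hux₀, hunn, hutight⟩ :=
    exists_first_wall hvX hωgen hneg
  have hvx₀ := hvX x₀ hx₀X
  have hx₀ne : x₀ ≠ 0 := by rintro rfl; simp at hvx₀
  set u := (1 - s) • v + s • ω with hu
  have hupos : ∀ i, 0 ≤ u i := fun i =>
    add_nonneg (mul_nonneg (sub_pos.2 hs1).le (hvpos i).le) (mul_nonneg hs0.le (hωpos i).le)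
  obtain ⟨⟨α₀, a₀⟩, hp₀, hp₀x⟩ := Finset.mem_image.1 hx₀X
  obtain ⟨ha₀, hα₀⟩ := (hE _).1 hp₀
  simp only at hp₀x ha₀ hα₀
  have hlt : τ.lt a₀ α₀ := by
    rw [← hp₀x, wdeg_sub] at hωx₀
    rcases τ.total a₀ α₀ (fun h => nf_std hα₀ (h ▸ hAE _ ha₀)) with h | h
    · exact h
    · have : wdeg ω α₀ < wdeg ω a₀ := hωE (α₀, a₀) (Finset.mem_filter.2 ⟨hp₀, h⟩)
      linarith
  have hu1 : u ∈ cone τ₁ I := mem_cone_of_gens hAE hA fun a ha α hα => hunn _ (hX a ha α hα)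
  have ht1 := tight_smul hAE hA (fun a ha α hα => hunn _ (hX a ha α hα))
    fun a ha α hα => hutight _ (hX a ha α hα)
  -- The cone on the other side of the wall: infinitesimally, continue from `u` towards `ω`.
  set τ₂ := refine (refine τ ω fun i => (hωpos i).le) u hupos with hτ₂
  have hu2 : u ∈ cone τ₂ I := mem_cone_refine _ I u hupos
  have ht2 := tight_neighbour hu1 hu2 hx₀ne hux₀ ht1
  have h12 : ∀ w ∈ cone τ₁ I, w ⬝ᵥ x₀ = 0 → w ∈ cone τ₂ I := fun w hw hwx =>
    wall_subset hu1 hu2 ht1 hw hwx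
  have h21 : ∀ w ∈ cone τ₂ I, w ⬝ᵥ x₀ = 0 → w ∈ cone τ₁ I := fun w hw hwx =>
    wall_subset hu2 hu1 ht2 hw hwx
  have hside1 : ∀ w ∈ cone τ₁ I, 0 ≤ w ⬝ᵥ x₀ := fun w hw => by
    rw [← hp₀x, wdeg_sub]; exact sub_nonneg.2 (hw a₀ α₀ hα₀)
  have hside2 : ∀ w ∈ cone τ₂ I, w ⬝ᵥ x₀ ≤ 0 := by
    obtain ⟨m, hm, α, hα, hmα⟩ : ∃ m ∈ leadSet τ₂ I, ∃ α ∈ (nf τ₂ I m).support,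
        wdeg u α = wdeg u m := by
      -- Otherwise `in_u(I)` would be a monomial ideal containing the `τ₁`-standard `x^α₀`.
      by_contra hcon
      push Not at hcon
      have hcell : initialFormIdeal u I = τ₂.initialIdeal I :=
        initialFormIdeal_eq_iff.2 fun m hm α hα => (hu2 m α hα).lt_of_ne (hcon m hm α hα)
      have hmem := sub_top_nf_mem hu1 a₀
      rw [hcell, mem_initialIdeal] at hmem
      have hα₀top : α₀ ∈ (top u (wdeg u a₀) (nf τ₁ I a₀)).support := by
        refine mem_support_top.2 ⟨?_, hα₀⟩
        rw [← hp₀x, wdeg_sub] at hux₀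
        linarith
      have hα₀2 := hmem α₀ (by
        rw [mem_support_iff, coeff_sub, coeff_monomial,
          if_neg fun h : a₀ = α₀ => nf_std hα₀ (h ▸ hAE _ ha₀), zero_sub, neg_ne_zero]
        exact mem_support_iff.1 hα₀top)
      rw [← monomial_mem_initialIdeal, ← hcell] at hα₀2
      have := eq_zero_of_std_initialForm hu1 hα₀2 fun β hβ => by
        rw [mem_support_monomial hβ]; exact nf_std hα₀
      simp at this
    obtain ⟨c, hc⟩ := ht2 m α hα hmα
    have hmne : α ≠ m := by rintro rfl; exact nf_std hα hm
    have hωle : wdeg ω α ≤ wdeg ω m := by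
      rcases nf_le hα with h | h | h
      · exact absurd h hmne
      · exact absurd hmα h.ne
      · rcases h.2 with h | h
        · exact h.le
        · exact h.1.le
    have h1 : ω ⬝ᵥ (vec m - vec α) = c * (ω ⬝ᵥ x₀) := by rw [hc, dotProduct_smul, smul_eq_mul]
    rw [wdeg_sub] at h1
    have hcneg : c < 0 := by
      by_contra hcon
      rcases (not_lt.1 hcon).eq_or_lt with h0 | h0
      · rw [← h0, zero_smul, sub_eq_zero] at hc
        exact hmne (vec_inj hc).symm
      · have := mul_neg_of_pos_of_neg h0 hωx₀
        linarith
    intro w hw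
    have h2 : w ⬝ᵥ (vec m - vec α) = c * (w ⬝ᵥ x₀) := by rw [hc, dotProduct_smul, smul_eq_mul]
    rw [wdeg_sub] at h2
    by_contra hcon
    have := mul_neg_of_neg_of_pos hcneg (not_le.1 hcon)
    linarith [hw m α hα]
  have h0 : ∀ w ∈ cone τ₁ I ∩ cone τ₂ I, w ⬝ᵥ x₀ = 0 := fun w hw =>
    le_antisymm (hside2 w hw.2) (hside1 w hw.1)
  have hfan1 := Cprec_mem_fan τ₁ I
  have hfan2 := Cprec_mem_fan τ₂ I
  rw [Cprec_eq_cone] at hfan1 hfan2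
  have hy : vec α₀ - vec a₀ = -x₀ := by rw [← hp₀x, neg_sub]
  refine ⟨cone τ₂ I, hfan1.1, hfan2.1, hfan1.2, hfan2.2, ?_, ?_, a₀, α₀, hlt, ?_, ?_, ?_⟩
  · intro h
    have := hside2 v (h ▸ cell_subset_cone hv)
    linarith
  · suffices hspan : vectorSpan ℝ (cone τ₁ I ∩ cone τ₂ I) = LinearMap.ker (dotL x₀) by
      rw [hspan, finrank_ker_dotL hx₀ne]
    apply le_antisymm
    · refine Submodule.span_le.2 ?_
      rintro _ ⟨a, ha, b, hb, rfl⟩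
      exact sub_mem (show a ∈ LinearMap.ker (dotL x₀) from h0 a ha) (h0 b hb)
    · intro h hh
      have hh : h ⬝ᵥ x₀ = 0 := hh
      obtain ⟨δ, hδ, hmem⟩ := exists_add_smul_mem hu1 ht1 hh
      have hmem2 := h12 _ hmem (by rw [add_dotProduct, smul_dotProduct, hux₀, hh]; simp)
      have := vsub_mem_vectorSpan ℝ (s := cone τ₁ I ∩ cone τ₂ I) ⟨hmem, hmem2⟩ ⟨hu1, hu2⟩
      rw [vsub_eq_sub, add_sub_cancel_left] at this
      exact (Submodule.smul_mem_iff _ hδ.ne').1 this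
  · intro w hw
    rw [sum_eq, hy, dotProduct_neg, h0 w hw, neg_zero]
  · intro w hw
    rw [sum_eq, hy, dotProduct_neg, neg_lt_zero]
    exact (hside1 w hw.1).lt_of_ne fun h => hw.2 (h12 w hw.1 h.symm)
  · intro w hw
    rw [sum_eq, hy, dotProduct_neg, neg_pos]
    exact (hside2 w hw.1).lt_of_ne fun h => hw.2 (h21 w hw.1 h)

lemma unique_sink (τ : TermOrder n) (I : Ideal (MvPolynomial (Fin n) k)) (C₁ : Set (Fin n → ℝ))
    (hC : C₁ ∈ GroebnerFan I) (hfull : (interior C₁).Nonempty)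
    (hsink : ∀ C₂, ¬ DirectedEdge τ I C₁ C₂) : C₁ = Cprec τ I := by
  obtain ⟨τ₁, rfl⟩ := exists_termOrder τ hC hfull
  rw [Cprec_eq_cone]
  by_contra hne
  obtain ⟨C₂, h⟩ := exists_edge τ τ₁ I hne
  exact hsink C₂ h

end GFan

/-- The orientation of the graph of the Gröbner fan of `I` induced by a term
order `τ` has no directed cycles and has a unique sink, namely `C_≺(I)`. -/
theorem groebnerFan_reverse_search_property (τ : TermOrder n)
    (I : Ideal (MvPolynomial (Fin n) k)) :
    (∀ C : Set (Fin n → ℝ), ¬ Relation.TransGen (DirectedEdge τ I) C C) ∧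
    Cprec τ I ∈ GroebnerFan I ∧ (interior (Cprec τ I)).Nonempty ∧
    (∀ C₂ : Set (Fin n → ℝ), ¬ DirectedEdge τ I (Cprec τ I) C₂) ∧
    (∀ C₁ : Set (Fin n → ℝ), C₁ ∈ GroebnerFan I → (interior C₁).Nonempty →
      (∀ C₂, ¬ DirectedEdge τ I C₁ C₂) → C₁ = Cprec τ I) :=
  ⟨GFan.acyclic τ I, (GFan.Cprec_mem_fan τ I).1, (GFan.Cprec_mem_fan τ I).2, GFan.isSink τ I,
    GFan.unique_sink τ I⟩
end
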